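/- Suppose α > max(d/2, 1) (so that 𝔼[z(0)] < ∞). Then for every R > 0, ℙ-almost surely, sup over x ∈ ℤ^{1+d} with |x| ≤ R t^{1/2} of |P^ω₀(X_t = x) / P̄₀(X_t = x) − 1| tends to 0 as t → ∞, where P̄₀(X_t = x) := P₀((S¹_{𝔼[z(0)]·t}, S²_t) = x) is the transition probability of the walk in the averaged conductance 𝔼[ω]. -/

import Mathlib

open MeasureTheory ProbabilityTheory Filter Set

noncomputable section

/-- `n`-step transition probabilities of the discrete-time simple random walk on `ℤ^m`. -/
def srwKernel (m : ℕ) : ℕ → (Fin m → ℤ) → (Fin m → ℤ) → ℝ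
  | 0, x, y => if x = y then 1 else 0
  | n + 1, x, y =>
      (∑ i : Fin m, (srwKernel m n (Function.update x i (x i + 1)) y
        + srwKernel m n (Function.update x i (x i - 1)) y)) / (2 * m)

/-- Transition kernel of the continuous-time simple random walk on `ℤ^m` which jumps to
each of its `2m` nearest neighbours at rate `1` (total jump rate `2m`). -/
def heatKernel (m : ℕ) (t : ℝ) (x y : Fin m → ℤ) : ℝ :=
  ∑' n : ℕ, Real.exp (-(2 * m) * t) * ((2 * m) * t) ^ n / n.factorial * srwKernel m n x y

/-- `(P, S)` is (a realization of) the continuous-time simple random walk on `ℤ^m`: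
under `P x` the process `S` starts at `x`, has right-continuous (piecewise constant)
paths, and its finite-dimensional distributions are given by the heat kernel. -/
structure IsCTSRW (m : ℕ) {Ω : Type*} [MeasurableSpace Ω]
    (P : (Fin m → ℤ) → Measure Ω) (S : ℝ → Ω → (Fin m → ℤ)) : Prop where
  prob : ∀ x, IsProbabilityMeasure (P x)
  meas : Measurable fun p : ℝ × Ω => S p.1 p.2
  start : ∀ x, ∀ᵐ ω ∂ P x, S 0 ω = x
  rightCont : ∀ x, ∀ᵐ ω ∂ P x, ∀ t : ℝ, 0 ≤ t →
    ∃ ε > (0 : ℝ), ∀ u, t ≤ u → u < t + ε → S u ω = S t ω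
  fdd : ∀ x (n : ℕ) (t : Fin (n + 1) → ℝ), 0 ≤ t 0 →
    (∀ i : Fin n, t i.castSucc ≤ t i.succ) →
    ∀ y : Fin (n + 1) → (Fin m → ℤ),
      (P x {ω | ∀ i, S (t i) ω = y i}).toReal
        = heatKernel m (t 0) x (y 0)
          * ∏ i : Fin n, heatKernel m (t i.succ - t i.castSucc) (y i.castSucc) (y i.succ)

/-- `z` is an i.i.d. nonnegative random scenery on `ℤ^d` whose common upper tail decays
like `r^{-α+o(1)}`. -/
structure IsScenery (d : ℕ) (α : ℝ) {Ω : Type*} [MeasurableSpace Ω]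
    (μ : Measure Ω) (z : (Fin d → ℤ) → Ω → ℝ) : Prop where
  prob : IsProbabilityMeasure μ
  meas : ∀ x, Measurable (z x)
  nonneg : ∀ x ω, 0 ≤ z x ω
  indep : iIndepFun z μ
  ident : ∀ x, IdentDistrib (z x) (z 0) μ μ
  tail : Tendsto (fun r : ℝ => Real.log (μ {ω | r < z 0 ω}).toReal / Real.log r)
    atTop (nhds (-α))

/-- The random walk in random scenery `A(t) = ∫₀ᵗ z(S_u) du`. -/
def rwrs {Ωz Ωw : Type*} (d : ℕ) (z : (Fin d → ℤ) → Ωz → ℝ)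
    (S : ℝ → Ωw → (Fin d → ℤ)) (t : ℝ) (ζ : Ωz) (ω : Ωw) : ℝ :=
  ∫ u in Set.Ioc (0 : ℝ) t, z (S u ω) ζ

end
open MeasureTheory ProbabilityTheory Filter Set

noncomputable section

/-- The clock process `A²(t) = ∫₀ᵗ z(S²_u) du`, where `S²` is the second (ℤ^d-valued)
component of the walk on `ℤ^{1+d}`. -/
def clock (d : ℕ) {Ωz Ωw : Type*} (z : (Fin d → ℤ) → Ωz → ℝ)
    (S : ℝ → Ωw → (Fin (d + 1) → ℤ)) (t : ℝ) (ζ : Ωz) (ω : Ωw) : ℝ :=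
  ∫ u in Set.Ioc (0 : ℝ) t, z (fun i => S u ω i.succ) ζ

/-- The variable-speed random walk `X_t = (S¹_{A²(t)}, S²_t)` in the layered conductance
field `ω(x, x±e₁) = z(x₂)`, `ω(x, x±e_i) = 1` for `i ≥ 2` (coordinate `0` of the walk on
`ℤ^{1+d}` is the ℤ-coordinate, coordinates `1,…,d` form the ℤ^d-coordinate). -/
def layeredWalk (d : ℕ) {Ωz Ωw : Type*} (z : (Fin d → ℤ) → Ωz → ℝ)
    (S : ℝ → Ωw → (Fin (d + 1) → ℤ)) (t : ℝ) (ζ : Ωz) (ω : Ωw) : ℤ × (Fin d → ℤ) :=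
  (S (clock d z S t ζ ω) ω 0, fun i => S t ω i.succ)

/-- Euclidean norm of a point of `ℤ^{1+d} = ℤ × ℤ^d`. -/
def euclNormProd (d : ℕ) (x : ℤ × (Fin d → ℤ)) : ℝ :=
  Real.sqrt ((x.1 : ℝ) ^ 2 + ∑ i, (x.2 i : ℝ) ^ 2)

end

/-!
Write `A t` for the clock and `c = 𝔼[z(0)]`. Fourier inversion shows that the walk kernel on `ℤ^m`
is a product of one-dimensional kernels `q_t(k)`, so the two components of the walk are independent
and `P₀^ω(X_t = x) = E[q_{A t}(x₁); S²_t = x₂]`, to be compared with `q_{c t}(x₁) P₀(S²_t = x₂)`.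
Since `s ↦ q_s` has Lipschitz constant of order `s^{-3/2}` while `q_{c t}(x₁)` is of order
`t^{-1/2}`, it is enough that `E[|A t - c t|; S²_t = x₂] = o(t) P₀(S²_t = x₂)`, and
`|A t - c t| = (A t - c t) + 2 (c t - A t)⁺`. The mean of `A t` on the bridge is a weighted sum of
the scenery; its weights are small because a bridge spends little time at each site, so a Chernoff
bound for the truncated scenery and Borel–Cantelli give the upper bound `(c + δ) t P₀(S²_t = x₂)`.
The truncation is harmless when `α > d/2`, because the bridge sees only about `t^{d/2}` sites.
Lower deviations `A t ≤ (c - δ) t` have probability smaller than every power of `t`, by a Laplace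
transform estimate along skeletons `v + s ℕ` whose step `s` is long enough for the scenery to
average out between consecutive times.
-/

open scoped ENNReal NNReal Topology

/-! ### Fourier representation of the walk kernels -/

/-- Normalized Lebesgue measure on the circle, encoded as the interval `(-π, π]`. -/
noncomputable def angleMeasure : Measure ℝ :=
  ENNReal.ofReal (2 * Real.pi)⁻¹ • volume.restrict (Ioc (-Real.pi) Real.pi)

lemma integral_angleMeasure (f : ℝ → ℝ) :
    ∫ θ, f θ ∂angleMeasure = (2 * Real.pi)⁻¹ * ∫ θ in (-Real.pi)..Real.pi, f θ := by
  rw [angleMeasure, integral_smul_measure, ENNReal.toReal_ofReal (by positivity),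
    intervalIntegral.integral_of_le (by linarith [Real.pi_pos]), smul_eq_mul]

instance isProbabilityMeasure_angleMeasure : IsProbabilityMeasure angleMeasure where
  measure_univ := by
    have h : (0 : ℝ) < 2 * Real.pi := by positivity
    simp only [angleMeasure, Measure.smul_apply, Measure.restrict_apply MeasurableSet.univ,
      univ_inter, Real.volume_Ioc, smul_eq_mul]
    rw [← ENNReal.ofReal_mul (by positivity), show Real.pi - -Real.pi = 2 * Real.pi by ring,
      inv_mul_cancel₀ h.ne', ENNReal.ofReal_one]

lemma integral_cos_int_mul_angleMeasure (k : ℤ) :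
    ∫ θ, Real.cos (k * θ) ∂angleMeasure = if k = 0 then 1 else 0 := by
  split_ifs with h
  · simp [h]
  · rw [integral_angleMeasure,
      intervalIntegral.integral_comp_mul_left (fun x => Real.cos x) (Int.cast_ne_zero.2 h),
      integral_cos]
    simp [Real.sin_int_mul_pi]

/-- The characteristic function `θ ↦ 𝔼[exp(iθ Sₜ)]` of the continuous-time simple random walk on
`ℤ` jumping to each neighbour at rate `1`. -/
noncomputable def lineSymbol (t θ : ℝ) : ℝ := Real.exp (-(2 * t * (1 - Real.cos θ)))

lemma lineSymbol_pos (t θ : ℝ) : 0 < lineSymbol t θ := Real.exp_pos _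

lemma lineSymbol_le_one {t : ℝ} (ht : 0 ≤ t) (θ : ℝ) : lineSymbol t θ ≤ 1 :=
  Real.exp_le_one_iff.2 <| neg_nonpos.2 <|
    mul_nonneg (by positivity) (by linarith [Real.cos_le_one θ])

lemma lineSymbol_add (s t θ : ℝ) : lineSymbol (s + t) θ = lineSymbol s θ * lineSymbol t θ := by
  rw [lineSymbol, lineSymbol, lineSymbol, ← Real.exp_add]
  ring_nf

@[fun_prop]
lemma continuous_lineSymbol (t : ℝ) : Continuous (lineSymbol t) := by
  unfold lineSymbol
  fun_prop

/-- The transition probability `P₀(Sₜ = k)` of the continuous-time simple random walk on `ℤ`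
(jump rate `1` to each neighbour), given by its Fourier inversion formula. -/
noncomputable def lineKernel (t : ℝ) (k : ℤ) : ℝ :=
  ∫ θ, lineSymbol t θ * Real.cos (k * θ) ∂angleMeasure

/-- The transition probability `P₀(Sₜ = x)` of the continuous-time simple random walk on `ℤ^m`,
whose coordinates are independent walks on `ℤ`. -/
noncomputable def latticeKernel {m : ℕ} (t : ℝ) (x : Fin m → ℤ) : ℝ := ∏ i, lineKernel t (x i)

/-- The uniform probability measure on the `m`-dimensional torus. -/
noncomputable def torusMeasure (m : ℕ) : Measure (Fin m → ℝ) := Measure.pi fun _ => angleMeasure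

instance isProbabilityMeasure_torusMeasure (m : ℕ) : IsProbabilityMeasure (torusMeasure m) := by
  unfold torusMeasure
  infer_instance

/-- The characteristic function of one step of the simple random walk on `ℤ^m`. -/
noncomputable def meanCos {m : ℕ} (θ : Fin m → ℝ) : ℝ := (∑ i, Real.cos (θ i)) / m

@[fun_prop]
lemma continuous_meanCos (m : ℕ) : Continuous (meanCos (m := m)) := by
  unfold meanCos
  fun_prop

lemma sum_cos_eq_mul_meanCos {m : ℕ} [NeZero m] (θ : Fin m → ℝ) :
    ∑ i, Real.cos (θ i) = m * meanCos θ := by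
  rw [meanCos, mul_div_cancel₀ _ (NeZero.ne _)]

lemma abs_meanCos_le_one {m : ℕ} [NeZero m] (θ : Fin m → ℝ) : |meanCos θ| ≤ 1 := by
  have hm : (0 : ℝ) < m := Nat.cast_pos.2 (NeZero.pos m)
  rw [meanCos, abs_div, abs_of_pos hm, div_le_one hm]
  calc |∑ i, Real.cos (θ i)| ≤ ∑ i, |Real.cos (θ i)| := Finset.abs_sum_le_sum_abs _ _
    _ ≤ ∑ _i : Fin m, (1 : ℝ) := Finset.sum_le_sum fun i _ => Real.abs_cos_le_one _
    _ = m := by simp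

lemma abs_prod_cos_le_one {m : ℕ} (φ : Fin m → ℝ) : |∏ i, Real.cos (φ i)| ≤ 1 := by
  rw [Finset.abs_prod]
  exact Finset.prod_le_one (fun _ _ => abs_nonneg _) fun i _ => Real.abs_cos_le_one _

lemma abs_meanCos_pow_mul_prod_cos_le_one {m : ℕ} [NeZero m] (n : ℕ) (θ φ : Fin m → ℝ) :
    |meanCos θ ^ n * ∏ i, Real.cos (φ i)| ≤ 1 := by
  rw [abs_mul, abs_pow]
  exact mul_le_one₀ (pow_le_one₀ (abs_nonneg _) (abs_meanCos_le_one θ)) (abs_nonneg _)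
    (abs_prod_cos_le_one φ)

lemma integrable_meanCos_pow_mul_prod_cos {m : ℕ} [NeZero m] (n : ℕ) (a : Fin m → ℝ) :
    Integrable (fun θ => meanCos θ ^ n * ∏ i, Real.cos (a i * θ i)) (torusMeasure m) :=
  .of_bound (by fun_prop) 1 <| .of_forall fun θ =>
    abs_meanCos_pow_mul_prod_cos_le_one n θ fun i => a i * θ i

lemma prod_cos_update_add_prod_cos_update {m : ℕ} (θ : Fin m → ℝ) (y x : Fin m → ℤ) (i : Fin m) :
    (∏ j, Real.cos (((y j - Function.update x i (x i + 1) j : ℤ) : ℝ) * θ j))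
      + (∏ j, Real.cos (((y j - Function.update x i (x i - 1) j : ℤ) : ℝ) * θ j))
      = 2 * Real.cos (θ i) * ∏ j, Real.cos (((y j - x j : ℤ) : ℝ) * θ j) := by
  have prod_update (v : ℤ) :
      ∏ j, Real.cos (((y j - Function.update x i v j : ℤ) : ℝ) * θ j)
        = Real.cos (((y i - v : ℤ) : ℝ) * θ i) *
          ∏ j ∈ Finset.univ.erase i, Real.cos (((y j - x j : ℤ) : ℝ) * θ j) := by
    rw [← Finset.mul_prod_erase _ _ (Finset.mem_univ i), Function.update_self]
    congr 1
    refine Finset.prod_congr rfl fun j hj => ?_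
    rw [Function.update_of_ne (Finset.ne_of_mem_erase hj)]
  have h_up : ((y i - (x i + 1) : ℤ) : ℝ) * θ i = ((y i - x i : ℤ) : ℝ) * θ i - θ i := by
    push_cast; ring
  have h_down : ((y i - (x i - 1) : ℤ) : ℝ) * θ i = ((y i - x i : ℤ) : ℝ) * θ i + θ i := by
    push_cast; ring
  rw [prod_update, prod_update, ← Finset.mul_prod_erase _ _ (Finset.mem_univ i), ← add_mul,
    ← mul_assoc, h_up, h_down, Real.cos_sub, Real.cos_add]
  ring

lemma srwKernel_eq_integral {m : ℕ} [NeZero m] (n : ℕ) (x y : Fin m → ℤ) :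
    srwKernel m n x y
      = ∫ θ, meanCos θ ^ n * ∏ i, Real.cos (((y i - x i : ℤ) : ℝ) * θ i) ∂torusMeasure m := by
  induction n generalizing x with
  | zero =>
    simp only [srwKernel, pow_zero, one_mul, torusMeasure]
    rw [integral_fintype_prod_eq_prod fun (i : Fin m) (θ : ℝ) =>
      Real.cos (((y i - x i : ℤ) : ℝ) * θ)]
    simp only [integral_cos_int_mul_angleMeasure, sub_eq_zero, Finset.prod_ite_zero,
      Finset.mem_univ, true_implies, Finset.prod_const_one]
    simp only [funext_iff, eq_comm]
  | succ n ih =>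
    have hm : (m : ℝ) ≠ 0 := NeZero.ne _
    have h_pair (i : Fin m) :
        srwKernel m n (Function.update x i (x i + 1)) y
          + srwKernel m n (Function.update x i (x i - 1)) y
          = ∫ θ, meanCos θ ^ n *
              (2 * Real.cos (θ i) * ∏ j, Real.cos (((y j - x j : ℤ) : ℝ) * θ j))
              ∂torusMeasure m := by
      rw [ih, ih, ← integral_add (integrable_meanCos_pow_mul_prod_cos n _)
        (integrable_meanCos_pow_mul_prod_cos n _)]
      simp only [← mul_add, prod_cos_update_add_prod_cos_update]
    have h_int (i : Fin m) : Integrable (fun θ : Fin m → ℝ => meanCos θ ^ n *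
        (2 * Real.cos (θ i) * ∏ j, Real.cos (((y j - x j : ℤ) : ℝ) * θ j))) (torusMeasure m) := by
      refine ((integrable_meanCos_pow_mul_prod_cos n fun j => ((y j - x j : ℤ) : ℝ)).bdd_mul
        (f := fun θ => 2 * Real.cos (θ i)) (c := 2)
        (by fun_prop : Continuous _).aestronglyMeasurable (.of_forall fun θ => ?_)).congr
        (.of_forall fun θ => by ring)
      rw [norm_mul, Real.norm_two]
      exact mul_le_of_le_one_right zero_le_two (Real.abs_cos_le_one _)
    simp only [srwKernel, h_pair]
    rw [← integral_finsetSum _ fun i _ => h_int i, ← integral_div]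
    congr 1 with θ
    rw [← Finset.mul_sum, ← Finset.sum_mul, ← Finset.mul_sum, sum_cos_eq_mul_meanCos, pow_succ]
    field_simp

lemma srwKernel_nonneg (m n : ℕ) (x y : Fin m → ℤ) : 0 ≤ srwKernel m n x y := by
  induction n generalizing x with
  | zero => simp only [srwKernel]; split_ifs <;> norm_num
  | succ n ih =>
    exact div_nonneg (Finset.sum_nonneg fun i _ => add_nonneg (ih _) (ih _)) (by positivity)

/-- The mass at `n` of the Poisson law with mean `a`. -/
noncomputable def poissonWeight (a : ℝ) (n : ℕ) : ℝ := Real.exp (-a) * a ^ n / n.factorial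

lemma poissonWeight_nonneg {a : ℝ} (ha : 0 ≤ a) (n : ℕ) : 0 ≤ poissonWeight a n := by
  unfold poissonWeight
  positivity

lemma hasSum_poissonWeight_mul_pow (a ρ : ℝ) :
    HasSum (fun n => poissonWeight a n * ρ ^ n) (Real.exp (a * (ρ - 1))) := by
  have h := (NormedSpace.expSeries_div_hasSum_exp (𝔸 := ℝ) (a * ρ)).mul_left (Real.exp (-a))
  rw [← Real.exp_eq_exp_ℝ, ← Real.exp_add, neg_add_eq_sub, ← mul_sub_one] at h
  refine h.congr_fun fun n => ?_
  rw [poissonWeight, mul_pow]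
  ring

lemma summable_abs_poissonWeight (a : ℝ) : Summable fun n => |poissonWeight a n| := by
  simpa using (hasSum_poissonWeight_mul_pow a 1).summable.abs

lemma heatKernel_eq_tsum_poissonWeight (m : ℕ) (t : ℝ) (x y : Fin m → ℤ) :
    heatKernel m t x y = ∑' n, poissonWeight (2 * m * t) n * srwKernel m n x y := by
  simp only [heatKernel, poissonWeight, neg_mul]

lemma exp_mul_meanCos_sub_one {m : ℕ} [NeZero m] (t : ℝ) (θ : Fin m → ℝ) :
    Real.exp (2 * m * t * (meanCos θ - 1)) = ∏ i, lineSymbol t (θ i) := by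
  have h : ∑ i, -(2 * t * (1 - Real.cos (θ i))) = 2 * m * t * (meanCos θ - 1) := by
    simp only [Finset.sum_neg_distrib, ← Finset.mul_sum, Finset.sum_sub_distrib,
      Finset.sum_const, Finset.card_univ, Fintype.card_fin, nsmul_eq_mul, sum_cos_eq_mul_meanCos]
    ring
  simp only [lineSymbol, ← Real.exp_sum, h]

lemma latticeKernel_eq_integral {m : ℕ} (t : ℝ) (x : Fin m → ℤ) :
    latticeKernel t x
      = ∫ θ, (∏ i, lineSymbol t (θ i)) * ∏ i, Real.cos (x i * θ i) ∂torusMeasure m := by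
  simp only [latticeKernel, lineKernel, torusMeasure, ← Finset.prod_mul_distrib]
  exact (integral_fintype_prod_eq_prod fun (i : Fin m) (θ : ℝ) =>
    lineSymbol t θ * Real.cos (x i * θ)).symm

lemma hasSum_poissonWeight_mul_srwKernel {m : ℕ} [NeZero m] (t : ℝ) (x y : Fin m → ℤ) :
    HasSum (fun n => poissonWeight (2 * m * t) n * srwKernel m n x y)
      (latticeKernel t (y - x)) := by
  set a : ℝ := 2 * m * t with ha
  set e : (Fin m → ℝ) → ℝ := fun θ => ∏ i, Real.cos (((y i - x i : ℤ) : ℝ) * θ i)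
  have h_norm (n : ℕ) (θ : Fin m → ℝ) :
      ‖poissonWeight a n * (meanCos θ ^ n * e θ)‖ ≤ |poissonWeight a n| := by
    rw [Real.norm_eq_abs, abs_mul]
    exact mul_le_of_le_one_right (abs_nonneg _) (abs_meanCos_pow_mul_prod_cos_le_one n θ _)
  have h_int (n : ℕ) :
      Integrable (fun θ => poissonWeight a n * (meanCos θ ^ n * e θ)) (torusMeasure m) :=
    (integrable_meanCos_pow_mul_prod_cos n _).const_mul _
  have h_summable :
      Summable fun n => ∫ θ, ‖poissonWeight a n * (meanCos θ ^ n * e θ)‖ ∂torusMeasure m :=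
    (summable_abs_poissonWeight a).of_nonneg_of_le
      (fun n => integral_nonneg fun _ => norm_nonneg _) fun n =>
      (integral_mono (h_int n).norm (integrable_const _) (h_norm n)).trans_eq (by simp)
  have h := hasSum_integral_of_summable_integral_norm h_int h_summable
  have h_tsum (θ : Fin m → ℝ) :
      ∑' n, poissonWeight a n * (meanCos θ ^ n * e θ) = (∏ i, lineSymbol t (θ i)) * e θ := by
    simp only [← mul_assoc, tsum_mul_right, (hasSum_poissonWeight_mul_pow _ _).tsum_eq, ha,
      exp_mul_meanCos_sub_one]
  simp only [h_tsum, integral_const_mul] at h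
  simpa only [srwKernel_eq_integral, latticeKernel_eq_integral, Pi.sub_apply] using h

theorem heatKernel_eq_latticeKernel {m : ℕ} [NeZero m] (t : ℝ) (x y : Fin m → ℤ) :
    heatKernel m t x y = latticeKernel t (y - x) := by
  rw [heatKernel_eq_tsum_poissonWeight, (hasSum_poissonWeight_mul_srwKernel t x y).tsum_eq]

/-! ### Eigenfunctions of the walk -/

/-- `G` is an eigenfunction, with eigenvalue `ρ`, of the one-step transition operator of the
simple random walk on `ℤ^m`. -/
def IsWalkEigenfunction {m : ℕ} (ρ : ℝ) (G : (Fin m → ℤ) → ℝ) : Prop :=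
  ∀ x, ∑ i, (G (Function.update x i (x i + 1)) + G (Function.update x i (x i - 1)))
    = 2 * m * ρ * G x

lemma isWalkEigenfunction_one (m : ℕ) : IsWalkEigenfunction (m := m) 1 fun _ => 1 := by
  intro x
  simp only [Finset.sum_const, Finset.card_univ, Fintype.card_fin, nsmul_eq_mul]
  ring

lemma isWalkEigenfunction_prod_cos {m : ℕ} [NeZero m] (k : Fin m → ℤ) (θ : Fin m → ℝ) :
    IsWalkEigenfunction (meanCos θ) fun y => ∏ i, Real.cos (((k i - y i : ℤ) : ℝ) * θ i) := by
  intro x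
  simp only [prod_cos_update_add_prod_cos_update]
  rw [← Finset.sum_mul, ← Finset.mul_sum, sum_cos_eq_mul_meanCos]
  ring

lemma isWalkEigenfunction_cosh {m : ℕ} [NeZero m] (j : Fin m) (θ : ℝ) :
    IsWalkEigenfunction ((m - 1 + Real.cosh θ) / m) fun y => Real.cosh (y j * θ) := by
  intro x
  have hm : (m : ℝ) ≠ 0 := NeZero.ne _
  have h_pair (i : Fin m) : Real.cosh ((Function.update x i (x i + 1) j : ℤ) * θ)
      + Real.cosh ((Function.update x i (x i - 1) j : ℤ) * θ)
      = 2 * Real.cosh (x j * θ)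
        + if i = j then (2 * Real.cosh θ - 2) * Real.cosh (x j * θ) else 0 := by
    split_ifs with h
    · subst h
      simp only [Function.update_self]
      push_cast
      rw [add_mul, sub_mul, one_mul, Real.cosh_add, Real.cosh_sub]
      ring
    · rw [Function.update_of_ne (Ne.symm h), Function.update_of_ne (Ne.symm h)]
      ring
  simp only [h_pair, Finset.sum_add_distrib, Finset.sum_const, Finset.card_univ,
    Fintype.card_fin, nsmul_eq_mul, Finset.sum_ite_eq', Finset.mem_univ, if_true]
  field_simp
  ring

lemma IsWalkEigenfunction.hasSum_srwKernel_mul {m : ℕ} [NeZero m] {ρ : ℝ}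
    {G : (Fin m → ℤ) → ℝ} (hG : IsWalkEigenfunction ρ G) (n : ℕ) (x : Fin m → ℤ) :
    HasSum (fun y => srwKernel m n x y * G y) (ρ ^ n * G x) := by
  induction n generalizing x with
  | zero =>
    rw [pow_zero, one_mul]
    refine (hasSum_ite_eq x (G x)).congr_fun fun y => ?_
    rcases eq_or_ne x y with rfl | h
    · simp [srwKernel]
    · simp [srwKernel, h, h.symm]
  | succ n ih =>
    have hm : (m : ℝ) ≠ 0 := NeZero.ne _
    have h := (hasSum_sum (s := Finset.univ) fun i _ =>
      (ih (Function.update x i (x i + 1))).add (ih (Function.update x i (x i - 1)))).div_const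
        (2 * (m : ℝ))
    simp only [← mul_add, ← Finset.mul_sum, hG x] at h
    have h_eig : ρ ^ n * (2 * m * ρ * G x) / (2 * m) = ρ ^ (n + 1) * G x := by
      field_simp
      ring
    rw [h_eig] at h
    refine h.congr_fun fun y => ?_
    simp only [srwKernel, div_mul_eq_mul_div, Finset.sum_mul, add_mul]

lemma latticeKernel_nonneg {m : ℕ} [NeZero m] {t : ℝ} (ht : 0 ≤ t) (x : Fin m → ℤ) :
    0 ≤ latticeKernel t x := by
  have h := hasSum_poissonWeight_mul_srwKernel t 0 x
  rw [sub_zero] at h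
  exact h.nonneg fun n =>
    mul_nonneg (poissonWeight_nonneg (by positivity) n) (srwKernel_nonneg _ _ _ _)

lemma IsWalkEigenfunction.hasSum_latticeKernel_mul {m : ℕ} [NeZero m] {t ρ ρ' : ℝ}
    {G H : (Fin m → ℤ) → ℝ} (hG : IsWalkEigenfunction ρ G) (hH : IsWalkEigenfunction ρ' H)
    (hGH : ∀ x, |G x| ≤ H x) (ht : 0 ≤ t) :
    HasSum (fun y => latticeKernel t y * G y) (Real.exp (2 * m * t * (ρ - 1)) * G 0) := by
  set a : ℝ := 2 * m * t
  have weight_nonneg (n : ℕ) (y : Fin m → ℤ) : 0 ≤ poissonWeight a n * srwKernel m n 0 y :=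
    mul_nonneg (poissonWeight_nonneg (by positivity) n) (srwKernel_nonneg _ _ _ _)
  have h_row {ρ : ℝ} {G : (Fin m → ℤ) → ℝ} (hG : IsWalkEigenfunction ρ G) (n : ℕ) :
      HasSum (fun y => poissonWeight a n * srwKernel m n 0 y * G y)
        (poissonWeight a n * ρ ^ n * G 0) := by
    simpa only [mul_assoc] using (hG.hasSum_srwKernel_mul n 0).mul_left (poissonWeight a n)
  have h_dom : Summable fun p : ℕ × (Fin m → ℤ) =>
      poissonWeight a p.1 * srwKernel m p.1 0 p.2 * H p.2 := by
    rw [summable_prod_of_nonneg fun p =>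
      mul_nonneg (weight_nonneg _ _) ((abs_nonneg _).trans (hGH _))]
    refine ⟨fun n => (h_row hH n).summable, ?_⟩
    simp only [fun n => (h_row hH n).tsum_eq]
    exact (hasSum_poissonWeight_mul_pow a ρ').summable.mul_right _
  have h_summable : Summable fun p : ℕ × (Fin m → ℤ) =>
      poissonWeight a p.1 * srwKernel m p.1 0 p.2 * G p.2 := by
    refine h_dom.of_norm_bounded fun p => ?_
    rw [Real.norm_eq_abs, abs_mul, abs_of_nonneg (weight_nonneg _ _)]
    exact mul_le_mul_of_nonneg_left (hGH _) (weight_nonneg _ _)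
  have h_sum := h_summable.hasSum
  rw [(h_sum.prod_fiberwise (h_row hG)).unique
    ((hasSum_poissonWeight_mul_pow a ρ).mul_right (G 0))] at h_sum
  have h_swap := (Equiv.prodComm (Fin m → ℤ) ℕ).hasSum_iff.2 h_sum
  refine h_swap.prod_fiberwise fun y => ?_
  have h := (hasSum_poissonWeight_mul_srwKernel t 0 y).mul_right (G y)
  rwa [sub_zero] at h

lemma hasSum_latticeKernel {m : ℕ} [NeZero m] {t : ℝ} (ht : 0 ≤ t) :
    HasSum (latticeKernel (m := m) t) 1 := by
  simpa using (isWalkEigenfunction_one m).hasSum_latticeKernel_mul (isWalkEigenfunction_one m)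
    (by simp) ht

lemma latticeKernel_le_one {m : ℕ} [NeZero m] {t : ℝ} (ht : 0 ≤ t) (x : Fin m → ℤ) :
    latticeKernel t x ≤ 1 :=
  le_hasSum (hasSum_latticeKernel ht) x fun y _ => latticeKernel_nonneg ht y

lemma hasSum_latticeKernel_mul_cosh {m : ℕ} [NeZero m] {t : ℝ} (ht : 0 ≤ t) (j : Fin m)
    (θ : ℝ) : HasSum (fun y => latticeKernel t y * Real.cosh (y j * θ))
      (Real.exp (2 * t * (Real.cosh θ - 1))) := by
  have hm : (m : ℝ) ≠ 0 := NeZero.ne _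
  have h := (isWalkEigenfunction_cosh j θ).hasSum_latticeKernel_mul
    (isWalkEigenfunction_cosh j θ) (fun x => (abs_of_pos (Real.cosh_pos _)).le) ht
  have h_exponent : 2 * m * t * ((m - 1 + Real.cosh θ) / m - 1) = 2 * t * (Real.cosh θ - 1) := by
    field_simp
    ring
  simpa [h_exponent] using h

lemma hasSum_latticeKernel_mul_prod_cos {m : ℕ} [NeZero m] {t : ℝ} (ht : 0 ≤ t)
    (k : Fin m → ℤ) (θ : Fin m → ℝ) :
    HasSum (fun y => latticeKernel t y * ∏ i, Real.cos (((k i - y i : ℤ) : ℝ) * θ i))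
      ((∏ i, lineSymbol t (θ i)) * ∏ i, Real.cos (k i * θ i)) := by
  simpa [exp_mul_meanCos_sub_one] using (isWalkEigenfunction_prod_cos k θ).hasSum_latticeKernel_mul
    (isWalkEigenfunction_one m) (fun x => abs_prod_cos_le_one _) ht

lemma abs_prod_lineSymbol_mul_prod_cos_le_one {m : ℕ} {t : ℝ} (ht : 0 ≤ t)
    (θ φ : Fin m → ℝ) : |(∏ i, lineSymbol t (θ i)) * ∏ i, Real.cos (φ i)| ≤ 1 := by
  rw [abs_mul, abs_of_pos (Finset.prod_pos fun i _ => lineSymbol_pos t _)]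
  exact mul_le_one₀ (Finset.prod_le_one (fun i _ => (lineSymbol_pos t _).le)
    fun i _ => lineSymbol_le_one ht _) (abs_nonneg _) (abs_prod_cos_le_one φ)

theorem latticeKernel_chapmanKolmogorov {m : ℕ} [NeZero m] {s t : ℝ} (hs : 0 ≤ s) (ht : 0 ≤ t)
    (k : Fin m → ℤ) :
    HasSum (fun y => latticeKernel s y * latticeKernel t (k - y)) (latticeKernel (s + t) k) := by
  set F : (Fin m → ℤ) → (Fin m → ℝ) → ℝ := fun y θ => latticeKernel s y *
    ((∏ i, lineSymbol t (θ i)) * ∏ i, Real.cos (((k i - y i : ℤ) : ℝ) * θ i)) with hF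
  have h_norm (y : Fin m → ℤ) (θ : Fin m → ℝ) : ‖F y θ‖ ≤ latticeKernel s y := by
    rw [Real.norm_eq_abs, hF, abs_mul, abs_of_nonneg (latticeKernel_nonneg hs y)]
    exact mul_le_of_le_one_right (latticeKernel_nonneg hs y)
      (abs_prod_lineSymbol_mul_prod_cos_le_one ht _ _)
  have h_int (y : Fin m → ℤ) : Integrable (F y) (torusMeasure m) :=
    .of_bound (by fun_prop) _ (.of_forall (h_norm y))
  have h_summable : Summable fun y => ∫ θ, ‖F y θ‖ ∂torusMeasure m :=
    (hasSum_latticeKernel hs).summable.of_nonneg_of_le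
      (fun y => integral_nonneg fun _ => norm_nonneg _) fun y =>
      (integral_mono (h_int y).norm (integrable_const _) (h_norm y)).trans_eq (by simp)
  have h := hasSum_integral_of_summable_integral_norm h_int h_summable
  have h_tsum (θ : Fin m → ℝ) :
      ∑' y, F y θ = (∏ i, lineSymbol (s + t) (θ i)) * ∏ i, Real.cos (k i * θ i) := by
    have h := (hasSum_latticeKernel_mul_prod_cos hs k θ).mul_left (∏ i, lineSymbol t (θ i))
    calc ∑' y, F y θ
        = (∏ i, lineSymbol t (θ i)) * ((∏ i, lineSymbol s (θ i)) * ∏ i, Real.cos (k i * θ i)) :=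
          h.tsum_eq ▸ tsum_congr fun y => mul_left_comm _ _ _
      _ = _ := by simp only [add_comm s t, lineSymbol_add, Finset.prod_mul_distrib, mul_assoc]
  simp only [h_tsum, ← latticeKernel_eq_integral] at h
  simp only [hF, integral_const_mul] at h
  simpa only [latticeKernel_eq_integral t, Pi.sub_apply] using h

lemma exp_neg_le_latticeKernel_zero {m : ℕ} [NeZero m] {t : ℝ} (ht : 0 ≤ t) :
    Real.exp (-(2 * m * t)) ≤ latticeKernel (m := m) t 0 := by
  have h := le_hasSum (hasSum_poissonWeight_mul_srwKernel (m := m) t 0 0) 0 fun n _ =>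
    mul_nonneg (poissonWeight_nonneg (by positivity) n) (srwKernel_nonneg _ _ _ _)
  simpa [poissonWeight, srwKernel] using h

lemma latticeKernel_one_apply (t : ℝ) (x : Fin 1 → ℤ) : latticeKernel t x = lineKernel t (x 0) := by
  simp [latticeKernel]

lemma lineKernel_nonneg {t : ℝ} (ht : 0 ≤ t) (k : ℤ) : 0 ≤ lineKernel t k := by
  simpa only [latticeKernel_one_apply] using latticeKernel_nonneg ht fun _ : Fin 1 => k

lemma hasSum_lineKernel {t : ℝ} (ht : 0 ≤ t) : HasSum (lineKernel t) 1 := by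
  have h := (Equiv.funUnique (Fin 1) ℤ).symm.hasSum_iff.2 (hasSum_latticeKernel (m := 1) ht)
  refine h.congr_fun fun k => ?_
  simp [latticeKernel]

lemma lineKernel_le_one {t : ℝ} (ht : 0 ≤ t) (k : ℤ) : lineKernel t k ≤ 1 :=
  le_hasSum (hasSum_lineKernel ht) k fun y _ => lineKernel_nonneg ht y

/-! ### Bounds for the kernel on the line -/

lemma abs_lineSymbol_mul_cos_le_one {t : ℝ} (ht : 0 ≤ t) (θ φ : ℝ) :
    |lineSymbol t θ * Real.cos φ| ≤ 1 := by
  rw [abs_mul, abs_of_pos (lineSymbol_pos t θ)]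
  exact mul_le_one₀ (lineSymbol_le_one ht θ) (abs_nonneg _) (Real.abs_cos_le_one _)

lemma integrable_lineSymbol_mul_cos {t : ℝ} (ht : 0 ≤ t) (a : ℝ) :
    Integrable (fun θ => lineSymbol t θ * Real.cos (a * θ)) angleMeasure :=
  .of_bound (by fun_prop) 1 <| .of_forall fun θ => abs_lineSymbol_mul_cos_le_one ht θ _

lemma integrable_lineSymbol {t : ℝ} (ht : 0 ≤ t) : Integrable (lineSymbol t) angleMeasure := by
  simpa using integrable_lineSymbol_mul_cos ht 0

lemma lineKernel_zero (t : ℝ) : lineKernel t 0 = ∫ θ, lineSymbol t θ ∂angleMeasure := by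
  simp [lineKernel]

lemma lineSymbol_le_exp_neg_mul_sq {t θ : ℝ} (ht : 0 ≤ t) (hθ : |θ| ≤ Real.pi) :
    lineSymbol t θ ≤ Real.exp (-(4 * t / Real.pi ^ 2) * θ ^ 2) := by
  have h := Real.cos_le_one_sub_mul_cos_sq hθ
  refine Real.exp_le_exp.2 ?_
  calc -(2 * t * (1 - Real.cos θ)) ≤ -(2 * t * (2 / Real.pi ^ 2 * θ ^ 2)) := by
        gcongr
        linarith
    _ = _ := by ring

lemma lineKernel_zero_le_one_div_sqrt {t : ℝ} (ht : 0 < t) :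
    lineKernel t 0 ≤ 1 / Real.sqrt t := by
  have hπ := Real.pi_pos
  have hb : 0 < 4 * t / Real.pi ^ 2 := by positivity
  rw [lineKernel_zero, integral_angleMeasure, inv_mul_le_iff₀ (by positivity)]
  calc ∫ θ in (-Real.pi)..Real.pi, lineSymbol t θ
      ≤ ∫ θ in (-Real.pi)..Real.pi, Real.exp (-(4 * t / Real.pi ^ 2) * θ ^ 2) :=
        intervalIntegral.integral_mono_on (by linarith)
          (Continuous.intervalIntegrable (by fun_prop) _ _)
          (Continuous.intervalIntegrable (by fun_prop) _ _)
          fun θ hθ => lineSymbol_le_exp_neg_mul_sq ht.le (abs_le.2 hθ)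
    _ ≤ Real.sqrt (Real.pi / (4 * t / Real.pi ^ 2)) := by
        rw [← integral_gaussian, intervalIntegral.integral_of_le (by linarith)]
        exact setIntegral_le_integral (integrable_exp_neg_mul_sq hb)
          (.of_forall fun _ => (Real.exp_pos _).le)
    _ = Real.sqrt (Real.pi ^ 3 / 4) / Real.sqrt t := by
        rw [← Real.sqrt_div' _ ht.le]
        congr 1
        field_simp
    _ ≤ 2 * Real.pi * (1 / Real.sqrt t) := by
        rw [mul_one_div]
        gcongr
        rw [Real.sqrt_le_left (by positivity)]
        nlinarith [Real.pi_le_four, sq_nonneg Real.pi]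

lemma lineKernel_le_one_div_sqrt {t : ℝ} (ht : 0 < t) (k : ℤ) :
    lineKernel t k ≤ 1 / Real.sqrt t := by
  refine le_trans ?_ (lineKernel_zero_le_one_div_sqrt ht)
  rw [lineKernel_zero]
  exact integral_mono (integrable_lineSymbol_mul_cos ht.le k) (integrable_lineSymbol ht.le)
    fun θ => mul_le_of_le_one_right (lineSymbol_pos t θ).le (Real.cos_le_one _)

lemma abs_lineSymbol_sub_le {s s' : ℝ} (hs : 0 < s) (h : s ≤ s') (θ : ℝ) :
    |lineSymbol s' θ - lineSymbol s θ| ≤ 2 * (s' - s) / s * lineSymbol (s / 2) θ := by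
  set f : ℝ := 1 - Real.cos θ with hf
  have hΔ : 0 ≤ s' - s := sub_nonneg.2 h
  have h_split : lineSymbol s' θ = lineSymbol s θ * lineSymbol (s' - s) θ := by
    rw [← lineSymbol_add, add_sub_cancel]
  have h_half : lineSymbol s θ = lineSymbol (s / 2) θ * Real.exp (-(s * f)) := by
    rw [lineSymbol, lineSymbol, ← Real.exp_add, hf]
    ring_nf
  have h_xexp : s * f * Real.exp (-(s * f)) ≤ 1 := by
    rw [Real.exp_neg, ← div_eq_mul_inv, div_le_one (Real.exp_pos _)]
    linarith [Real.add_one_le_exp (s * f)]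
  have h_lin : 1 - lineSymbol (s' - s) θ ≤ 2 * (s' - s) * f := by
    rw [lineSymbol]
    linarith [Real.add_one_le_exp (-(2 * (s' - s) * (1 - Real.cos θ)))]
  have h_pos := lineSymbol_pos s θ
  have h_pos_half := lineSymbol_pos (s / 2) θ
  calc |lineSymbol s' θ - lineSymbol s θ| = lineSymbol s θ * (1 - lineSymbol (s' - s) θ) := by
        rw [h_split, abs_sub_comm, ← mul_one_sub, abs_of_nonneg]
        exact mul_nonneg h_pos.le (sub_nonneg.2 (lineSymbol_le_one hΔ θ))
    _ ≤ lineSymbol s θ * (2 * (s' - s) * f) := by gcongr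
    _ = 2 * (s' - s) / s * lineSymbol (s / 2) θ * (s * f * Real.exp (-(s * f))) := by
        rw [h_half]
        field_simp
    _ ≤ 2 * (s' - s) / s * lineSymbol (s / 2) θ :=
        mul_le_of_le_one_right (by positivity) h_xexp

theorem abs_lineKernel_sub_le {s s' : ℝ} (hs : 0 < s) (h : s ≤ s') (k : ℤ) :
    |lineKernel s' k - lineKernel s k| ≤ 4 * (s' - s) / (s * Real.sqrt s) := by
  have h_symbol : |lineKernel s' k - lineKernel s k|
      ≤ 2 * (s' - s) / s * lineKernel (s / 2) 0 := by
    rw [lineKernel_zero, ← integral_const_mul, lineKernel, lineKernel,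
      ← integral_sub (integrable_lineSymbol_mul_cos (hs.le.trans h) k)
        (integrable_lineSymbol_mul_cos hs.le k), ← Real.norm_eq_abs]
    refine norm_integral_le_of_norm_le ((integrable_lineSymbol (by positivity)).const_mul _)
      (.of_forall fun θ => ?_)
    rw [Real.norm_eq_abs, ← sub_mul, abs_mul]
    exact (mul_le_of_le_one_right (abs_nonneg _) (Real.abs_cos_le_one _)).trans
      (abs_lineSymbol_sub_le hs h θ)
  have h_half : 1 / Real.sqrt (s / 2) ≤ 2 / Real.sqrt s := by
    rw [Real.sqrt_div hs.le, one_div_div]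
    gcongr
    rw [Real.sqrt_le_left (by norm_num)]
    norm_num
  calc |lineKernel s' k - lineKernel s k| ≤ 2 * (s' - s) / s * lineKernel (s / 2) 0 := h_symbol
    _ ≤ 2 * (s' - s) / s * (2 / Real.sqrt s) := by
        gcongr
        exact (lineKernel_zero_le_one_div_sqrt (by positivity)).trans h_half
    _ = _ := by
        rw [div_mul_div_comm]
        ring

@[fun_prop]
lemma measurable_lineKernel (k : ℤ) : Measurable fun t => lineKernel t k := by
  unfold lineKernel lineSymbol
  exact (StronglyMeasurable.integral_prod_right' (f := fun p : ℝ × ℝ =>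
    Real.exp (-(2 * p.1 * (1 - Real.cos p.2))) * Real.cos (k * p.2))
      (Measurable.stronglyMeasurable (by fun_prop))).measurable

/-! ### The local central limit theorem on the line -/

lemma re_cexp_mul_cexp_neg_sq (a φ : ℝ) :
    (Complex.exp (Complex.I * a * φ) * Complex.exp (-1 * (φ : ℂ) ^ 2)).re
      = Real.cos (a * φ) * Real.exp (-φ ^ 2) := by
  rw [show Complex.I * a * φ = ((a * φ : ℝ) : ℂ) * Complex.I by push_cast; ring,
    show -1 * (φ : ℂ) ^ 2 = ((-φ ^ 2 : ℝ) : ℂ) by push_cast; ring, ← Complex.ofReal_exp,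
    Complex.re_mul_ofReal, Complex.exp_ofReal_mul_I_re]

lemma integrable_exp_neg_sq : Integrable fun φ : ℝ => Real.exp (-φ ^ 2) := by
  simpa using integrable_exp_neg_mul_sq (b := 1) one_pos

lemma integral_cos_mul_exp_neg_sq (a : ℝ) :
    ∫ φ : ℝ, Real.cos (a * φ) * Real.exp (-φ ^ 2)
      = Real.sqrt Real.pi * Real.exp (-a ^ 2 / 4) := by
  have h_int : Integrable fun φ : ℝ =>
      Complex.exp (Complex.I * a * φ) * Complex.exp (-1 * (φ : ℂ) ^ 2) := by
    refine integrable_exp_neg_sq.mono (by fun_prop) (.of_forall fun φ => le_of_eq ?_)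
    rw [norm_mul, show Complex.I * a * φ = ((a * φ : ℝ) : ℂ) * Complex.I by push_cast; ring,
      show -1 * (φ : ℂ) ^ 2 = ((-φ ^ 2 : ℝ) : ℂ) by push_cast; ring,
      Complex.norm_exp_ofReal_mul_I, one_mul, ← Complex.ofReal_exp, Complex.norm_real]
  have h := congrArg Complex.re (fourierIntegral_gaussian (b := 1) (by simp) (a : ℂ))
  have h_re := integral_re h_int
  simp only [RCLike.re_to_complex, re_cexp_mul_cexp_neg_sq] at h_re
  rw [← h_re] at h
  rw [h, show -(a : ℂ) ^ 2 / (4 * 1) = ((-a ^ 2 / 4 : ℝ) : ℂ) by push_cast; ring,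
    ← Complex.ofReal_exp, Complex.re_mul_ofReal, div_one, ← Complex.ofReal_one,
    ← Complex.ofReal_ofNat, ← Complex.ofReal_div, ← Complex.ofReal_cpow Real.pi_pos.le,
    Complex.ofReal_re, Real.sqrt_eq_rpow]

/-- The diffusively rescaled symbol `φ ↦ lineSymbol t (φ / √t)`, cut off to `|φ| ≤ π√t`; its
Fourier transform is `2π√t` times the kernel at time `t`. -/
noncomputable def rescaledSymbol (t : ℝ) : ℝ → ℝ :=
  (Ioc (-(Real.pi * Real.sqrt t)) (Real.pi * Real.sqrt t)).indicator
    fun φ => lineSymbol t (φ / Real.sqrt t)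

@[fun_prop]
lemma measurable_rescaledSymbol (t : ℝ) : Measurable (rescaledSymbol t) :=
  Measurable.indicator (by fun_prop) measurableSet_Ioc

lemma abs_rescaledSymbol_le {t : ℝ} (ht : 0 < t) (φ : ℝ) :
    |rescaledSymbol t φ| ≤ Real.exp (-(4 / Real.pi ^ 2) * φ ^ 2) := by
  have hs := Real.sqrt_pos.2 ht
  rw [rescaledSymbol]
  by_cases h : φ ∈ Ioc (-(Real.pi * Real.sqrt t)) (Real.pi * Real.sqrt t)
  · have h_le : |φ / Real.sqrt t| ≤ Real.pi := by
      rw [abs_div, abs_of_pos hs, div_le_iff₀ hs, abs_le]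
      exact ⟨h.1.le, h.2⟩
    rw [indicator_of_mem h, abs_of_pos (lineSymbol_pos _ _)]
    refine (lineSymbol_le_exp_neg_mul_sq ht.le h_le).trans_eq ?_
    rw [div_pow, Real.sq_sqrt ht.le]
    field_simp
  · rw [indicator_of_notMem h, abs_zero]
    exact (Real.exp_pos _).le

lemma integrable_rescaledSymbol {t : ℝ} (ht : 0 < t) : Integrable (rescaledSymbol t) := by
  exact (integrable_exp_neg_mul_sq (b := 4 / Real.pi ^ 2) (by positivity)).mono'
    (by fun_prop) (.of_forall (abs_rescaledSymbol_le ht))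

lemma sqrt_mul_lineKernel {t : ℝ} (ht : 0 < t) (k : ℤ) :
    Real.sqrt t * lineKernel t k
      = (2 * Real.pi)⁻¹ * ∫ φ, Real.cos (k / Real.sqrt t * φ) * rescaledSymbol t φ := by
  have hs := Real.sqrt_pos.2 ht
  have hπ := Real.pi_pos
  have h := intervalIntegral.integral_comp_div
    (fun θ => lineSymbol t θ * Real.cos (k * θ)) hs.ne'
    (a := -(Real.pi * Real.sqrt t)) (b := Real.pi * Real.sqrt t)
  rw [neg_div, mul_div_cancel_right₀ _ hs.ne', smul_eq_mul] at h
  rw [lineKernel, integral_angleMeasure, mul_left_comm, ← h,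
    intervalIntegral.integral_of_le (by nlinarith [mul_pos hπ hs]),
    ← integral_indicator measurableSet_Ioc]
  congr 2 with φ
  simp only [rescaledSymbol, indicator_apply, mul_ite, mul_zero, mul_comm (lineSymbol _ _),
    mul_div_assoc', div_mul_eq_mul_div]

lemma tendsto_mul_one_sub_cos_div_sqrt (φ : ℝ) :
    Tendsto (fun t : ℝ => 2 * t * (1 - Real.cos (φ / Real.sqrt t))) atTop (𝓝 (φ ^ 2)) := by
  rw [tendsto_iff_norm_sub_tendsto_zero]
  have h_lim : Tendsto (fun t : ℝ => φ ^ 4 * t⁻¹) atTop (𝓝 0) := by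
    simpa using (tendsto_inv_atTop_zero (𝕜 := ℝ)).const_mul (φ ^ 4)
  refine squeeze_zero' (.of_forall fun _ => norm_nonneg _) ?_ h_lim
  filter_upwards [eventually_ge_atTop (φ ^ 2), eventually_gt_atTop 0] with t ht ht0
  have hs := Real.sqrt_pos.2 ht0
  have h_abs : |φ / Real.sqrt t| ≤ 1 := by
    rw [abs_div, abs_of_pos hs, div_le_one hs]
    exact Real.abs_le_sqrt ht
  have h_sq : (φ / Real.sqrt t) ^ 2 = φ ^ 2 / t := by rw [div_pow, Real.sq_sqrt ht0.le]
  have h_pow_four : |φ / Real.sqrt t| ^ 4 = φ ^ 4 / t ^ 2 := by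
    rw [show |φ / Real.sqrt t| ^ 4 = (|φ / Real.sqrt t| ^ 2) ^ 2 by ring, sq_abs, h_sq]
    ring
  have h_cos := Real.cos_bound h_abs
  rw [h_pow_four, h_sq] at h_cos
  have h_eq : 2 * t * (1 - Real.cos (φ / Real.sqrt t)) - φ ^ 2
      = -(2 * t) * (Real.cos (φ / Real.sqrt t) - (1 - φ ^ 2 / t / 2)) := by
    field_simp
    ring
  rw [Real.norm_eq_abs, h_eq, abs_mul, abs_neg, abs_of_pos (by positivity : 0 < 2 * t)]
  calc 2 * t * |Real.cos (φ / Real.sqrt t) - (1 - φ ^ 2 / t / 2)|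
      ≤ 2 * t * (φ ^ 4 / t ^ 2 * (5 / 96)) := by gcongr
    _ = φ ^ 4 * t⁻¹ * (10 / 96) := by
        field_simp
        ring
    _ ≤ φ ^ 4 * t⁻¹ := mul_le_of_le_one_right (by positivity) (by norm_num)

lemma tendsto_rescaledSymbol (φ : ℝ) :
    Tendsto (fun t => rescaledSymbol t φ) atTop (𝓝 (Real.exp (-φ ^ 2))) := by
  have h := (Real.continuous_exp.tendsto _).comp (tendsto_mul_one_sub_cos_div_sqrt φ).neg
  refine h.congr' ?_
  filter_upwards [eventually_gt_atTop (φ ^ 2), eventually_gt_atTop 0] with t ht ht0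
  have hs := Real.sqrt_pos.2 ht0
  have h_abs : |φ| < Real.sqrt t := by
    rw [← Real.sqrt_sq_eq_abs]
    exact Real.sqrt_lt_sqrt (sq_nonneg _) ht
  have h_le : Real.sqrt t ≤ Real.pi * Real.sqrt t := by nlinarith [Real.pi_gt_three]
  have h_mem : φ ∈ Ioc (-(Real.pi * Real.sqrt t)) (Real.pi * Real.sqrt t) := by
    rw [abs_lt] at h_abs
    exact ⟨by linarith, by linarith⟩
  rw [rescaledSymbol, indicator_of_mem h_mem]
  rfl

lemma tendsto_integral_abs_rescaledSymbol_sub :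
    Tendsto (fun t => ∫ φ, |rescaledSymbol t φ - Real.exp (-φ ^ 2)|) atTop (𝓝 0) := by
  have h := tendsto_integral_filter_of_dominated_convergence (l := (atTop : Filter ℝ))
    (F := fun t φ => |rescaledSymbol t φ - Real.exp (-φ ^ 2)|) (f := fun _ : ℝ => 0)
    (fun φ => Real.exp (-(4 / Real.pi ^ 2) * φ ^ 2) + Real.exp (-φ ^ 2))
    (.of_forall fun t => by fun_prop) ?_
    ((integrable_exp_neg_mul_sq (b := 4 / Real.pi ^ 2) (by positivity)).add
      integrable_exp_neg_sq) ?_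
  · simpa using h
  · filter_upwards [eventually_gt_atTop 0] with t ht
    refine .of_forall fun φ => ?_
    rw [Real.norm_eq_abs, abs_abs]
    refine (abs_sub _ _).trans ?_
    rw [abs_of_pos (Real.exp_pos (-φ ^ 2))]
    gcongr
    exact abs_rescaledSymbol_le ht φ
  · refine .of_forall fun φ => ?_
    have h := ((tendsto_rescaledSymbol φ).sub_const (Real.exp (-φ ^ 2))).abs
    rwa [sub_self, abs_zero] at h

theorem abs_sqrt_mul_lineKernel_sub_le {t : ℝ} (ht : 0 < t) (k : ℤ) :
    |Real.sqrt t * lineKernel t k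
        - (2 * Real.pi)⁻¹ * (Real.sqrt Real.pi * Real.exp (-(k / Real.sqrt t) ^ 2 / 4))|
      ≤ (2 * Real.pi)⁻¹ * ∫ φ, |rescaledSymbol t φ - Real.exp (-φ ^ 2)| := by
  have h_int {f : ℝ → ℝ} (hf : Integrable f) :
      Integrable fun φ => Real.cos (k / Real.sqrt t * φ) * f φ :=
    hf.bdd_mul (c := 1) (by fun_prop) (.of_forall fun φ => Real.abs_cos_le_one _)
  rw [sqrt_mul_lineKernel ht, ← integral_cos_mul_exp_neg_sq, ← mul_sub, abs_mul,
    abs_of_pos (by positivity : 0 < (2 * Real.pi)⁻¹),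
    ← integral_sub (h_int (integrable_rescaledSymbol ht)) (h_int integrable_exp_neg_sq),
    ← Real.norm_eq_abs]
  gcongr
  refine norm_integral_le_of_norm_le
    ((integrable_rescaledSymbol ht).sub integrable_exp_neg_sq).abs (.of_forall fun φ => ?_)
  rw [← mul_sub, norm_mul]
  exact mul_le_of_le_one_left (norm_nonneg _) (Real.abs_cos_le_one _)

lemma exists_eventually_div_sqrt_le_lineKernel (ρ : ℝ) :
    ∃ c > 0, ∀ᶠ t in (atTop : Filter ℝ), ∀ k : ℤ,
      |(k : ℝ)| ≤ ρ * Real.sqrt t → c / Real.sqrt t ≤ lineKernel t k := by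
  set g : ℝ := Real.sqrt Real.pi * Real.exp (-ρ ^ 2 / 4) with hg
  have hg0 : 0 < g := by positivity
  refine ⟨(2 * Real.pi)⁻¹ * (g / 2), by positivity, ?_⟩
  filter_upwards [tendsto_integral_abs_rescaledSymbol_sub.eventually (gt_mem_nhds (half_pos hg0)),
    eventually_gt_atTop 0] with t h_close ht k hk
  have hs := Real.sqrt_pos.2 ht
  have h_abs : |k / Real.sqrt t| ≤ ρ := by rwa [abs_div, abs_of_pos hs, div_le_iff₀ hs]
  have h_sq : (k / Real.sqrt t) ^ 2 ≤ ρ ^ 2 := sq_le_sq.2 (h_abs.trans (le_abs_self ρ))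
  have h_gauss : g ≤ Real.sqrt Real.pi * Real.exp (-(k / Real.sqrt t) ^ 2 / 4) := by
    rw [hg]
    gcongr
  rw [div_le_iff₀' hs]
  calc (2 * Real.pi)⁻¹ * (g / 2)
      ≤ (2 * Real.pi)⁻¹ * (Real.sqrt Real.pi * Real.exp (-(k / Real.sqrt t) ^ 2 / 4))
        - (2 * Real.pi)⁻¹ * ∫ φ, |rescaledSymbol t φ - Real.exp (-φ ^ 2)| := by
        rw [← mul_sub]
        gcongr
        linarith
    _ ≤ Real.sqrt t * lineKernel t k := by
        linarith [(abs_le.1 (abs_sqrt_mul_lineKernel_sub_le ht k)).1]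

/-! ### Bounds for the kernel on the lattice -/

lemma latticeKernel_le_pow {m : ℕ} {t : ℝ} (ht : 0 < t) (x : Fin m → ℤ) :
    latticeKernel t x ≤ (1 / Real.sqrt t) ^ m := by
  calc ∏ i, lineKernel t (x i) ≤ ∏ _i : Fin m, (1 / Real.sqrt t) :=
        Finset.prod_le_prod (fun i _ => lineKernel_nonneg ht.le _)
          fun i _ => lineKernel_le_one_div_sqrt ht _
    _ = _ := by simp

theorem exists_eventually_mul_pow_le_latticeKernel (m : ℕ) (ρ : ℝ) :
    ∃ c > 0, ∀ᶠ t in (atTop : Filter ℝ), ∀ x : Fin m → ℤ,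
      (∀ i, |(x i : ℝ)| ≤ ρ * Real.sqrt t) → c * (1 / Real.sqrt t) ^ m ≤ latticeKernel t x := by
  obtain ⟨c, hc, h⟩ := exists_eventually_div_sqrt_le_lineKernel ρ
  refine ⟨c ^ m, by positivity, ?_⟩
  filter_upwards [h] with t ht x hx
  calc c ^ m * (1 / Real.sqrt t) ^ m = ∏ _i : Fin m, (c / Real.sqrt t) := by
        rw [← mul_pow, mul_one_div, Finset.prod_const, Finset.card_univ, Fintype.card_fin]
    _ ≤ _ := Finset.prod_le_prod (fun i _ => by positivity) fun i _ => ht _ (hx i)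

lemma exp_neg_mul_latticeKernel_le {m : ℕ} [NeZero m] {t h : ℝ} (ht : 0 ≤ t) (hh : 0 ≤ h)
    (x : Fin m → ℤ) :
    Real.exp (-(2 * m * h)) * latticeKernel t x ≤ latticeKernel (t + h) x := by
  have h_zero := le_hasSum (latticeKernel_chapmanKolmogorov hh ht x) 0 fun y _ =>
    mul_nonneg (latticeKernel_nonneg hh y) (latticeKernel_nonneg ht _)
  rw [sub_zero] at h_zero
  rw [add_comm t h]
  exact (mul_le_mul_of_nonneg_right (exp_neg_le_latticeKernel_zero hh)
    (latticeKernel_nonneg ht _)).trans h_zero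

lemma latticeKernel_add_le {m : ℕ} [NeZero m] {t h : ℝ} (ht : 0 < t) (hh : 0 ≤ h)
    (x : Fin m → ℤ) :
    latticeKernel (t + h) x ≤ latticeKernel t x + 2 * m * h * (1 / Real.sqrt t) ^ m := by
  set B : ℝ := (1 / Real.sqrt t) ^ m
  set p₀ : ℝ := latticeKernel (m := m) h 0
  have h_excess : HasSum (fun y : Fin m → ℤ => latticeKernel h y * B -
      if y = 0 then p₀ * (B - latticeKernel t x) else 0) (1 * B - p₀ * (B - latticeKernel t x)) :=
    ((hasSum_latticeKernel hh).mul_right B).sub (hasSum_ite_eq 0 _)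
  have h_conv : latticeKernel (h + t) x ≤ 1 * B - p₀ * (B - latticeKernel t x) := by
    refine hasSum_le (fun y => ?_) (latticeKernel_chapmanKolmogorov hh ht.le x) h_excess
    split_ifs with hy
    · subst hy
      rw [sub_zero]
      exact le_of_eq (by ring)
    · rw [sub_zero]
      exact mul_le_mul_of_nonneg_left (latticeKernel_le_pow ht _) (latticeKernel_nonneg hh y)
  have h_stay : 1 - p₀ ≤ 2 * m * h := by
    linarith [exp_neg_le_latticeKernel_zero (m := m) hh, Real.add_one_le_exp (-(2 * m * h))]
  have h_bound : (1 - p₀) * (B - latticeKernel t x) ≤ 2 * m * h * B :=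
    mul_le_mul h_stay (by linarith [latticeKernel_nonneg ht.le x])
      (by linarith [latticeKernel_le_pow ht x]) (by positivity)
  rw [add_comm t h]
  linarith

@[fun_prop]
lemma measurable_latticeKernel {m : ℕ} (x : Fin m → ℤ) : Measurable fun t => latticeKernel t x :=
  Finset.measurable_prod _ fun i _ => measurable_lineKernel (x i)

/-- The kernel `latticeKernel` with values in `ℝ≥0∞`. -/
noncomputable def latticeMass {m : ℕ} (t : ℝ) (x : Fin m → ℤ) : ℝ≥0∞ :=
  ENNReal.ofReal (latticeKernel t x)

lemma tsum_ofReal_eq_of_hasSum {ι : Type*} {f : ι → ℝ} {a : ℝ} (hf : ∀ x, 0 ≤ f x)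
    (h : HasSum f a) : ∑' x, ENNReal.ofReal (f x) = ENNReal.ofReal a := by
  rw [← ENNReal.ofReal_tsum_of_nonneg hf h.summable, h.tsum_eq]

lemma tsum_latticeMass {m : ℕ} [NeZero m] {t : ℝ} (ht : 0 ≤ t) :
    ∑' x : Fin m → ℤ, latticeMass t x = 1 := by
  rw [← ENNReal.ofReal_one]
  exact tsum_ofReal_eq_of_hasSum (latticeKernel_nonneg ht) (hasSum_latticeKernel ht)

lemma tsum_latticeMass_mul_latticeMass {m : ℕ} [NeZero m] {s t : ℝ} (hs : 0 ≤ s) (ht : 0 ≤ t)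
    (k : Fin m → ℤ) : ∑' y, latticeMass s y * latticeMass t (k - y) = latticeMass (s + t) k := by
  simp only [latticeMass, ← ENNReal.ofReal_mul (latticeKernel_nonneg hs _)]
  exact tsum_ofReal_eq_of_hasSum
    (fun y => mul_nonneg (latticeKernel_nonneg hs y) (latticeKernel_nonneg ht _))
    (latticeKernel_chapmanKolmogorov hs ht k)

lemma latticeMass_le_one {m : ℕ} [NeZero m] {t : ℝ} (ht : 0 ≤ t) (x : Fin m → ℤ) :
    latticeMass t x ≤ 1 :=
  ENNReal.ofReal_le_one.2 (latticeKernel_le_one ht x)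

@[fun_prop]
lemma measurable_latticeMass {m : ℕ} (x : Fin m → ℤ) : Measurable fun t => latticeMass t x :=
  (measurable_latticeKernel x).ennreal_ofReal

/-- The points of `ℤ^m` having some coordinate larger than `L` in absolute value. -/
def farSet (m : ℕ) (L : ℝ) : Set (Fin m → ℤ) := {y | ∃ i, L < |(y i : ℝ)|}

lemma cosh_sub_one_le_sq {x : ℝ} (hx : |x| ≤ 1) : Real.cosh x - 1 ≤ x ^ 2 := by
  have hx2 : x ^ 2 ≤ 1 := by
    rw [← sq_abs]
    exact pow_le_one₀ (abs_nonneg _) hx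
  have h_nonneg : 0 ≤ x ^ 2 / 2 := by positivity
  have h_exp := Real.abs_exp_sub_one_le (x := x ^ 2 / 2) (by rw [abs_of_nonneg h_nonneg]; linarith)
  rw [abs_of_nonneg h_nonneg] at h_exp
  linarith [(abs_le.1 h_exp).2, Real.cosh_le_exp_half_sq x]

lemma exp_two_mul_cosh_inv_sqrt_le {t u : ℝ} (ht : 1 ≤ t) (hut : u ≤ t) :
    Real.exp (2 * u * (Real.cosh (1 / Real.sqrt t) - 1)) ≤ Real.exp 2 := by
  have hs : 0 < Real.sqrt t := Real.sqrt_pos.2 (by linarith)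
  have h_le_one : |1 / Real.sqrt t| ≤ 1 := by
    rw [abs_of_pos (by positivity), div_le_one hs]
    exact Real.one_le_sqrt.2 ht
  have h_cosh := cosh_sub_one_le_sq h_le_one
  rw [div_pow, one_pow, Real.sq_sqrt (by linarith)] at h_cosh
  have h_nonneg : 0 ≤ Real.cosh (1 / Real.sqrt t) - 1 := by
    linarith [Real.one_le_cosh (1 / Real.sqrt t)]
  refine Real.exp_le_exp.2 ?_
  calc 2 * u * (Real.cosh (1 / Real.sqrt t) - 1)
      ≤ 2 * t * (Real.cosh (1 / Real.sqrt t) - 1) := by gcongr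
    _ ≤ 2 * t * (1 / t) := by gcongr
    _ = 2 := by field_simp

lemma one_le_two_mul_exp_neg_mul_cosh {L θ y : ℝ} (hθ : 0 < θ) (hy : L ≤ |y|) :
    1 ≤ Real.cosh (y * θ) * (2 * Real.exp (-(L * θ))) := by
  have h_cosh : Real.exp (|y| * θ) ≤ 2 * Real.cosh (y * θ) := by
    rw [← Real.cosh_abs, abs_mul, abs_of_pos hθ, Real.cosh_eq]
    linarith [Real.exp_pos (-(|y| * θ))]
  calc 1 = Real.exp (L * θ) * Real.exp (-(L * θ)) := by rw [← Real.exp_add]; simp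
    _ ≤ 2 * Real.cosh (y * θ) * Real.exp (-(L * θ)) := by
        gcongr
        refine (Real.exp_le_exp.2 ?_).trans h_cosh
        gcongr
    _ = _ := by ring

/- Chebyshev's inequality for `cosh (y j / √t)`, summed over the coordinates `j`. -/
theorem tsum_indicator_farSet_latticeMass_le {m : ℕ} [NeZero m] {t u : ℝ} (L : ℝ) (ht : 1 ≤ t)
    (hu : 0 ≤ u) (hut : u ≤ t) :
    ∑' y, (farSet m L).indicator (latticeMass u) y
      ≤ ENNReal.ofReal (2 * m * Real.exp 2 * Real.exp (-(L / Real.sqrt t))) := by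
  set θ : ℝ := 1 / Real.sqrt t with hθ
  have hθ0 : 0 < θ := by positivity
  set c : ℝ := 2 * Real.exp (-(L * θ)) with hc
  set g : Fin m → (Fin m → ℤ) → ℝ := fun j y => latticeKernel u y * Real.cosh (y j * θ) * c
  have g_nonneg (j : Fin m) (y : Fin m → ℤ) : 0 ≤ g j y :=
    mul_nonneg (mul_nonneg (latticeKernel_nonneg hu y) (Real.cosh_pos _).le) (by positivity)
  have h_sum := hasSum_sum (s := Finset.univ) fun j _ =>
    (hasSum_latticeKernel_mul_cosh (m := m) hu j θ).mul_right c
  calc ∑' y, (farSet m L).indicator (latticeMass u) y ≤ ∑' y, ENNReal.ofReal (∑ j, g j y) := by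
        refine ENNReal.tsum_le_tsum fun y => indicator_apply_le' (fun ⟨i, hi⟩ => ?_)
          fun _ => zero_le
        refine ENNReal.ofReal_le_ofReal (le_trans ?_
          (Finset.single_le_sum (fun j _ => g_nonneg j y) (Finset.mem_univ i)))
        change latticeKernel u y ≤ latticeKernel u y * Real.cosh (y i * θ) * c
        rw [mul_assoc]
        exact le_mul_of_one_le_right (latticeKernel_nonneg hu y)
          (one_le_two_mul_exp_neg_mul_cosh hθ0 hi.le)
    _ = ENNReal.ofReal (∑ _j : Fin m, Real.exp (2 * u * (Real.cosh θ - 1)) * c) :=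
        tsum_ofReal_eq_of_hasSum (fun y => Finset.sum_nonneg fun j _ => g_nonneg j y) h_sum
    _ ≤ _ := by
        refine ENNReal.ofReal_le_ofReal ?_
        rw [Finset.sum_const, Finset.card_univ, Fintype.card_fin, nsmul_eq_mul]
        calc (m : ℝ) * (Real.exp (2 * u * (Real.cosh θ - 1)) * c) ≤ m * (Real.exp 2 * c) := by
              gcongr m * (?_ * c)
              exact exp_two_mul_cosh_inv_sqrt_le ht hut
          _ = _ := by
              rw [hc, hθ, mul_one_div]
              ring

/-! ### The scenery -/

section LatticeSums

variable {d : ℕ}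

lemma summable_one_add_norm_rpow_neg {s : ℝ} (hs : d < s) :
    Summable fun y : Fin d → ℤ => (1 + ‖y‖) ^ (-s) := by
  set L := Submodule.span ℤ (range (Pi.basisFun ℝ (Fin d)))
  have hrank : Module.finrank ℤ L = d := by rw [ZLattice.rank ℝ, Module.finrank_fin_fun]
  let toL : (Fin d → ℤ) → L := fun y => ∑ i, y i •
    ⟨Pi.basisFun ℝ (Fin d) i, Submodule.subset_span (mem_range_self i)⟩
  have htoL : ∀ y, (toL y : Fin d → ℝ) = fun i => (y i : ℝ) := fun y => by
    ext i
    simp [toL, Finset.sum_apply, Pi.single_apply]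
  have hinj : Function.Injective toL := fun y y' h => by
    ext i
    have h' := congrFun (congrArg Subtype.val h) i
    simpa only [htoL, Int.cast_inj] using h'
  have hnorm : ∀ y, ‖toL y‖ = ‖y‖ := fun y => by
    change ‖(toL y : Fin d → ℝ)‖ = ‖y‖
    have hcast : ∀ k : ℤ, ‖(k : ℝ)‖₊ = ‖k‖₊ := fun k => NNReal.eq (Int.norm_cast_real k)
    rw [htoL]
    simp only [Pi.norm_def, hcast]
  have hsum := (ZLattice.summable_norm_rpow L (-s) (by rw [hrank]; linarith)).comp_injective hinj
  refine Summable.of_norm_bounded_eventually hsum ?_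
  filter_upwards [(finite_singleton (0 : Fin d → ℤ)).compl_mem_cofinite] with y hy
  have hy0 : 0 < ‖y‖ := norm_pos_iff.mpr hy
  rw [Real.norm_of_nonneg (by positivity), Function.comp_apply, hnorm]
  exact Real.rpow_le_rpow_of_nonpos hy0 (by linarith)
    (neg_nonpos.mpr ((Nat.cast_nonneg d).trans hs.le))

/-- The points of `ℤ^d` whose coordinates are all at most `n` in absolute value. -/
noncomputable def latticeBox (d n : ℕ) : Finset (Fin d → ℤ) :=
  Fintype.piFinset fun _ => Finset.Icc (-(n : ℤ)) n

lemma mem_latticeBox {n : ℕ} {y : Fin d → ℤ} : y ∈ latticeBox d n ↔ ∀ i, |(y i : ℝ)| ≤ n := by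
  simp only [latticeBox, Fintype.mem_piFinset, Finset.mem_Icc, ← abs_le]
  exact forall_congr' fun i => by exact_mod_cast Iff.rfl

lemma notMem_latticeBox {n : ℕ} {y : Fin d → ℤ} : y ∉ latticeBox d n ↔ y ∈ farSet d n := by
  simp [mem_latticeBox, farSet]

lemma card_latticeBox (n : ℕ) : (latticeBox d n).card = (2 * n + 1) ^ d := by
  simp only [latticeBox, Fintype.card_piFinset, Int.card_Icc, Finset.prod_const, Finset.card_univ,
    Fintype.card_fin]
  congr 1
  lia

lemma tsum_le_sum_latticeBox_add (n : ℕ) (f : (Fin d → ℤ) → ℝ≥0∞) :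
    ∑' y, f y ≤ ∑ y ∈ latticeBox d n, f y + ∑' y, (farSet d n).indicator f y := by
  have hcompl : ((latticeBox d n : Set (Fin d → ℤ)))ᶜ = farSet d n := by
    ext y
    simp [← notMem_latticeBox]
  rw [← ENNReal.summable.tsum_add_tsum_compl (s := latticeBox d n) ENNReal.summable, hcompl,
    tsum_subtype (farSet d n), Finset.tsum_subtype']

end LatticeSums

section Chernoff

variable {Ω : Type*} [MeasurableSpace Ω] {μ : Measure Ω} [IsProbabilityMeasure μ]

lemma exp_le_one_add_mul_self {x η : ℝ} (hx : 0 ≤ x) (hxη : x ≤ η) (hη : η ≤ 1) :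
    Real.exp x ≤ 1 + (1 + η) * x := by
  have h := Real.abs_exp_sub_one_sub_id_le (x := x) (by rw [abs_of_nonneg hx]; linarith)
  nlinarith [(abs_le.mp h).2]

lemma mgf_le_exp_mul_integral {X : Ω → ℝ} (hX : Measurable X) (h0 : ∀ ω, 0 ≤ X ω) {T l η : ℝ}
    (hT : ∀ ω, X ω ≤ T) (hl : 0 ≤ l) (hη : η ≤ 1) (hlT : l * T ≤ η) :
    mgf X μ l ≤ Real.exp (l * ((1 + η) * ∫ ω, X ω ∂μ)) := by
  have hint : Integrable X μ := .of_bound hX.aestronglyMeasurable T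
    (ae_of_all _ fun ω => by rw [Real.norm_of_nonneg (h0 ω)]; exact hT ω)
  calc ∫ ω, Real.exp (l * X ω) ∂μ
      ≤ ∫ ω, (1 + (1 + η) * l * X ω) ∂μ := by
        refine integral_mono_of_nonneg (ae_of_all _ fun ω => (Real.exp_pos _).le)
          ((integrable_const _).add (hint.const_mul _)) (ae_of_all _ fun ω => ?_)
        have hle : l * X ω ≤ η := (mul_le_mul_of_nonneg_left (hT ω) hl).trans hlT
        have hexp := exp_le_one_add_mul_self (mul_nonneg hl (h0 ω)) hle hη
        simpa only [mul_assoc] using hexp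
    _ = l * ((1 + η) * ∫ ω, X ω ∂μ) + 1 := by
        rw [integral_add (integrable_const _) (hint.const_mul _), integral_const_mul]
        simp only [integral_const, probReal_univ, smul_eq_mul, mul_one]
        ring
    _ ≤ _ := Real.add_one_le_exp _

lemma measure_le_sum_le_exp_of_iIndepFun {ι : Type*} {X : ι → Ω → ℝ}
    (hind : iIndepFun X μ) (hX : ∀ i, Measurable (X i)) (h0 : ∀ i ω, 0 ≤ X i ω) {F : Finset ι}
    {T : ι → ℝ} (hT : ∀ i ω, X i ω ≤ T i) {l η M : ℝ} (hl : 0 ≤ l) (hη0 : 0 ≤ η) (hη : η ≤ 1)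
    (hlT : ∀ i ∈ F, l * T i ≤ η) (hM : ∑ i ∈ F, ∫ ω, X i ω ∂μ ≤ M) (a : ℝ) :
    μ {ω | a ≤ ∑ i ∈ F, X i ω} ≤ ENNReal.ofReal (Real.exp (-(l * (a - (1 + η) * M)))) := by
  have hint : Integrable (fun ω => Real.exp (l * (∑ i ∈ F, X i) ω)) μ := by
    refine hind.integrable_exp_mul_sum hX fun i _ => ?_
    refine .of_bound ((hX i).const_mul l).exp.aestronglyMeasurable (Real.exp (l * T i))
      (ae_of_all _ fun ω => ?_)
    rw [Real.norm_of_nonneg (Real.exp_pos _).le]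
    exact Real.exp_le_exp.mpr (mul_le_mul_of_nonneg_left (hT i ω) hl)
  have hmgf : mgf (∑ i ∈ F, X i) μ l ≤ Real.exp (l * ((1 + η) * M)) :=
    calc mgf (∑ i ∈ F, X i) μ l = ∏ i ∈ F, mgf (X i) μ l := hind.mgf_sum hX F
      _ ≤ ∏ i ∈ F, Real.exp (l * ((1 + η) * ∫ ω, X i ω ∂μ)) :=
        Finset.prod_le_prod (fun i _ => mgf_nonneg) fun i hi =>
          mgf_le_exp_mul_integral (hX i) (h0 i) (hT i) hl hη (hlT i hi)
      _ ≤ _ := by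
        rw [← Real.exp_sum, ← Finset.mul_sum, ← Finset.mul_sum]
        gcongr
  have hset : {ω | a ≤ ∑ i ∈ F, X i ω} = {ω | a ≤ (∑ i ∈ F, X i) ω} := by
    simp only [Finset.sum_apply]
  rw [hset, ← ofReal_measureReal]
  refine ENNReal.ofReal_le_ofReal ((measure_ge_le_exp_mul_mgf a hl hint).trans ?_)
  calc Real.exp (-l * a) * mgf (∑ i ∈ F, X i) μ l
      ≤ Real.exp (-l * a) * Real.exp (l * ((1 + η) * M)) := by gcongr
    _ = _ := by rw [← Real.exp_add]; congr 1; ring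

end Chernoff

section LaplaceTransform

variable {Ω : Type*} [MeasurableSpace Ω] {μ : Measure Ω} {X : Ω → ℝ}

lemma tendsto_mul_one_sub_exp_neg_div (x : ℝ) :
    Tendsto (fun n : ℕ => (n + 1 : ℝ) * (1 - Real.exp (-(1 / (n + 1 : ℝ) * x)))) atTop (𝓝 x) := by
  have hderiv : HasDerivAt (fun u : ℝ => -Real.exp (-(u * x))) x 0 := by
    have h := ((hasDerivAt_id (0 : ℝ)).mul_const x).fun_neg.exp.fun_neg
    simpa using h
  have hinv : Tendsto (fun n : ℕ => 1 / ((n : ℝ) + 1)) atTop (𝓝[>] 0) :=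
    tendsto_nhdsWithin_iff.mpr ⟨tendsto_one_div_add_atTop_nhds_zero_nat,
      Eventually.of_forall fun n => by simp only [mem_Ioi]; positivity⟩
  refine (hderiv.tendsto_slope_zero_right.comp hinv).congr fun n => ?_
  simp only [Function.comp, zero_add, one_div, inv_inv, smul_eq_mul, zero_mul, neg_zero,
    Real.exp_zero]
  ring

lemma tendsto_integral_mul_one_sub_exp_neg_div (hX : Integrable X μ) (h0 : ∀ ω, 0 ≤ X ω) :
    Tendsto (fun n : ℕ => ∫ ω, (n + 1 : ℝ) * (1 - Real.exp (-(1 / (n + 1 : ℝ) * X ω))) ∂μ)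
      atTop (𝓝 (∫ ω, X ω ∂μ)) := by
  refine tendsto_integral_of_dominated_convergence X (fun n => ?_) hX
    (fun n => ae_of_all _ fun ω => ?_)
    (ae_of_all _ fun ω => tendsto_mul_one_sub_exp_neg_div (X ω))
  · have hcont : Continuous fun x : ℝ =>
        (n + 1 : ℝ) * (1 - Real.exp (-(1 / (n + 1 : ℝ) * x))) := by fun_prop
    exact hcont.comp_aestronglyMeasurable hX.aestronglyMeasurable
  · have harg : 0 ≤ 1 / (n + 1 : ℝ) * X ω := mul_nonneg (by positivity) (h0 ω)
    have hle_one := Real.exp_le_one_iff.mpr (neg_nonpos.mpr harg)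
    rw [Real.norm_of_nonneg (mul_nonneg (by positivity) (by linarith))]
    calc (n + 1 : ℝ) * (1 - Real.exp (-(1 / (n + 1 : ℝ) * X ω)))
        ≤ (n + 1 : ℝ) * (1 / (n + 1 : ℝ) * X ω) := by
          gcongr
          linarith [Real.add_one_le_exp (-(1 / (n + 1 : ℝ) * X ω))]
      _ = X ω := by field_simp

lemma integrable_exp_neg_mul [IsFiniteMeasure μ] (hX : AEStronglyMeasurable X μ)
    (h0 : ∀ ω, 0 ≤ X ω) {θ : ℝ} (hθ : 0 ≤ θ) :
    Integrable (fun ω => Real.exp (-(θ * X ω))) μ := by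
  have hcont : Continuous fun x : ℝ => Real.exp (-(θ * x)) := by fun_prop
  refine .of_bound (hcont.comp_aestronglyMeasurable hX) 1 (ae_of_all _ fun ω => ?_)
  rw [Real.norm_of_nonneg (Real.exp_pos _).le]
  exact Real.exp_le_one_iff.mpr (neg_nonpos.mpr (mul_nonneg hθ (h0 ω)))

lemma exists_integral_exp_neg_mul_le [IsProbabilityMeasure μ] (hX : Integrable X μ)
    (h0 : ∀ ω, 0 ≤ X ω) {δ : ℝ} (hδ : 0 < δ) :
    ∃ θ > 0, ∫ ω, Real.exp (-(θ * X ω)) ∂μ ≤ 1 - θ * ((∫ ω, X ω ∂μ) - δ) := by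
  obtain ⟨n, hn⟩ := ((tendsto_integral_mul_one_sub_exp_neg_div hX h0).eventually
    (lt_mem_nhds (sub_lt_self (∫ ω, X ω ∂μ) hδ))).exists
  refine ⟨1 / (n + 1 : ℝ), by positivity, ?_⟩
  rw [integral_const_mul, integral_sub (integrable_const _)
    (integrable_exp_neg_mul hX.aestronglyMeasurable h0 (by positivity))] at hn
  simp only [integral_const, probReal_univ, smul_eq_mul, mul_one] at hn
  have hdiv : 1 / (n + 1 : ℝ) * ((∫ ω, X ω ∂μ) - δ)
      ≤ 1 - ∫ ω, Real.exp (-(1 / (n + 1 : ℝ) * X ω)) ∂μ := by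
    rw [one_div, inv_mul_le_iff₀ (by positivity)]
    simpa only [one_div] using hn.le
  linarith

end LaplaceTransform

lemma ae_eventually_notMem_of_summable {Ω : Type*} [MeasurableSpace Ω] {μ : Measure Ω}
    {bad : ℕ → Set Ω} {f : ℕ → ℝ} (hf : Summable f)
    (h : ∀ᶠ n in atTop, μ (bad n) ≤ ENNReal.ofReal (f n)) :
    ∀ᵐ ω ∂μ, ∀ᶠ n in atTop, ω ∉ bad n := by
  obtain ⟨n₀, hn₀⟩ := eventually_atTop.mp h
  have hsum : ∑' n, μ (bad (n + n₀)) ≠ ⊤ :=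
    ne_top_of_le_ne_top ((summable_nat_add_iff n₀).mpr hf).tsum_ofReal_ne_top
      (ENNReal.tsum_le_tsum fun n => hn₀ _ (Nat.le_add_left _ _))
  filter_upwards [ae_eventually_notMem hsum] with ω hω
  rwa [← map_add_atTop_eq_nat n₀, eventually_map]

lemma summable_rpow_mul_exp_neg_mul_rpow (k : ℝ) {c κ : ℝ} (hc : 0 < c) (hκ : 0 < κ) :
    Summable fun n : ℕ => (n : ℝ) ^ k * Real.exp (-(c * (n : ℝ) ^ κ)) := by
  have hκn : Tendsto (fun n : ℕ => (n : ℝ) ^ κ) atTop atTop :=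
    (tendsto_rpow_atTop hκ).comp tendsto_natCast_atTop_atTop
  have hdecay := ((isLittleO_exp_neg_mul_rpow_atTop hc (-((k + 2) / κ))).comp_tendsto hκn).bound
    one_pos
  refine Summable.of_norm_bounded_eventually_nat (g := fun n : ℕ => (n : ℝ) ^ (-2 : ℝ))
    (Real.summable_nat_rpow.mpr (by norm_num)) ?_
  filter_upwards [hdecay, eventually_ge_atTop 1] with n hn hn1
  have hn0 : (0 : ℝ) < n := by exact_mod_cast hn1
  simp only [Function.comp, one_mul] at hn
  rw [Real.norm_of_nonneg (Real.exp_pos _).le, Real.norm_of_nonneg (by positivity),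
    ← Real.rpow_mul hn0.le, neg_mul] at hn
  rw [Real.norm_of_nonneg (by positivity)]
  calc (n : ℝ) ^ k * Real.exp (-(c * (n : ℝ) ^ κ))
      ≤ (n : ℝ) ^ k * (n : ℝ) ^ (κ * -((k + 2) / κ)) := by gcongr
    _ = _ := by
        rw [← Real.rpow_add hn0]
        congr 1
        field_simp
        ring

lemma ae_eventually_forall_mem_latticeBox_notMem {d : ℕ} {Ω : Type*} [MeasurableSpace Ω]
    {μ : Measure Ω} {A : ℕ → (Fin d → ℤ) → Set Ω} {j : ℕ} {c κ : ℝ} (hc : 0 < c) (hκ : 0 < κ)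
    (h : ∀ᶠ n : ℕ in atTop, ∀ x ∈ latticeBox d (n ^ j),
      μ (A n x) ≤ ENNReal.ofReal (Real.exp (-(c * (n : ℝ) ^ κ)))) :
    ∀ᵐ ω ∂μ, ∀ᶠ n : ℕ in atTop, ∀ x ∈ latticeBox d (n ^ j), ω ∉ A n x := by
  have hbad : ∀ᶠ n : ℕ in atTop, μ (⋃ x ∈ latticeBox d (n ^ j), A n x) ≤ ENNReal.ofReal
      (3 ^ d * ((n : ℝ) ^ ((j * d : ℕ) : ℝ) * Real.exp (-(c * (n : ℝ) ^ κ)))) := by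
    filter_upwards [h, eventually_ge_atTop 1] with n hn hn1
    have hn1 : (1 : ℝ) ≤ (n : ℝ) ^ j := one_le_pow₀ (by exact_mod_cast hn1)
    refine (measure_biUnion_finset_le _ _).trans ((Finset.sum_le_sum hn).trans ?_)
    rw [Finset.sum_const, card_latticeBox, nsmul_eq_mul, ← ENNReal.ofReal_natCast,
      ← ENNReal.ofReal_mul (by positivity), ← mul_assoc, Real.rpow_natCast, pow_mul, ← mul_pow]
    push_cast
    gcongr
    linarith
  filter_upwards [ae_eventually_notMem_of_summable
    ((summable_rpow_mul_exp_neg_mul_rpow _ hc hκ).mul_left _) hbad] with ω hω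
  filter_upwards [hω] with n hn x hx hmem
  exact hn (mem_biUnion (by exact_mod_cast hx) hmem)

namespace IsScenery

variable {d : ℕ} {α : ℝ} {Ωz : Type*} [MeasurableSpace Ωz] {μ : Measure Ωz}
  {z : (Fin d → ℤ) → Ωz → ℝ}

lemma exists_forall_measure_lt_le_rpow (hz : IsScenery d α μ z) {β : ℝ} (hβ : β < α) :
    ∃ r₀ : ℝ, 0 < r₀ ∧ ∀ r, r₀ ≤ r → μ {ζ | r < z 0 ζ} ≤ ENNReal.ofReal (r ^ (-β)) := by
  have := hz.prob
  refine ((eventually_gt_atTop 0).and (eventually_forall_ge_atTop.mpr ?_)).exists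
  filter_upwards [hz.tail.eventually (gt_mem_nhds (neg_lt_neg hβ)), eventually_gt_atTop 1]
    with r hlog hr
  rw [← ENNReal.ofReal_toReal (measure_ne_top μ {ζ | r < z 0 ζ})]
  apply ENNReal.ofReal_le_ofReal
  rcases (ENNReal.toReal_nonneg (a := μ {ζ | r < z 0 ζ})).eq_or_lt with h0 | hpos
  · rw [← h0]
    positivity
  · rw [div_lt_iff₀ (Real.log_pos hr)] at hlog
    rw [Real.rpow_def_of_pos (by linarith), ← Real.exp_log hpos]
    exact Real.exp_le_exp.mpr (by linarith)

lemma eventually_measure_lt_ne_zero (hz : IsScenery d α μ z) (hα : 0 < α) :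
    ∀ᶠ r : ℝ in atTop, μ {ζ | r < z 0 ζ} ≠ 0 := by
  filter_upwards [hz.tail.eventually (gt_mem_nhds (neg_lt_zero.mpr hα))] with r hr h0
  simp [h0] at hr

lemma integrable (hz : IsScenery d α μ z) (hα : 1 < α) : Integrable (z 0) μ := by
  have := hz.prob
  obtain ⟨β, hβ1, hβ⟩ := exists_between hα
  obtain ⟨r₀, hr₀, htail⟩ := hz.exists_forall_measure_lt_le_rpow hβ
  refine ⟨(hz.meas 0).aestronglyMeasurable, ?_⟩
  rw [hasFiniteIntegral_iff_ofReal (ae_of_all _ (hz.nonneg 0)),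
    lintegral_eq_lintegral_meas_lt μ (ae_of_all _ (hz.nonneg 0)) (hz.meas 0).aemeasurable,
    ← Ioc_union_Ioi_eq_Ioi hr₀.le]
  refine (lintegral_union_le _ _ _).trans_lt (ENNReal.add_lt_top.mpr ⟨?_, ?_⟩)
  · calc _ ≤ ∫⁻ _ in Ioc 0 r₀, 1 := lintegral_mono fun _ => prob_le_one
      _ < _ := by simp
  · calc _ ≤ ∫⁻ r in Ioi r₀, ENNReal.ofReal (r ^ (-β)) :=
          setLIntegral_mono' measurableSet_Ioi fun _ ht => htail _ (le_of_lt ht)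
      _ < _ := by
        refine (hasFiniteIntegral_iff_ofReal ?_).mp
          (integrableOn_Ioi_rpow_of_lt (neg_lt_neg hβ1) hr₀).2
        filter_upwards [self_mem_ae_restrict measurableSet_Ioi] with _ ht
        exact Real.rpow_nonneg (hr₀.trans ht).le _

lemma integral_pos (hz : IsScenery d α μ z) (hα : 1 < α) : 0 < ∫ ζ, z 0 ζ ∂μ := by
  obtain ⟨r, hr0, hr⟩ := ((eventually_ge_atTop 0).and
    (hz.eventually_measure_lt_ne_zero (one_pos.trans hα))).exists
  rw [integral_pos_iff_support_of_nonneg (hz.nonneg 0) (hz.integrable hα)]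
  refine (pos_iff_ne_zero.mpr hr).trans_le (measure_mono fun ζ hζ => ?_)
  exact (hr0.trans_lt hζ).ne'

lemma ae_exists_le_mul_rpow (hz : IsScenery d α μ z) (hα : 0 < α) {γ : ℝ} (hγ : d / α < γ) :
    ∀ᵐ ζ ∂μ, ∃ K : ℝ, 0 < K ∧ ∀ y, z y ζ ≤ K * (1 + ‖y‖) ^ γ := by
  have hγ0 : 0 < γ := lt_of_le_of_lt (by positivity) hγ
  rw [div_lt_iff₀ hα, ← div_lt_iff₀' hγ0] at hγ
  obtain ⟨β, hdβ, hβ⟩ := exists_between hγ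
  obtain ⟨r₀, hr₀, htail⟩ := hz.exists_forall_measure_lt_le_rpow hβ
  have hone : ∀ y : Fin d → ℤ, 1 ≤ (1 + ‖y‖) ^ γ := fun y =>
    Real.one_le_rpow (by linarith [norm_nonneg y]) hγ0.le
  have hsum : ∑' y : Fin d → ℤ, μ {ζ | r₀ * (1 + ‖y‖) ^ γ < z y ζ} ≠ ⊤ := by
    have hsummable := (summable_one_add_norm_rpow_neg ((div_lt_iff₀' hγ0).mp hdβ)).mul_left
      (r₀ ^ (-β))
    refine ne_top_of_le_ne_top hsummable.tsum_ofReal_ne_top (ENNReal.tsum_le_tsum fun y => ?_)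
    calc μ {ζ | r₀ * (1 + ‖y‖) ^ γ < z y ζ} = μ {ζ | r₀ * (1 + ‖y‖) ^ γ < z 0 ζ} :=
          (hz.ident y).measure_mem_eq measurableSet_Ioi
      _ ≤ ENNReal.ofReal ((r₀ * (1 + ‖y‖) ^ γ) ^ (-β)) :=
          htail _ (le_mul_of_one_le_right hr₀.le (hone y))
      _ = ENNReal.ofReal (r₀ ^ (-β) * (1 + ‖y‖) ^ (-(γ * β))) := by
          rw [Real.mul_rpow hr₀.le (by positivity), ← Real.rpow_mul (by positivity), mul_neg]
  filter_upwards [ae_finite_setOfPred_mem hsum] with ζ hζ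
  obtain ⟨M, hM⟩ := (hζ.image fun y => z y ζ).bddAbove
  refine ⟨max r₀ M, lt_max_of_lt_left hr₀, fun y => ?_⟩
  rcases lt_or_ge (r₀ * (1 + ‖y‖) ^ γ) (z y ζ) with hy | hy
  · calc z y ζ ≤ max r₀ M := (hM ⟨y, hy, rfl⟩).trans (le_max_right _ _)
      _ ≤ _ := le_mul_of_one_le_right (hr₀.le.trans (le_max_left _ _)) (hone y)
  · exact hy.trans (mul_le_mul_of_nonneg_right (le_max_left _ _) (by positivity))

lemma measure_le_sum_mul_comp_le_exp (hz : IsScenery d α μ z) {f : ℝ → ℝ} (hf : Measurable f)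
    {T M W l η : ℝ} (hf0 : ∀ r, 0 ≤ r → 0 ≤ f r) (hfT : ∀ r, 0 ≤ r → f r ≤ T)
    (hM : ∫ ζ, f (z 0 ζ) ∂μ ≤ M) (x : Fin d → ℤ) {F : Finset (Fin d → ℤ)}
    {w : (Fin d → ℤ) → ℝ} (hw : ∀ v, 0 ≤ w v) (hW : ∑ v ∈ F, w v ≤ W) (hl : 0 ≤ l)
    (hη0 : 0 ≤ η) (hη : η ≤ 1) (hlw : ∀ v ∈ F, l * (w v * T) ≤ η) (a : ℝ) :
    μ {ζ | a ≤ ∑ v ∈ F, w v * f (z (x + v) ζ)} ≤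
      ENNReal.ofReal (Real.exp (-(l * (a - (1 + η) * (M * W))))) := by
  have := hz.prob
  have hind : iIndepFun (fun v ζ => w v * f (z (x + v) ζ)) μ :=
    (hz.indep.precomp (add_right_injective x)).comp (fun v r => w v * f r)
      fun v => hf.const_mul _
  refine measure_le_sum_le_exp_of_iIndepFun hind (fun v => (hf.comp (hz.meas _)).const_mul _)
    (fun v ζ => mul_nonneg (hw v) (hf0 _ (hz.nonneg _ ζ))) (T := fun v => w v * T)
    (fun v ζ => mul_le_mul_of_nonneg_left (hfT _ (hz.nonneg _ ζ)) (hw v)) hl hη0 hη hlw ?_ a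
  have hmean : ∀ y, ∫ ζ, f (z y ζ) ∂μ = ∫ ζ, f (z 0 ζ) ∂μ := fun y =>
    ((hz.ident y).comp hf).integral_eq
  calc ∑ v ∈ F, ∫ ζ, w v * f (z (x + v) ζ) ∂μ
      = (∑ v ∈ F, w v) * ∫ ζ, f (z 0 ζ) ∂μ := by
        simp only [integral_const_mul, hmean, Finset.sum_mul]
    _ ≤ W * M := mul_le_mul hW hM (integral_nonneg fun ζ => hf0 _ (hz.nonneg _ ζ))
        ((Finset.sum_nonneg fun v _ => hw v).trans hW)
    _ = M * W := mul_comm _ _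

end IsScenery

/-! ### Averages of the scenery against the walk kernel -/

section LatticeMass

variable {m : ℕ} [NeZero m]

lemma sqrt_mul_latticeKernel_le_one {t : ℝ} (ht : 1 ≤ t) (x : Fin m → ℤ) :
    Real.sqrt t * latticeKernel t x ≤ 1 := by
  have hsqrt : 1 ≤ Real.sqrt t := Real.one_le_sqrt.mpr ht
  have hle : latticeKernel t x ≤ 1 / Real.sqrt t :=
    (latticeKernel_le_pow (one_pos.trans_le ht) x).trans
      (pow_le_of_le_one (by positivity) ((div_le_one (by linarith)).mpr hsqrt) (NeZero.ne m))
  rwa [le_div_iff₀' (by linarith)] at hle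

lemma tendsto_exp_neg_div_sqrt_atTop :
    Tendsto (fun s : ℝ => Real.exp (-(s / Real.sqrt s))) atTop (𝓝 0) := by
  simp only [Real.div_sqrt]
  exact Real.tendsto_exp_neg_atTop_nhds_zero.comp Real.tendsto_sqrt_atTop

end LatticeMass

namespace IsScenery

variable {d : ℕ} [NeZero d] {α : ℝ} {Ωz : Type*} [MeasurableSpace Ωz] {μ : Measure Ωz}
  {z : (Fin d → ℤ) → Ωz → ℝ} {f : ℝ → ℝ}

lemma measure_le_sum_latticeKernel_mul_comp_le_exp (hz : IsScenery d α μ z) (hf : Measurable f)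
    (hf0 : ∀ r, 0 ≤ r → 0 ≤ f r) (hf1 : ∀ r, 0 ≤ r → f r ≤ 1) {s η ε : ℝ} (hs : 1 ≤ s)
    (hη0 : 0 ≤ η) (hη1 : η ≤ 1) (hηε : η ≤ ε) (x : Fin d → ℤ) (F : Finset (Fin d → ℤ)) :
    μ {ζ | ∫ ζ, f (z 0 ζ) ∂μ + 2 * ε ≤ ∑ v ∈ F, latticeKernel s v * f (z (x + v) ζ)}
      ≤ ENNReal.ofReal (Real.exp (-(η * ε * Real.sqrt s))) := by
  have := hz.prob
  have hs0 : 0 ≤ s := zero_le_one.trans hs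
  have hmean : ∫ ζ, f (z 0 ζ) ∂μ ≤ 1 := by
    simpa using integral_mono_of_nonneg (μ := μ) (ae_of_all _ fun ζ => hf0 _ (hz.nonneg 0 ζ))
      (integrable_const 1) (ae_of_all _ fun ζ => hf1 _ (hz.nonneg 0 ζ))
  refine (hz.measure_le_sum_mul_comp_le_exp hf hf0 hf1 le_rfl x (latticeKernel_nonneg hs0)
    (W := 1) (l := η * Real.sqrt s) (sum_le_hasSum _ (fun v _ => latticeKernel_nonneg hs0 v)
    (hasSum_latticeKernel hs0)) (by positivity) hη0 hη1 (fun v _ => ?_) _).trans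
    (ENNReal.ofReal_le_ofReal (Real.exp_le_exp.mpr (neg_le_neg ?_)))
  · rw [mul_one, mul_assoc]
    exact mul_le_of_le_one_right hη0 (sqrt_mul_latticeKernel_le_one hs v)
  · have hgap : ε ≤ (∫ ζ, f (z 0 ζ) ∂μ) + 2 * ε - (1 + η) * ((∫ ζ, f (z 0 ζ) ∂μ) * 1) := by
      nlinarith
    calc η * ε * Real.sqrt s = η * Real.sqrt s * ε := by ring
      _ ≤ _ := by gcongr

lemma ae_eventually_sum_latticeBox_le (hz : IsScenery d α μ z) (hf : Measurable f)
    (hf0 : ∀ r, 0 ≤ r → 0 ≤ f r) (hf1 : ∀ r, 0 ≤ r → f r ≤ 1) {ε : ℝ} (hε : 0 < ε) :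
    ∀ᵐ ζ ∂μ, ∀ᶠ s : ℕ in atTop, ∀ x ∈ latticeBox d (s ^ 2),
      ∑ v ∈ latticeBox d s, latticeKernel s v * f (z (x + v) ζ)
        ≤ ∫ ζ, f (z 0 ζ) ∂μ + 2 * ε := by
  obtain ⟨η, hη0, hη⟩ := exists_between (lt_min one_pos hε)
  have hprob : ∀ᶠ s : ℕ in atTop, ∀ x ∈ latticeBox d (s ^ 2),
      μ {ζ | ∫ ζ, f (z 0 ζ) ∂μ + 2 * ε ≤
          ∑ v ∈ latticeBox d s, latticeKernel s v * f (z (x + v) ζ)}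
        ≤ ENNReal.ofReal (Real.exp (-(η * ε * (s : ℝ) ^ (1 / 2 : ℝ)))) := by
    filter_upwards [eventually_ge_atTop 1] with s hs x _
    rw [← Real.sqrt_eq_rpow]
    exact hz.measure_le_sum_latticeKernel_mul_comp_le_exp hf hf0 hf1 (by exact_mod_cast hs)
      hη0.le (hη.le.trans (min_le_left _ _)) (hη.le.trans (min_le_right _ _)) x _
  filter_upwards [ae_eventually_forall_mem_latticeBox_notMem (mul_pos hη0 hε) one_half_pos hprob]
    with ζ hζ
  filter_upwards [hζ] with s hs x hx
  exact (not_le.mp (hs x hx)).le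

-- Truncating the kernel to a box costs only its tail mass, because `f` is bounded.
theorem ae_eventually_tsum_latticeMass_mul_comp_le (hz : IsScenery d α μ z) (hf : Measurable f)
    (hf0 : ∀ r, 0 ≤ r → 0 ≤ f r) (hf1 : ∀ r, 0 ≤ r → f r ≤ 1) {ε : ℝ} (hε : 0 < ε) :
    ∀ᵐ ζ ∂μ, ∀ᶠ s : ℕ in atTop, ∀ x ∈ latticeBox d (s ^ 2),
      ∑' y, latticeMass s (y - x) * ENNReal.ofReal (f (z y ζ))
        ≤ ENNReal.ofReal (∫ ζ, f (z 0 ζ) ∂μ + ε) := by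
  have hfar : ∀ᶠ s : ℕ in atTop,
      2 * d * Real.exp 2 * Real.exp (-((s : ℝ) / Real.sqrt s)) ≤ ε / 3 := by
    have hlim := (tendsto_exp_neg_div_sqrt_atTop.comp tendsto_natCast_atTop_atTop).const_mul
      (2 * d * Real.exp 2)
    rw [mul_zero] at hlim
    exact hlim.eventually (ge_mem_nhds (by linarith))
  filter_upwards [hz.ae_eventually_sum_latticeBox_le hf hf0 hf1 (show 0 < ε / 3 by linarith)]
    with ζ hζ
  filter_upwards [hζ, hfar, eventually_ge_atTop 1] with s hbox hs hs1 x hx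
  have hs1' : (1 : ℝ) ≤ s := by exact_mod_cast hs1
  have hs0 : (0 : ℝ) ≤ s := zero_le_one.trans hs1'
  have hmean : 0 ≤ ∫ ζ, f (z 0 ζ) ∂μ := integral_nonneg fun ζ => hf0 _ (hz.nonneg 0 ζ)
  rw [← (Equiv.addLeft x).tsum_eq]
  simp only [Equiv.coe_addLeft, add_sub_cancel_left]
  refine (tsum_le_sum_latticeBox_add s _).trans ?_
  rw [show ∫ ζ, f (z 0 ζ) ∂μ + ε = (∫ ζ, f (z 0 ζ) ∂μ + 2 * (ε / 3)) + ε / 3 by ring,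
    ENNReal.ofReal_add (by positivity) (by positivity)]
  refine add_le_add ?_ ?_
  · have hterm : ∀ v, 0 ≤ latticeKernel s v * f (z (x + v) ζ) := fun v =>
      mul_nonneg (latticeKernel_nonneg hs0 v) (hf0 _ (hz.nonneg _ ζ))
    simp only [latticeMass, ← ENNReal.ofReal_mul (latticeKernel_nonneg hs0 _)]
    rw [← ENNReal.ofReal_sum_of_nonneg fun v _ => hterm v]
    exact ENNReal.ofReal_le_ofReal (hbox x hx)
  · refine (ENNReal.tsum_le_tsum fun v => indicator_le_indicator ?_).trans
      ((tsum_indicator_farSet_latticeMass_le s hs1' hs0 le_rfl).trans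
        (ENNReal.ofReal_le_ofReal hs))
    exact mul_le_of_le_one_right' (ENNReal.ofReal_le_one.mpr (hf1 _ (hz.nonneg _ ζ)))

end IsScenery

/-! ### Occupation times -/

section Occupation

variable {m : ℕ} {t : ℝ}

/-- The expected time spent at `y` up to time `t` by the walk started at `0`, on the event that
it is at `x` at time `t`. -/
noncomputable def bridgeOccupation (t : ℝ) (x y : Fin m → ℤ) : ℝ≥0∞ :=
  ∫⁻ u in Ioc (0 : ℝ) t, latticeMass u y * latticeMass (t - u) (x - y)

/-- The expected time spent at `y` up to time `t` by the walk started at `0`. -/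
noncomputable def occupation (t : ℝ) (y : Fin m → ℤ) : ℝ≥0∞ :=
  ∫⁻ u in Ioc (0 : ℝ) t, latticeMass u y

lemma measurable_latticeMass_mul_latticeMass (t : ℝ) (x y : Fin m → ℤ) :
    Measurable fun u => latticeMass u y * latticeMass (t - u) (x - y) :=
  (measurable_latticeMass y).mul
    ((measurable_latticeMass (x - y)).comp (measurable_const.sub measurable_id))

lemma one_div_sqrt_pow_eq_rpow (ht : 0 ≤ t) (n : ℕ) :
    (1 / Real.sqrt t) ^ n = t ^ (-(n / 2 : ℝ)) := by
  rw [Real.rpow_neg ht, Real.rpow_div_two_eq_sqrt _ ht, Real.rpow_natCast, one_div, inv_pow]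

lemma latticeKernel_le_rpow_neg [NeZero m] {u s : ℝ} (hu : 0 < u) (hs0 : 0 ≤ s)
    (hs : s ≤ m / 2) (y : Fin m → ℤ) : latticeKernel u y ≤ u ^ (-s) := by
  rcases le_or_gt u 1 with hu1 | hu1
  · exact (latticeKernel_le_one hu.le y).trans
      (Real.one_le_rpow_of_pos_of_le_one_of_nonpos hu hu1 (by linarith))
  · calc latticeKernel u y ≤ (1 / Real.sqrt u) ^ m := latticeKernel_le_pow hu y
      _ = u ^ (-(m / 2 : ℝ)) := one_div_sqrt_pow_eq_rpow hu.le m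
      _ ≤ u ^ (-s) := Real.rpow_le_rpow_of_exponent_le hu1.le (by linarith)

variable [NeZero m]

lemma tsum_bridgeOccupation (t : ℝ) (x : Fin m → ℤ) :
    ∑' y, bridgeOccupation t x y = ENNReal.ofReal t * latticeMass t x := by
  calc ∑' y, bridgeOccupation t x y
      = ∫⁻ u in Ioc (0 : ℝ) t, ∑' y, latticeMass u y * latticeMass (t - u) (x - y) :=
        (lintegral_tsum fun y => (measurable_latticeMass_mul_latticeMass t x y).aemeasurable).symm
    _ = ∫⁻ _ in Ioc (0 : ℝ) t, latticeMass t x := by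
        refine setLIntegral_congr_fun measurableSet_Ioc fun u hu => ?_
        simp only [tsum_latticeMass_mul_latticeMass hu.1.le (sub_nonneg.mpr hu.2),
          add_sub_cancel]
    _ = _ := by rw [setLIntegral_const, Real.volume_Ioc, sub_zero, mul_comm]

lemma latticeMass_le_exp_mul_latticeMass_add {h : ℝ} (ht : 0 ≤ t) (hh : 0 ≤ h)
    (x : Fin m → ℤ) :
    latticeMass t x ≤ ENNReal.ofReal (Real.exp (2 * m * h)) * latticeMass (t + h) x := by
  rw [latticeMass, latticeMass, ← ENNReal.ofReal_mul (Real.exp_pos _).le]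
  apply ENNReal.ofReal_le_ofReal
  rw [← inv_mul_le_iff₀ (Real.exp_pos _), ← Real.exp_neg]
  exact exp_neg_mul_latticeKernel_le ht hh x

lemma bridgeOccupation_le_exp_mul {h : ℝ} (hh : 0 ≤ h) (x y : Fin m → ℤ) :
    bridgeOccupation t x y
      ≤ ENNReal.ofReal (Real.exp (2 * m * h)) * bridgeOccupation (t + h) x y := by
  unfold bridgeOccupation
  rw [← lintegral_const_mul _ (measurable_latticeMass_mul_latticeMass (t + h) x y)]
  refine (setLIntegral_mono' measurableSet_Ioc fun u hu => ?_).trans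
    (lintegral_mono_set (Ioc_subset_Ioc_right (le_add_of_nonneg_right hh)))
  rw [mul_left_comm, add_sub_right_comm]
  gcongr
  exact latticeMass_le_exp_mul_latticeMass_add (sub_nonneg.mpr hu.2) hh _

lemma bridgeOccupation_le_occupation (t : ℝ) (x y : Fin m → ℤ) :
    bridgeOccupation t x y ≤ occupation t y :=
  setLIntegral_mono' measurableSet_Ioc fun _ hu =>
    mul_le_of_le_one_right' (latticeMass_le_one (sub_nonneg.mpr hu.2) _)

-- The factor carrying the larger of the two times is at most `(t / 2) ^ (-m / 2)`.
lemma latticeKernel_mul_latticeKernel_le {s u : ℝ} (hs0 : 0 ≤ s) (hs : s ≤ m / 2)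
    (hu : u ∈ Ioo 0 t) (x y : Fin m → ℤ) :
    latticeKernel u y * latticeKernel (t - u) (x - y)
      ≤ (t / 2) ^ (-(m / 2 : ℝ)) * (u ^ (-s) + (t - u) ^ (-s)) := by
  have hu0 := hu.1
  have htu : 0 < t - u := sub_pos.mpr hu.2
  have hB : ∀ v : ℝ, t / 2 ≤ v → ∀ w : Fin m → ℤ,
      latticeKernel v w ≤ (t / 2) ^ (-(m / 2 : ℝ)) := fun v hv w =>
    (latticeKernel_le_rpow_neg (by linarith) (by positivity) le_rfl w).trans
      (Real.rpow_le_rpow_of_nonpos (by linarith) hv (by simp only [neg_nonpos]; positivity))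
  have hB0 : 0 ≤ (t / 2) ^ (-(m / 2 : ℝ)) := Real.rpow_nonneg (by linarith) _
  have hpos_left : 0 ≤ u ^ (-s) := by positivity
  have hpos_right : 0 ≤ (t - u) ^ (-s) := by positivity
  rcases le_total (t / 2) u with hc | hc
  · calc latticeKernel u y * latticeKernel (t - u) (x - y)
        ≤ (t / 2) ^ (-(m / 2 : ℝ)) * (t - u) ^ (-s) :=
          mul_le_mul (hB u hc y) (latticeKernel_le_rpow_neg htu hs0 hs _)
            (latticeKernel_nonneg htu.le _) hB0
      _ ≤ _ := by gcongr; linarith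
  · calc latticeKernel u y * latticeKernel (t - u) (x - y)
        ≤ u ^ (-s) * (t / 2) ^ (-(m / 2 : ℝ)) :=
          mul_le_mul (latticeKernel_le_rpow_neg hu0 hs0 hs y) (hB _ (by linarith) _)
            (latticeKernel_nonneg htu.le _) hpos_left
      _ ≤ _ := by rw [mul_comm]; gcongr; linarith

lemma lintegral_rpow_neg_add_sub_rpow_neg {s B : ℝ} (hs : s < 1) (hB : 0 ≤ B) (ht : 0 ≤ t) :
    ∫⁻ u in Ioc (0 : ℝ) t, ENNReal.ofReal (B * (u ^ (-s) + (t - u) ^ (-s)))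
      = ENNReal.ofReal (B * (2 * (t ^ (1 - s) / (1 - s)))) := by
  have hint : IntervalIntegrable (fun u : ℝ => u ^ (-s)) volume 0 t :=
    intervalIntegral.intervalIntegrable_rpow' (by linarith)
  have hint_sub : IntervalIntegrable (fun u : ℝ => (t - u) ^ (-s)) volume 0 t := by
    simpa only [sub_zero, sub_self] using (hint.comp_sub_left t).symm
  rw [← ofReal_integral_eq_lintegral_ofReal, ← intervalIntegral.integral_of_le ht,
    intervalIntegral.integral_const_mul, intervalIntegral.integral_add hint hint_sub,
    intervalIntegral.integral_comp_sub_left (fun u => u ^ (-s)) t]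
  · simp only [sub_zero, sub_self]
    rw [integral_rpow (Or.inl (by linarith)), Real.zero_rpow (by linarith),
      show -s + 1 = 1 - s by ring]
    ring_nf
  · exact (intervalIntegrable_iff_integrableOn_Ioc_of_le ht).mp
      ((hint.add hint_sub).const_mul B)
  · filter_upwards [self_mem_ae_restrict measurableSet_Ioc] with u hu
    have hu0 := hu.1
    have htu : 0 ≤ t - u := sub_nonneg.mpr hu.2
    simp only [Pi.zero_apply]
    positivity

lemma exists_bridgeOccupation_le {s : ℝ} (hs0 : 0 ≤ s) (hs1 : s < 1) (hs : s ≤ m / 2) :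
    ∃ C > 0, ∀ t : ℝ, 0 < t → ∀ x y : Fin m → ℤ,
      bridgeOccupation t x y ≤ ENNReal.ofReal (C * t ^ (1 - s - m / 2)) := by
  have : 0 < 1 - s := sub_pos.mpr hs1
  refine ⟨2 ^ (m / 2 : ℝ) * (2 / (1 - s)), by positivity, fun t ht x y => ?_⟩
  calc bridgeOccupation t x y
      ≤ ∫⁻ u in Ioc (0 : ℝ) t,
          ENNReal.ofReal ((t / 2) ^ (-(m / 2 : ℝ)) * (u ^ (-s) + (t - u) ^ (-s))) := by
        unfold bridgeOccupation
        rw [← restrict_Ioo_eq_restrict_Ioc]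
        refine setLIntegral_mono' measurableSet_Ioo fun u hu => ?_
        rw [latticeMass, latticeMass, ← ENNReal.ofReal_mul (latticeKernel_nonneg hu.1.le y)]
        exact ENNReal.ofReal_le_ofReal (latticeKernel_mul_latticeKernel_le hs0 hs hu x y)
    _ = ENNReal.ofReal ((t / 2) ^ (-(m / 2 : ℝ)) * (2 * (t ^ (1 - s) / (1 - s)))) :=
        lintegral_rpow_neg_add_sub_rpow_neg hs1 (by positivity) ht.le
    _ = _ := by
        congr 1
        rw [div_eq_mul_inv t, Real.mul_rpow ht.le (by norm_num), Real.inv_rpow (by norm_num),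
          Real.rpow_neg (by norm_num : (0 : ℝ) ≤ 2), inv_inv,
          show 1 - s - m / 2 = -(m / 2 : ℝ) + (1 - s) by ring, Real.rpow_add ht]
        ring

end Occupation

namespace IsScenery

variable {d : ℕ} {α : ℝ} {Ωz : Type*} [MeasurableSpace Ωz] {μ : Measure Ωz}
  {z : (Fin d → ℤ) → Ωz → ℝ}

lemma lintegral_ofReal_eq (hz : IsScenery d α μ z) (hα : 1 < α) (y : Fin d → ℤ) :
    ∫⁻ ζ, ENNReal.ofReal (z y ζ) ∂μ = ENNReal.ofReal (∫ ζ, z 0 ζ ∂μ) := by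
  rw [ofReal_integral_eq_lintegral_ofReal (hz.integrable hα) (ae_of_all _ (hz.nonneg 0))]
  exact ((hz.ident y).comp ENNReal.measurable_ofReal).lintegral_eq

lemma lintegral_tsum_indicator_occupation_le (hz : IsScenery d α μ z) (hα : 1 < α) {t : ℝ}
    {A : Set (Fin d → ℤ)} {b : ℝ≥0∞}
    (hb : ∀ u ∈ Ioc (0 : ℝ) t, ∑' y, A.indicator (latticeMass u) y ≤ b) :
    ∫⁻ ζ, ∑' y, A.indicator (fun y => occupation t y * ENNReal.ofReal (z y ζ)) y ∂μ
      ≤ ENNReal.ofReal (∫ ζ, z 0 ζ ∂μ) * (b * ENNReal.ofReal t) := by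
  simp only [← tsum_subtype A] at hb ⊢
  have hswap : ∑' y : A, occupation t (y : Fin d → ℤ)
      = ∫⁻ u in Ioc (0 : ℝ) t, ∑' y : A, latticeMass u (y : Fin d → ℤ) :=
    (lintegral_tsum fun y : A => (measurable_latticeMass (y : Fin d → ℤ)).aemeasurable).symm
  have hmean : ∀ y : A, ∫⁻ ζ, occupation t (y : Fin d → ℤ) * ENNReal.ofReal (z y ζ) ∂μ
      = ENNReal.ofReal (∫ ζ, z 0 ζ ∂μ) * occupation t (y : Fin d → ℤ) := fun y => by
    rw [lintegral_const_mul _ (hz.meas y).ennreal_ofReal, hz.lintegral_ofReal_eq hα, mul_comm]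
  rw [lintegral_tsum fun y : A => ((hz.meas y).ennreal_ofReal.const_mul _).aemeasurable,
    tsum_congr hmean, ENNReal.tsum_mul_left, hswap]
  gcongr
  exact (setLIntegral_mono' measurableSet_Ioc hb).trans_eq
    (by rw [setLIntegral_const, Real.volume_Ioc, sub_zero])

lemma ae_tsum_occupation_mul_ne_top [NeZero d] (hz : IsScenery d α μ z) (hα : 1 < α) :
    ∀ᵐ ζ ∂μ, ∀ t : ℝ, ∑' y, occupation t y * ENNReal.ofReal (z y ζ) ≠ ⊤ := by
  have hnat : ∀ n : ℕ, ∀ᵐ ζ ∂μ, ∑' y, occupation n y * ENNReal.ofReal (z y ζ) < ⊤ := by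
    intro n
    have hbound := hz.lintegral_tsum_indicator_occupation_le hα (t := n) (A := univ) (b := 1)
      fun u hu => by simp only [indicator_univ]; exact (tsum_latticeMass hu.1.le).le
    simp only [indicator_univ] at hbound
    exact ae_lt_top (Measurable.tsum fun y => (hz.meas y).ennreal_ofReal.const_mul _)
      (ne_top_of_le_ne_top (by finiteness) hbound)
  filter_upwards [ae_all_iff.mpr hnat] with ζ hζ t
  obtain ⟨n, hn⟩ := exists_nat_ge t
  refine ne_top_of_le_ne_top (hζ n).ne (ENNReal.tsum_le_tsum fun y => ?_)
  gcongr
  exact lintegral_mono_set (Ioc_subset_Ioc_right hn)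

end IsScenery

/-! ### Upper bounds for the clock of the bridge -/

section BridgeOccupation

variable {m : ℕ} [NeZero m] {t : ℝ}

lemma bridgeOccupation_ne_top (t : ℝ) (x y : Fin m → ℤ) : bridgeOccupation t x y ≠ ⊤ := by
  refine ne_top_of_le_ne_top ?_ (ENNReal.le_tsum y)
  rw [tsum_bridgeOccupation]
  exact ENNReal.mul_ne_top ENNReal.ofReal_ne_top ENNReal.ofReal_ne_top

lemma sum_toReal_bridgeOccupation_le (ht : 0 ≤ t) (x : Fin m → ℤ) (F : Finset (Fin m → ℤ)) :
    ∑ y ∈ F, (bridgeOccupation t x y).toReal ≤ t * latticeKernel t x := by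
  rw [← ENNReal.toReal_sum fun y _ => bridgeOccupation_ne_top t x y]
  refine ENNReal.toReal_le_of_le_ofReal (mul_nonneg ht (latticeKernel_nonneg ht x)) ?_
  rw [ENNReal.ofReal_mul ht]
  exact (ENNReal.sum_le_tsum F).trans (tsum_bridgeOccupation t x).le

end BridgeOccupation

lemma eventually_mul_two_add_rpow_rpow_le {K b γ τ : ℝ} (hK : 0 ≤ K) (hb : 0 ≤ b) (hγ : 0 ≤ γ)
    (h : b * γ < τ) : ∀ᶠ t : ℝ in atTop, K * (2 + t ^ b) ^ γ ≤ t ^ τ := by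
  filter_upwards [(tendsto_rpow_atTop (sub_pos.mpr h)).eventually_ge_atTop (K * 3 ^ γ),
    eventually_ge_atTop 1] with t ht ht1
  have hb1 : 1 ≤ t ^ b := Real.one_le_rpow ht1 hb
  have ht0 : 0 < t := one_pos.trans_le ht1
  calc K * (2 + t ^ b) ^ γ ≤ K * (3 * t ^ b) ^ γ := by gcongr; linarith
    _ = K * 3 ^ γ * t ^ (b * γ) := by
      rw [Real.mul_rpow (by norm_num) (by positivity), ← Real.rpow_mul ht0.le, mul_assoc]
    _ ≤ t ^ (τ - b * γ) * t ^ (b * γ) := by gcongr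
    _ = t ^ τ := by rw [← Real.rpow_add ht0, sub_add_cancel]

lemma tendsto_sqrt_natCast_atTop : Tendsto (fun k : ℕ => Real.sqrt k) atTop atTop :=
  Real.tendsto_sqrt_atTop.comp tendsto_natCast_atTop_atTop

lemma eventually_mul_sqrt_sqrt_natCast_le (R : ℝ) :
    ∀ᶠ k : ℕ in atTop, R * Real.sqrt (Real.sqrt k) ≤ k := by
  filter_upwards [tendsto_sqrt_natCast_atTop.eventually_ge_atTop (max R 1)] with k hk
  obtain ⟨hR, h1⟩ := max_le_iff.mp hk
  calc R * Real.sqrt (Real.sqrt k) ≤ Real.sqrt k * Real.sqrt k := by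
        gcongr
        exact Real.sqrt_le_self_iff.mpr (Or.inr (Real.one_le_sqrt.mp h1))
    _ = k := Real.mul_self_sqrt k.cast_nonneg

-- The scenery is truncated at `t ^ τ`, the lattice at radius `t ^ b`, slightly larger than `√t`.
lemma exists_truncation_exponents {d : ℕ} [NeZero d] {α : ℝ} (hα : max ((d : ℝ) / 2) 1 < α) :
    ∃ γ s τ b : ℝ, d / α < γ ∧ 0 < γ ∧ τ < s ∧ 0 ≤ s ∧ s < 1 ∧ s ≤ d / 2 ∧ 1 / 2 < b
      ∧ b * γ < τ := by
  obtain ⟨hα2, hα1⟩ := max_lt_iff.mp hα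
  have hd : (0 : ℝ) < d := by exact_mod_cast NeZero.pos d
  have hα0 : 0 < α := one_pos.trans hα1
  obtain ⟨γ, hγ1, hγ⟩ := exists_between (show (d : ℝ) / α < min 2 (d : ℝ) by
    rw [lt_min_iff, div_lt_iff₀ hα0, div_lt_iff₀ hα0]
    constructor <;> nlinarith)
  obtain ⟨hγ2, hγd⟩ := lt_min_iff.mp hγ
  have hγ0 : 0 < γ := (div_pos hd hα0).trans hγ1
  obtain ⟨s, hs, hs1⟩ := exists_between (show γ / 2 < min 1 ((d : ℝ) / 2) by
    rw [lt_min_iff]; constructor <;> linarith)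
  obtain ⟨hs1, hsd⟩ := lt_min_iff.mp hs1
  obtain ⟨τ, hτ, hτs⟩ := exists_between hs
  obtain ⟨b, hb, hbτ⟩ := exists_between (show 1 / 2 < τ / γ by rw [lt_div_iff₀ hγ0]; linarith)
  exact ⟨γ, s, τ, b, hγ1, hγ0, hτs, by linarith, hs1, hsd.le, hb, (lt_div_iff₀ hγ0).mp hbτ⟩

lemma mul_rpow_sub_le_div_mul {η δ c₀ C s τ a t p : ℝ} (ht : 0 < t) (hη : 0 ≤ η) (hδ : 0 ≤ δ)
    (hC : 0 < C) (hp : c₀ * t ^ (-a) ≤ p) :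
    η * δ * c₀ / C * t ^ (s - τ) ≤ η / (C * t ^ (1 - s - a) * t ^ τ) * (δ * (t * p)) := by
  have hexp : t ^ (s - τ) * (t ^ (1 - s - a) * t ^ τ) = t * t ^ (-a) := by
    nth_rw 4 [← Real.rpow_one t]
    rw [← Real.rpow_add ht, ← Real.rpow_add ht, ← Real.rpow_add ht]
    ring_nf
  calc η * δ * c₀ / C * t ^ (s - τ)
      = η / (C * t ^ (1 - s - a) * t ^ τ) * (δ * (t * (c₀ * t ^ (-a)))) := by
        rw [mul_left_comm t, ← hexp]
        field_simp
    _ ≤ _ := by gcongr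

lemma le_rpow_of_mem_latticeBox {d : ℕ} {f : (Fin d → ℤ) → ℝ} {K b γ τ t : ℝ} (ht : 0 ≤ t)
    (hK : 0 ≤ K) (hγ : 0 ≤ γ) (hf : ∀ y, f y ≤ K * (1 + ‖y‖) ^ γ)
    (htrunc : K * (2 + t ^ b) ^ γ ≤ t ^ τ) {y : Fin d → ℤ} (hy : y ∈ latticeBox d ⌈t ^ b⌉₊) :
    f y ≤ t ^ τ := by
  have hnorm : ‖y‖ ≤ ⌈t ^ b⌉₊ := (pi_norm_le_iff_of_nonneg (Nat.cast_nonneg _)).mpr fun i => by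
    rw [Int.norm_eq_abs]
    exact mem_latticeBox.mp hy i
  have hceil : (⌈t ^ b⌉₊ : ℝ) < t ^ b + 1 := Nat.ceil_lt_add_one (Real.rpow_nonneg ht b)
  calc f y ≤ K * (1 + ‖y‖) ^ γ := hf y
    _ ≤ K * (2 + t ^ b) ^ γ := by gcongr ?_ * ?_ ^ _; linarith
    _ ≤ t ^ τ := htrunc

lemma eventually_exp_mul_latticeKernel_add_le (d : ℕ) [NeZero d] (R : ℝ) {a b : ℝ} (ha : 0 ≤ a)
    (hab : a < b) :
    ∀ᶠ t : ℝ in atTop, ∀ h ∈ Icc 0 t⁻¹, ∀ x : Fin d → ℤ, (∀ i, |(x i : ℝ)| ≤ R * Real.sqrt t) →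
      Real.exp (2 * d * h) * (a * ((t + h) * latticeKernel (t + h) x))
        ≤ b * (t * latticeKernel t x) := by
  obtain ⟨c₀, hc₀, hlow⟩ := exists_eventually_mul_pow_le_latticeKernel d R
  have hfactor : Tendsto (fun t : ℝ => Real.exp (2 * d * t⁻¹) * a *
      ((1 + t⁻¹) * (1 + 2 * d * t⁻¹ / c₀))) atTop (𝓝 a) := by
    have hcont : Continuous fun h : ℝ =>
        Real.exp (2 * d * h) * a * ((1 + h) * (1 + 2 * d * h / c₀)) := by fun_prop
    simpa [Function.comp_def] using (hcont.tendsto 0).comp tendsto_inv_atTop_zero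
  filter_upwards [hfactor.eventually (ge_mem_nhds hab), hlow, eventually_ge_atTop 1]
    with t hfactor hlow ht1 h ⟨hh0, hht⟩ x hx
  have ht : 0 < t := one_pos.trans_le ht1
  have hp : 0 ≤ latticeKernel t x := latticeKernel_nonneg ht.le x
  have hkernel : latticeKernel (t + h) x ≤ (1 + 2 * d * h / c₀) * latticeKernel t x := by
    calc latticeKernel (t + h) x
        ≤ latticeKernel t x + 2 * d * h * (1 / Real.sqrt t) ^ d := latticeKernel_add_le ht hh0 x
      _ ≤ latticeKernel t x + 2 * d * h * (latticeKernel t x / c₀) := by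
        gcongr
        exact (le_div_iff₀' hc₀).mpr (hlow x hx)
      _ = _ := by ring
  have htime : t + h ≤ (1 + h) * t := by nlinarith
  calc Real.exp (2 * d * h) * (a * ((t + h) * latticeKernel (t + h) x))
      ≤ Real.exp (2 * d * h) *
          (a * ((1 + h) * t * ((1 + 2 * d * h / c₀) * latticeKernel t x))) := by
        have := latticeKernel_nonneg (add_nonneg ht.le hh0) x
        gcongr
    _ = Real.exp (2 * d * h) * a * ((1 + h) * (1 + 2 * d * h / c₀)) * (t * latticeKernel t x) := by
        ring
    _ ≤ Real.exp (2 * d * t⁻¹) * a * ((1 + t⁻¹) * (1 + 2 * d * t⁻¹ / c₀))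
          * (t * latticeKernel t x) := by gcongr
    _ ≤ b * (t * latticeKernel t x) := by gcongr

lemma sqrt_natCeil_sq_mem_Icc {t : ℝ} (ht : 0 < t) :
    Real.sqrt ⌈t ^ 2⌉₊ ∈ Icc t (t + t⁻¹) := by
  refine ⟨Real.le_sqrt_of_sq_le (Nat.le_ceil _), Real.sqrt_le_iff.mpr ⟨by positivity, ?_⟩⟩
  have hceil : (⌈t ^ 2⌉₊ : ℝ) < t ^ 2 + 1 := Nat.ceil_lt_add_one (sq_nonneg t)
  nlinarith [sq_nonneg t⁻¹, mul_inv_cancel₀ ht.ne']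

namespace IsScenery

variable {d : ℕ} [NeZero d] {α : ℝ} {Ωz : Type*} [MeasurableSpace Ωz] {μ : Measure Ωz}
  {z : (Fin d → ℤ) → Ωz → ℝ}

lemma measure_le_sum_bridgeOccupation_mul_min_le_exp (hz : IsScenery d α μ z) (hα : 1 < α)
    {η δ t w T : ℝ} (hη0 : 0 ≤ η) (hη1 : η ≤ 1) (hηδ : η * ∫ ζ, z 0 ζ ∂μ ≤ δ) (ht : 0 ≤ t)
    (hT : 0 < T) (hw0 : 0 < w) {x : Fin d → ℤ}
    (hw : ∀ y, bridgeOccupation t x y ≤ ENNReal.ofReal w) (F : Finset (Fin d → ℤ)) :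
    μ {ζ | ((∫ ζ, z 0 ζ ∂μ) + 2 * δ) * (t * latticeKernel t x)
        ≤ ∑ v ∈ F, (bridgeOccupation t x v).toReal * min (z v ζ) T}
      ≤ ENNReal.ofReal (Real.exp (-(η / (w * T) * (δ * (t * latticeKernel t x))))) := by
  have hmean : ∫ ζ, min (z 0 ζ) T ∂μ ≤ ∫ ζ, z 0 ζ ∂μ :=
    integral_mono_of_nonneg (ae_of_all _ fun ζ => le_min (hz.nonneg _ _) hT.le)
      (hz.integrable hα) (ae_of_all _ fun ζ => min_le_left _ _)
  have hchernoff := hz.measure_le_sum_mul_comp_le_exp (f := fun r => min r T) (by fun_prop)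
    (fun r hr => le_min hr hT.le) (fun r _ => min_le_right r T) hmean 0
    (fun y => ENNReal.toReal_nonneg) (sum_toReal_bridgeOccupation_le ht x F)
    (l := η / (w * T)) (by positivity) hη0 hη1 (fun v _ => ?_)
    (((∫ ζ, z 0 ζ ∂μ) + 2 * δ) * (t * latticeKernel t x))
  · simp only [zero_add] at hchernoff
    refine hchernoff.trans (ENNReal.ofReal_le_ofReal (Real.exp_le_exp.mpr (neg_le_neg ?_)))
    have hp : 0 ≤ t * latticeKernel t x := mul_nonneg ht (latticeKernel_nonneg ht x)
    gcongr
    nlinarith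
  · calc η / (w * T) * ((bridgeOccupation t x v).toReal * T) ≤ η / (w * T) * (w * T) := by
          gcongr
          exact ENNReal.toReal_le_of_le_ofReal hw0.le (hw v)
      _ = η := by field_simp

lemma ae_eventually_sum_bridgeOccupation_mul_min_le (hz : IsScenery d α μ z) (hα : 1 < α)
    {s τ : ℝ} (hs0 : 0 ≤ s) (hs1 : s < 1) (hsd : s ≤ d / 2) (hτs : τ < s) (R : ℝ) {δ : ℝ}
    (hδ : 0 < δ) (L : ℕ → ℕ) :
    ∀ᵐ ζ ∂μ, ∀ᶠ k : ℕ in atTop, ∀ x : Fin d → ℤ,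
      (∀ i, |(x i : ℝ)| ≤ R * Real.sqrt (Real.sqrt k)) →
      ∑ v ∈ latticeBox d (L k), (bridgeOccupation (Real.sqrt k) x v).toReal
          * min (z v ζ) (Real.sqrt k ^ τ)
        ≤ ((∫ ζ, z 0 ζ ∂μ) + 2 * δ) * (Real.sqrt k * latticeKernel (Real.sqrt k) x) := by
  set c := ∫ ζ, z 0 ζ ∂μ
  have hc : 0 < c := hz.integral_pos hα
  obtain ⟨C, hC, hocc⟩ := exists_bridgeOccupation_le (m := d) hs0 hs1 hsd
  obtain ⟨c₀, hc₀, hlow⟩ := exists_eventually_mul_pow_le_latticeKernel d R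
  set η := min 1 (δ / c)
  have hη : 0 < η := lt_min one_pos (div_pos hδ hc)
  have hηδ : η * c ≤ δ := (le_div_iff₀ hc).mp (min_le_right _ _)
  let A : ℕ → (Fin d → ℤ) → Set Ωz := fun k x =>
    {ζ | (∀ i, |(x i : ℝ)| ≤ R * Real.sqrt (Real.sqrt k)) ∧
      (c + 2 * δ) * (Real.sqrt k * latticeKernel (Real.sqrt k) x) ≤
        ∑ v ∈ latticeBox d (L k), (bridgeOccupation (Real.sqrt k) x v).toReal
          * min (z v ζ) (Real.sqrt k ^ τ)}
  have hprob : ∀ᶠ k : ℕ in atTop, ∀ x ∈ latticeBox d (k ^ 1), μ (A k x) ≤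
      ENNReal.ofReal (Real.exp (-(η * δ * c₀ / C * (k : ℝ) ^ ((s - τ) / 2)))) := by
    filter_upwards [tendsto_sqrt_natCast_atTop.eventually hlow,
      tendsto_sqrt_natCast_atTop.eventually_gt_atTop 0] with k hlow ht x _
    by_cases hx : ∀ i, |(x i : ℝ)| ≤ R * Real.sqrt (Real.sqrt k)
    · refine (measure_mono fun ζ hζ => hζ.2).trans
        ((hz.measure_le_sum_bridgeOccupation_mul_min_le_exp hα hη.le (min_le_left _ _) hηδ ht.le
        (Real.rpow_pos_of_pos ht τ) (by positivity) (hocc _ ht x) _).trans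
        (ENNReal.ofReal_le_ofReal (Real.exp_le_exp.mpr (neg_le_neg ?_))))
      rw [Real.rpow_div_two_eq_sqrt _ k.cast_nonneg]
      have hlow := hlow x hx
      rw [one_div_sqrt_pow_eq_rpow ht.le] at hlow
      exact mul_rpow_sub_le_div_mul ht hη.le hδ.le hC hlow
    · simp [A, hx]
  filter_upwards [ae_eventually_forall_mem_latticeBox_notMem (by positivity) (by linarith) hprob]
    with ζ hζ
  filter_upwards [hζ, eventually_mul_sqrt_sqrt_natCast_le R] with k hk hRk x hx
  have hbox : x ∈ latticeBox d (k ^ 1) := by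
    rw [pow_one, mem_latticeBox]
    exact fun i => (hx i).trans hRk
  exact (not_le.mp fun hle => hk x hbox ⟨hx, hle⟩).le

lemma measure_le_tsum_indicator_farSet_occupation_le (hz : IsScenery d α μ z) (hα : 1 < α)
    {b η t : ℝ} (hη : 0 < η) (ht : 1 ≤ t) :
    μ {ζ | ENNReal.ofReal (η * (t * (1 / Real.sqrt t) ^ d)) ≤ ∑' y,
        (farSet d ⌈t ^ b⌉₊).indicator (fun y => occupation t y * ENNReal.ofReal (z y ζ)) y}
      ≤ ENNReal.ofReal ((∫ ζ, z 0 ζ ∂μ) * (2 * d * Real.exp 2) / η *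
        (t ^ (d / 2 : ℝ) * Real.exp (-t ^ (b - 1 / 2)))) := by
  have ht0 : 0 < t := one_pos.trans_le ht
  have hc := hz.integral_pos hα
  have hmean := hz.lintegral_tsum_indicator_occupation_le hα (A := farSet d ⌈t ^ b⌉₊)
    fun u hu => tsum_indicator_farSet_latticeMass_le _ ht hu.1.le hu.2
  rw [← ENNReal.ofReal_mul (by positivity), ← ENNReal.ofReal_mul hc.le] at hmean
  refine (meas_ge_le_lintegral_div ?_ (ENNReal.ofReal_pos.mpr (by positivity)).ne'
    ENNReal.ofReal_ne_top).trans ((ENNReal.div_le_div_right hmean _).trans ?_)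
  · refine (Measurable.tsum fun y => ?_).aemeasurable
    by_cases hy : y ∈ farSet d ⌈t ^ b⌉₊
    · simpa only [indicator_of_mem hy] using (hz.meas y).ennreal_ofReal.const_mul _
    · simpa only [indicator_of_notMem hy] using measurable_const
  rw [← ENNReal.ofReal_div_of_pos (by positivity), one_div_sqrt_pow_eq_rpow ht0.le,
    Real.rpow_neg ht0.le]
  refine ENNReal.ofReal_le_ofReal ?_
  have hexp : Real.exp (-(⌈t ^ b⌉₊ / Real.sqrt t)) ≤ Real.exp (-t ^ (b - 1 / 2)) := by
    rw [Real.rpow_sub ht0, ← Real.sqrt_eq_rpow]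
    gcongr
    exact Nat.le_ceil _
  calc _ = (∫ ζ, z 0 ζ ∂μ) * (2 * d * Real.exp 2) / η *
        (t ^ (d / 2 : ℝ) * Real.exp (-(⌈t ^ b⌉₊ / Real.sqrt t))) := by field_simp
    _ ≤ _ := by gcongr

lemma ae_eventually_tsum_indicator_farSet_occupation_le (hz : IsScenery d α μ z) (hα : 1 < α)
    {b η : ℝ} (hb : 1 / 2 < b) (hη : 0 < η) :
    ∀ᵐ ζ ∂μ, ∀ᶠ k : ℕ in atTop,
      ∑' y, (farSet d ⌈Real.sqrt k ^ b⌉₊).indicator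
          (fun y => occupation (Real.sqrt k) y * ENNReal.ofReal (z y ζ)) y
        ≤ ENNReal.ofReal (η * (Real.sqrt k * (1 / Real.sqrt (Real.sqrt k)) ^ d)) := by
  set c := ∫ ζ, z 0 ζ ∂μ
  let far : ℕ → Ωz → ℝ≥0∞ := fun k ζ => ∑' y, (farSet d ⌈Real.sqrt k ^ b⌉₊).indicator
    (fun y => occupation (Real.sqrt k) y * ENNReal.ofReal (z y ζ)) y
  have hmarkov : ∀ᶠ k : ℕ in atTop,
      μ {ζ | ENNReal.ofReal (η * (Real.sqrt k * (1 / Real.sqrt (Real.sqrt k)) ^ d)) ≤ far k ζ}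
      ≤ ENNReal.ofReal (c * (2 * d * Real.exp 2) / η *
        ((k : ℝ) ^ ((d / 2 : ℝ) / 2) * Real.exp (-(1 * (k : ℝ) ^ ((b - 1 / 2) / 2))))) := by
    filter_upwards [tendsto_sqrt_natCast_atTop.eventually_ge_atTop 1] with k hk
    rw [Real.rpow_div_two_eq_sqrt _ k.cast_nonneg, Real.rpow_div_two_eq_sqrt _ k.cast_nonneg,
      one_mul]
    exact hz.measure_le_tsum_indicator_farSet_occupation_le hα hη hk
  filter_upwards [ae_eventually_notMem_of_summable
    ((summable_rpow_mul_exp_neg_mul_rpow _ one_pos (by linarith)).mul_left _) hmarkov] with ζ hζ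
  filter_upwards [hζ] with k hk
  exact (not_le.mp hk).le

lemma ae_eventually_tsum_bridgeOccupation_sqrt_mul_le (hz : IsScenery d α μ z)
    (hα : max ((d : ℝ) / 2) 1 < α) (R : ℝ) {δ : ℝ} (hδ : 0 < δ) :
    ∀ᵐ ζ ∂μ, ∀ᶠ k : ℕ in atTop, ∀ x : Fin d → ℤ,
      (∀ i, |(x i : ℝ)| ≤ R * Real.sqrt (Real.sqrt k)) →
      ∑' y, bridgeOccupation (Real.sqrt k) x y * ENNReal.ofReal (z y ζ)
        ≤ ENNReal.ofReal
          (((∫ ζ, z 0 ζ ∂μ) + 3 * δ) * (Real.sqrt k * latticeKernel (Real.sqrt k) x)) := by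
  have hα1 : 1 < α := (le_max_right _ _).trans_lt hα
  set c := ∫ ζ, z 0 ζ ∂μ
  have hc : 0 < c := hz.integral_pos hα1
  obtain ⟨γ, s, τ, b, hγ, hγ0, hτs, hs0, hs1, hsd, hb, hbτ⟩ := exists_truncation_exponents hα
  obtain ⟨c₀, hc₀, hlow⟩ := exists_eventually_mul_pow_le_latticeKernel d R
  filter_upwards [hz.ae_eventually_sum_bridgeOccupation_mul_min_le hα1 hs0 hs1 hsd hτs R hδ
      fun k => ⌈Real.sqrt k ^ b⌉₊,
    hz.ae_eventually_tsum_indicator_farSet_occupation_le hα1 hb (mul_pos hδ hc₀),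
    hz.ae_exists_le_mul_rpow (one_pos.trans hα1) hγ] with ζ hnear hfar ⟨K, hK, hgrowth⟩
  filter_upwards [hnear, hfar, tendsto_sqrt_natCast_atTop.eventually hlow,
    tendsto_sqrt_natCast_atTop.eventually
      (eventually_mul_two_add_rpow_rpow_le hK.le (one_half_pos.le.trans hb.le) hγ0.le hbτ)]
    with k hnear hfar hlow htrunc x hx
  set t := Real.sqrt k
  have ht : 0 ≤ t := Real.sqrt_nonneg _
  have hp : 0 ≤ t * latticeKernel t x := mul_nonneg ht (latticeKernel_nonneg ht x)
  rw [show (c + 3 * δ) * (t * latticeKernel t x)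
      = (c + 2 * δ) * (t * latticeKernel t x) + δ * (t * latticeKernel t x) by ring,
    ENNReal.ofReal_add (by positivity) (by positivity)]
  refine (tsum_le_sum_latticeBox_add ⌈t ^ b⌉₊ _).trans (add_le_add ?_ ?_)
  · refine le_trans (le_of_eq ?_) (ENNReal.ofReal_le_ofReal (hnear x hx))
    rw [ENNReal.ofReal_sum_of_nonneg fun v _ => mul_nonneg ENNReal.toReal_nonneg
      (le_min (hz.nonneg v ζ) (Real.rpow_nonneg ht τ))]
    refine Finset.sum_congr rfl fun v hv => ?_
    rw [min_eq_left (le_rpow_of_mem_latticeBox ht hK.le hγ0.le hgrowth htrunc hv),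
      ENNReal.ofReal_mul ENNReal.toReal_nonneg, ENNReal.ofReal_toReal
      (bridgeOccupation_ne_top t x v)]
  · calc _ ≤ ∑' y, (farSet d ⌈t ^ b⌉₊).indicator
            (fun y => occupation t y * ENNReal.ofReal (z y ζ)) y :=
          ENNReal.tsum_le_tsum fun y => indicator_le_indicator
            (mul_le_mul_left (bridgeOccupation_le_occupation t x y) _)
      _ ≤ ENNReal.ofReal (δ * c₀ * (t * (1 / Real.sqrt t) ^ d)) := hfar
      _ ≤ ENNReal.ofReal (δ * (t * latticeKernel t x)) := by
          refine ENNReal.ofReal_le_ofReal ?_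
          rw [mul_assoc, mul_left_comm c₀]
          gcongr
          exact hlow x hx

theorem ae_eventually_tsum_bridgeOccupation_mul_le (hz : IsScenery d α μ z)
    (hα : max ((d : ℝ) / 2) 1 < α) {R δ : ℝ} (hR : 0 ≤ R) (hδ : 0 < δ) :
    ∀ᵐ ζ ∂μ, ∀ᶠ t : ℝ in atTop, ∀ x : Fin d → ℤ, (∀ i, |(x i : ℝ)| ≤ R * Real.sqrt t) →
      ∑' y, bridgeOccupation t x y * ENNReal.ofReal (z y ζ)
        ≤ ENNReal.ofReal (((∫ ζ, z 0 ζ ∂μ) + δ) * (t * latticeKernel t x)) := by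
  set c := ∫ ζ, z 0 ζ ∂μ
  have hc : 0 < c := hz.integral_pos ((le_max_right _ _).trans_lt hα)
  have hceil : Tendsto (fun t : ℝ => ⌈t ^ 2⌉₊) atTop atTop :=
    tendsto_nat_ceil_atTop.comp (tendsto_pow_atTop two_ne_zero)
  filter_upwards [hz.ae_eventually_tsum_bridgeOccupation_sqrt_mul_le hα R
    (show 0 < δ / 6 by linarith)] with ζ hζ
  filter_upwards [eventually_exp_mul_latticeKernel_add_le d R
      (show 0 ≤ c + 3 * (δ / 6) by positivity) (show c + 3 * (δ / 6) < c + δ by linarith),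
    hceil.eventually hζ, eventually_gt_atTop 0] with t hshift hseq ht x hx
  obtain ⟨hle, hgap⟩ := sqrt_natCeil_sq_mem_Icc ht
  set h := Real.sqrt ⌈t ^ 2⌉₊ - t with hh
  have hh0 : 0 ≤ h := sub_nonneg.mpr hle
  rw [show Real.sqrt ⌈t ^ 2⌉₊ = t + h by ring] at hseq hgap
  calc ∑' y, bridgeOccupation t x y * ENNReal.ofReal (z y ζ)
      ≤ ∑' y, ENNReal.ofReal (Real.exp (2 * d * h))
          * (bridgeOccupation (t + h) x y * ENNReal.ofReal (z y ζ)) := by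
        refine ENNReal.tsum_le_tsum fun y => ?_
        rw [← mul_assoc]
        gcongr
        exact bridgeOccupation_le_exp_mul hh0 x y
    _ ≤ ENNReal.ofReal (Real.exp (2 * d * h)) * ENNReal.ofReal
          ((c + 3 * (δ / 6)) * ((t + h) * latticeKernel (t + h) x)) := by
        rw [ENNReal.tsum_mul_left]
        gcongr
        exact hseq x fun i => (hx i).trans (by gcongr; linarith)
    _ ≤ ENNReal.ofReal ((c + δ) * (t * latticeKernel t x)) := by
        rw [← ENNReal.ofReal_mul (Real.exp_pos _).le]
        exact ENNReal.ofReal_le_ofReal (hshift h ⟨hh0, by linarith⟩ x hx)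

end IsScenery

/-! ### Independence of the two components of the walk -/

section CountableRange

variable {Ω A B : Type*} [MeasurableSpace Ω] [MeasurableSpace A] [Countable A]
  [MeasurableSingletonClass A] [MeasurableSpace B] [Countable B] [MeasurableSingletonClass B]
  {ν : Measure Ω} {X : Ω → A} {Y : Ω → B}

lemma setLIntegral_comp_eq_tsum (hX : Measurable X) (f : A → ℝ≥0∞) (V : Set Ω) :
    ∫⁻ ω in V, f (X ω) ∂ν = ∑' a, f a * ν {ω | X ω = a ∧ ω ∈ V} := by
  rw [← lintegral_map (measurable_of_countable f) hX, lintegral_countable']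
  refine tsum_congr fun a => ?_
  rw [Measure.map_apply hX (measurableSet_singleton a),
    Measure.restrict_apply (hX (measurableSet_singleton a))]
  rfl

lemma lintegral_comp_eq_tsum (hX : Measurable X) (f : A → ℝ≥0∞) :
    ∫⁻ ω, f (X ω) ∂ν = ∑' a, f a * ν {ω | X ω = a} := by
  simpa using setLIntegral_comp_eq_tsum (ν := ν) hX f univ

lemma tsum_measure_eq_and (hX : Measurable X) (V : Set Ω) :
    ∑' a, ν {ω | X ω = a ∧ ω ∈ V} = ν V := by
  simpa using (setLIntegral_comp_eq_tsum (ν := ν) hX 1 V).symm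

lemma measure_eq_of_joint_eq_mul [IsProbabilityMeasure ν] (hX : Measurable X) (hY : Measurable Y)
    {f : A → ℝ≥0∞} {g : B → ℝ≥0∞} (h : ∀ a b, ν {ω | X ω = a ∧ Y ω = b} = f a * g b)
    (hf : ∑' a, f a ≤ 1) (hg : ∑' b, g b ≤ 1) :
    (∀ a, ν {ω | X ω = a} = f a) ∧ ∀ b, ν {ω | Y ω = b} = g b := by
  have hX_law (a : A) : ν {ω | X ω = a} = f a * ∑' b, g b := by
    rw [← tsum_measure_eq_and hY, ← ENNReal.tsum_mul_left]
    exact tsum_congr fun b => by rw [← h a b]; simp only [mem_ofPred_eq, and_comm]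
  have hY_law (b : B) : ν {ω | Y ω = b} = (∑' a, f a) * g b := by
    rw [← tsum_measure_eq_and hX, ← ENNReal.tsum_mul_right]
    exact tsum_congr fun a => h a b
  have htotal : (∑' a, f a) * ∑' b, g b = 1 := by
    rw [← ENNReal.tsum_mul_right, ← measure_univ (μ := ν), ← tsum_measure_eq_and hX univ]
    exact tsum_congr fun a => by simp [hX_law a]
  have hf_one : ∑' a, f a = 1 := hf.antisymm (htotal.ge.trans (mul_le_of_le_one_right' hg))
  have hg_one : ∑' b, g b = 1 := hg.antisymm (htotal.ge.trans (mul_le_of_le_one_left' hf))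
  simpa [hg_one, hf_one] using And.intro hX_law hY_law

lemma indepFun_of_measure_eq_mul [IsProbabilityMeasure ν] (hX : Measurable X) (hY : Measurable Y)
    (h : ∀ a b, ν {ω | X ω = a ∧ Y ω = b} = ν {ω | X ω = a} * ν {ω | Y ω = b}) :
    IndepFun X Y ν := by
  rw [indepFun_iff_map_prod_eq_prod_map_map hX.aemeasurable hY.aemeasurable]
  refine Measure.ext_of_singleton fun ⟨a, b⟩ => ?_
  rw [Measure.map_apply (hX.prodMk hY) (measurableSet_singleton _), ← singleton_prod_singleton,
    Measure.prod_prod, Measure.map_apply hX (measurableSet_singleton _),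
    Measure.map_apply hY (measurableSet_singleton _)]
  exact h a b

end CountableRange

/-- The weight of the path `y` at times `t 0 ≤ … ≤ t n` under the convolution semigroup `κ`
started at `0`. -/
noncomputable def fddMass {E : Type*} [AddGroup E] (κ : ℝ → E → ℝ≥0∞) {n : ℕ}
    (t : Fin (n + 1) → ℝ) (y : Fin (n + 1) → E) : ℝ≥0∞ :=
  κ (t 0) (y 0) * ∏ i : Fin n, κ (t i.succ - t i.castSucc) (y i.succ - y i.castSucc)

section FddMass

variable {E : Type*} [AddGroup E] {κ : ℝ → E → ℝ≥0∞}

lemma fddMass_snoc {n : ℕ} (t : Fin (n + 2) → ℝ) (y : Fin (n + 1) → E) (x : E) :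
    fddMass κ t (Fin.snoc y x : Fin (n + 2) → E) = fddMass κ (fun i => t i.castSucc) y *
      κ (t (Fin.last (n + 1)) - t (Fin.last n).castSucc) (x - y (Fin.last n)) := by
  have h_castSucc (i : Fin (n + 1)) : (Fin.snoc y x : Fin (n + 2) → E) i.castSucc = y i :=
    Fin.snoc_castSucc (α := fun _ => E) x y i
  have h_last : (Fin.snoc y x : Fin (n + 2) → E) (Fin.last (n + 1)) = x :=
    Fin.snoc_last (α := fun _ => E) x y
  have h_zero : (Fin.snoc y x : Fin (n + 2) → E) 0 = y 0 := h_castSucc 0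
  simp only [fddMass, Fin.prod_univ_castSucc (n := n), Fin.succ_castSucc, Fin.succ_last, h_zero,
    h_castSucc, h_last, Fin.castSucc_zero, mul_assoc]

lemma tsum_fddMass_mul_prod_le {n : ℕ} (t : Fin (n + 1) → ℝ) (g : E → ℝ≥0∞) {ρ : ℝ≥0∞}
    (hρ : ∀ (i : Fin n) x, g x ≠ 0 → ∑' y, κ (t i.succ - t i.castSucc) (y - x) * g y ≤ ρ) :
    ∑' y : Fin (n + 1) → E, fddMass κ t y * ∏ i, g (y i) ≤ ρ ^ n * ∑' x, κ (t 0) x * g x := by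
  induction n with
  | zero =>
    rw [← (Equiv.funUnique (Fin 1) E).symm.tsum_eq]
    simp [fddMass]
  | succ n ih =>
    have hinit := ih (fun i => t i.castSucc) fun i x hx => hρ i.castSucc x hx
    rw [← (Fin.snocEquiv (fun _ : Fin (n + 2) => E)).tsum_eq, ENNReal.tsum_prod',
      ENNReal.tsum_comm]
    calc _ = ∑' y : Fin (n + 1) → E, (fddMass κ (fun i => t i.castSucc) y * ∏ i, g (y i)) *
          ∑' x, κ (t (Fin.last (n + 1)) - t (Fin.last n).castSucc) (x - y (Fin.last n)) * g x := by
          refine tsum_congr fun y => ?_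
          rw [← ENNReal.tsum_mul_left]
          refine tsum_congr fun x => ?_
          change fddMass κ t (Fin.snoc y x : Fin (n + 2) → E) *
            ∏ i, g ((Fin.snoc y x : Fin (n + 2) → E) i) = _
          simp only [fddMass_snoc, Fin.prod_univ_castSucc (n := n + 1),
            Fin.snoc_castSucc (α := fun _ => E), Fin.snoc_last (α := fun _ => E)]
          ring
      _ ≤ ∑' y : Fin (n + 1) → E, (fddMass κ (fun i => t i.castSucc) y * ∏ i, g (y i)) * ρ := by
          refine ENNReal.tsum_le_tsum fun y => ?_
          by_cases hg : g (y (Fin.last n)) = 0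
          · have hprod : ∏ i, g (y i) = 0 := Finset.prod_eq_zero (Finset.mem_univ (Fin.last n)) hg
            simp [hprod]
          · gcongr
            exact hρ (Fin.last n) _ hg
      _ ≤ ρ ^ n * (∑' x, κ (t 0) x * g x) * ρ := by
          rw [ENNReal.tsum_mul_right]
          gcongr
          exact hinit
      _ = _ := by ring

lemma tsum_fddMass_le_one (hκ : ∀ s, 0 ≤ s → ∑' x, κ s x = 1) {n : ℕ} {t : Fin (n + 1) → ℝ}
    (h0 : 0 ≤ t 0) (ht : ∀ i : Fin n, t i.castSucc ≤ t i.succ) :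
    ∑' y, fddMass κ t y ≤ 1 := by
  simpa [hκ _ h0] using tsum_fddMass_mul_prod_le (κ := κ) t 1 (ρ := 1) fun i x _ => by
    simpa using ((Equiv.subRight x).tsum_eq (κ (t i.succ - t i.castSucc))).trans
      (hκ _ (sub_nonneg.2 (ht i))) |>.le

end FddMass

/-- The kernel `lineKernel` with values in `ℝ≥0∞`. -/
noncomputable def lineMass (t : ℝ) (k : ℤ) : ℝ≥0∞ := ENNReal.ofReal (lineKernel t k)

lemma tsum_lineMass {t : ℝ} (ht : 0 ≤ t) : ∑' k, lineMass t k = 1 := by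
  rw [← ENNReal.ofReal_one]
  exact tsum_ofReal_eq_of_hasSum (lineKernel_nonneg ht) (hasSum_lineKernel ht)

lemma latticeMass_succ {d : ℕ} {t : ℝ} (ht : 0 ≤ t) (x : Fin (d + 1) → ℤ) :
    latticeMass t x = lineMass t (x 0) * latticeMass t (Fin.tail x) := by
  rw [latticeMass, latticeKernel, Fin.prod_univ_succ, ENNReal.ofReal_mul (lineKernel_nonneg ht _)]
  rfl

/-- The path of the `ℤ^d`-component of `S`, indexed by `ℝ≥0` so that its law is determined by the
finite-dimensional distributions of the walk. -/
def layerPath {d : ℕ} {Ω : Type*} (S : ℝ → Ω → Fin (d + 1) → ℤ) (ω : Ω) : ℝ≥0 → Fin d → ℤ :=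
  fun u => Fin.tail (S u ω)

namespace IsCTSRW

variable {Ω : Type*} [MeasurableSpace Ω]

lemma measurable {m : ℕ} {P : (Fin m → ℤ) → Measure Ω} {S : ℝ → Ω → Fin m → ℤ}
    (hS : IsCTSRW m P S) (t : ℝ) : Measurable (S t) :=
  hS.meas.comp measurable_prodMk_left

lemma measure_fdd {m : ℕ} [NeZero m] {P : (Fin m → ℤ) → Measure Ω} {S : ℝ → Ω → Fin m → ℤ}
    (hS : IsCTSRW m P S) {n : ℕ} {t : Fin (n + 1) → ℝ} (h0 : 0 ≤ t 0)
    (ht : ∀ i : Fin n, t i.castSucc ≤ t i.succ) (y : Fin (n + 1) → Fin m → ℤ) :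
    P 0 {ω | ∀ i, S (t i) ω = y i} = fddMass latticeMass t y := by
  have := hS.prob 0
  rw [← ENNReal.ofReal_toReal (measure_ne_top (P 0) _), hS.fdd 0 n t h0 ht y]
  simp_rw [heatKernel_eq_latticeKernel]
  rw [ENNReal.ofReal_mul (latticeKernel_nonneg h0 _), ENNReal.ofReal_prod_of_nonneg
    fun i _ => latticeKernel_nonneg (sub_nonneg.2 (ht i)) _, sub_zero]
  rfl

variable {d : ℕ} {P : (Fin (d + 1) → ℤ) → Measure Ω} {S : ℝ → Ω → Fin (d + 1) → ℤ}

lemma measurable_head (hS : IsCTSRW (d + 1) P S) (t : ℝ) : Measurable fun ω => S t ω 0 :=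
  (measurable_pi_apply _).comp (hS.measurable t)

lemma measurable_uncurry_tail (hS : IsCTSRW (d + 1) P S) :
    Measurable fun p : ℝ × Ω => Fin.tail (S p.1 p.2) :=
  measurable_pi_lambda _ fun _ => (measurable_pi_apply _).comp hS.meas

lemma measurable_tail (hS : IsCTSRW (d + 1) P S) (t : ℝ) : Measurable fun ω => Fin.tail (S t ω) :=
  hS.measurable_uncurry_tail.comp measurable_prodMk_left

lemma measurable_layerPath (hS : IsCTSRW (d + 1) P S) : Measurable (layerPath S) :=
  measurable_pi_lambda _ fun u => hS.measurable_tail u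

lemma measure_head_tail_fdd (hS : IsCTSRW (d + 1) P S) {n : ℕ} {t : Fin (n + 1) → ℝ}
    (h0 : 0 ≤ t 0) (ht : ∀ i : Fin n, t i.castSucc ≤ t i.succ) (a : Fin (n + 1) → ℤ)
    (b : Fin (n + 1) → Fin d → ℤ) :
    P 0 {ω | (fun i => S (t i) ω 0) = a ∧ (fun i => Fin.tail (S (t i) ω)) = b}
      = fddMass lineMass t a * fddMass latticeMass t b := by
  have hset : {ω | (fun i => S (t i) ω 0) = a ∧ (fun i => Fin.tail (S (t i) ω)) = b} =
      {ω | ∀ i, S (t i) ω = (Fin.cons (a i) (b i) : Fin (d + 1) → ℤ)} := by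
    ext ω
    simp only [mem_ofPred_eq, funext_iff, Fin.forall_fin_succ (n := d), Fin.cons_zero,
      Fin.cons_succ, forall_and, Fin.tail]
  rw [hset, hS.measure_fdd h0 ht, fddMass, latticeMass_succ h0, fddMass, fddMass,
    mul_mul_mul_comm, ← Finset.prod_mul_distrib]
  congr 1
  exact Finset.prod_congr rfl fun i _ => latticeMass_succ (sub_nonneg.2 (ht i)) _

lemma measure_head_fdd_and_measure_tail_fdd [NeZero d] (hS : IsCTSRW (d + 1) P S) {n : ℕ}
    {t : Fin (n + 1) → ℝ} (h0 : 0 ≤ t 0) (ht : ∀ i : Fin n, t i.castSucc ≤ t i.succ) :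
    (∀ a, P 0 {ω | (fun i => S (t i) ω 0) = a} = fddMass lineMass t a) ∧
      ∀ b, P 0 {ω | (fun i => Fin.tail (S (t i) ω)) = b} = fddMass latticeMass t b :=
  have := hS.prob 0
  measure_eq_of_joint_eq_mul (measurable_pi_lambda _ fun _ => hS.measurable_head _)
    (measurable_pi_lambda _ fun _ => hS.measurable_tail _) (hS.measure_head_tail_fdd h0 ht)
    (tsum_fddMass_le_one (fun _ => tsum_lineMass) h0 ht)
    (tsum_fddMass_le_one (fun _ => tsum_latticeMass) h0 ht)

lemma indepFun_head_tail [NeZero d] (hS : IsCTSRW (d + 1) P S) {n : ℕ} {t : Fin (n + 1) → ℝ}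
    (h0 : 0 ≤ t 0) (ht : ∀ i : Fin n, t i.castSucc ≤ t i.succ) :
    IndepFun (fun ω i => S (t i) ω 0) (fun ω i => Fin.tail (S (t i) ω)) (P 0) := by
  have := hS.prob 0
  obtain ⟨h_head, h_tail⟩ := hS.measure_head_fdd_and_measure_tail_fdd h0 ht
  exact indepFun_of_measure_eq_mul (measurable_pi_lambda _ fun _ => hS.measurable_head _)
    (measurable_pi_lambda _ fun _ => hS.measurable_tail _) fun a b => by
      rw [h_head, h_tail, hS.measure_head_tail_fdd h0 ht]

lemma indepFun_head_layerPath [NeZero d] (hS : IsCTSRW (d + 1) P S) {s : ℝ} (hs : 0 ≤ s) :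
    IndepFun (fun ω => S s ω 0) (layerPath S) (P 0) := by
  classical
  have := hS.prob 0
  lift s to ℝ≥0 using hs
  refine IndepFun.indepFun_process (Y := fun u ω => layerPath S ω u) (hS.measurable_head s)
    (fun u => hS.measurable_tail u) fun J => ?_
  obtain ⟨n, hn⟩ : ∃ n, (insert s J).card = n + 1 :=
    Nat.exists_eq_succ_of_ne_zero (Finset.card_ne_zero.2 (Finset.insert_nonempty s J))
  let e := (insert s J).orderEmbOfFin hn
  have h_index : ∀ u ∈ insert s J, ∃ i, e i = u := fun u hu => by
    rwa [← Finset.mem_coe, ← Finset.range_orderEmbOfFin _ hn] at hu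
  obtain ⟨i₀, hi₀⟩ := h_index s (Finset.mem_insert_self s J)
  choose! index h_index using h_index
  have h_indep := (hS.indepFun_head_tail (t := fun i => (e i : ℝ)) (e 0).coe_nonneg
    (fun i => by exact_mod_cast e.monotone (Fin.castSucc_le_succ i))).comp
    (measurable_pi_apply i₀) (measurable_pi_lambda (fun b (u : J) => b (index u))
      fun _ => measurable_pi_apply _)
  convert h_indep using 1
  · simp [Function.comp_def, hi₀]
  · ext ω u
    simp [layerPath, h_index u (Finset.mem_insert_of_mem u.2)]

lemma measure_head_eq [NeZero d] (hS : IsCTSRW (d + 1) P S) {t : ℝ} (ht : 0 ≤ t) (a : ℤ) :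
    P 0 {ω | S t ω 0 = a} = lineMass t a := by
  simpa [fddMass, funext_iff] using (hS.measure_head_fdd_and_measure_tail_fdd (n := 0)
    (t := fun _ => t) ht fun i => i.elim0).1 fun _ => a

lemma measure_tail_eq [NeZero d] (hS : IsCTSRW (d + 1) P S) {t : ℝ} (ht : 0 ≤ t)
    (x : Fin d → ℤ) : P 0 {ω | Fin.tail (S t ω) = x} = latticeMass t x := by
  simpa [fddMass, funext_iff] using (hS.measure_head_fdd_and_measure_tail_fdd (n := 0)
    (t := fun _ => t) ht fun i => i.elim0).2 fun _ => x

lemma measure_head_eq_and_layerPath_mem [NeZero d] (hS : IsCTSRW (d + 1) P S) {s : ℝ}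
    (hs : 0 ≤ s) (a : ℤ) {U : Set (ℝ≥0 → Fin d → ℤ)} (hU : MeasurableSet U) :
    P 0 {ω | S s ω 0 = a ∧ layerPath S ω ∈ U} = lineMass s a * P 0 {ω | layerPath S ω ∈ U} := by
  rw [← hS.measure_head_eq hs]
  exact (hS.indepFun_head_layerPath hs).measure_inter_preimage_eq_mul _ _
    (measurableSet_singleton a) hU

lemma measure_head_eq_and_tail_eq [NeZero d] (hS : IsCTSRW (d + 1) P S) {s t : ℝ} (hs : 0 ≤ s)
    (ht : 0 ≤ t) (a : ℤ) (x : Fin d → ℤ) :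
    P 0 {ω | S s ω 0 = a ∧ Fin.tail (S t ω) = x} = lineMass s a * latticeMass t x := by
  rw [← hS.measure_tail_eq ht]
  exact hS.measure_head_eq_and_layerPath_mem hs a (U := (fun f => f ⟨t, ht⟩) ⁻¹' {x})
    (measurable_pi_apply _ (measurableSet_singleton x))

lemma measure_tail_eq_and_tail_eq [NeZero d] (hS : IsCTSRW (d + 1) P S) {u t : ℝ} (hu : 0 ≤ u)
    (hut : u ≤ t) (y x : Fin d → ℤ) :
    P 0 {ω | Fin.tail (S u ω) = y ∧ Fin.tail (S t ω) = x}
      = latticeMass u y * latticeMass (t - u) (x - y) := by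
  simpa [fddMass, funext_iff (β := fun _ : Fin 2 => Fin d → ℤ), Fin.forall_fin_two] using
    (hS.measure_head_fdd_and_measure_tail_fdd (t := ![u, t]) hu fun i => by
      fin_cases i; simpa using hut).2 ![y, x]

lemma lintegral_prod_comp_tail_le [NeZero d] (hS : IsCTSRW (d + 1) P S) {v s : ℝ} (hv : 0 ≤ v)
    (hs : 0 ≤ s) (N : ℕ) {g : (Fin d → ℤ) → ℝ≥0∞} (hg : ∀ x, g x ≤ 1) {ρ : ℝ≥0∞}
    (hρ : ∀ x, g x ≠ 0 → ∑' y, latticeMass s (y - x) * g y ≤ ρ) :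
    ∫⁻ ω, ∏ k : Fin (N + 1), g (Fin.tail (S (v + k * s) ω)) ∂(P 0) ≤ ρ ^ N := by
  let t : Fin (N + 1) → ℝ := fun k => v + k * s
  have h0 : 0 ≤ t 0 := by simpa [t] using hv
  have hstep (i : Fin N) : t i.succ - t i.castSucc = s := by simp [t]; ring
  have hmono (i : Fin N) : t i.castSucc ≤ t i.succ := sub_nonneg.1 ((hstep i).symm ▸ hs)
  calc ∫⁻ ω, ∏ k : Fin (N + 1), g (Fin.tail (S (t k) ω)) ∂(P 0)
      = ∑' y : Fin (N + 1) → Fin d → ℤ, fddMass latticeMass t y * ∏ k, g (y k) := by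
        rw [lintegral_comp_eq_tsum (measurable_pi_lambda _ fun k => hS.measurable_tail (t k))
          fun y => ∏ k, g (y k)]
        refine tsum_congr fun y => ?_
        rw [mul_comm, (hS.measure_head_fdd_and_measure_tail_fdd h0 hmono).2]
    _ ≤ ρ ^ N * ∑' x, latticeMass (t 0) x * g x :=
        tsum_fddMass_mul_prod_le t g fun i x hx => by rw [hstep]; exact hρ x hx
    _ ≤ ρ ^ N * ∑' x, latticeMass (t 0) x := by
        gcongr with x
        exact mul_le_of_le_one_right' (hg x)
    _ = ρ ^ N := by rw [tsum_latticeMass h0, mul_one]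

end IsCTSRW

/-! ### The subordination formula -/

lemma tendsto_natCeil_mul_div_natCast {u : ℝ} (hu : 0 ≤ u) :
    Tendsto (fun n : ℕ => (⌈u * n⌉₊ : ℝ) / n) atTop (𝓝[≥] u) := by
  refine tendsto_nhdsWithin_iff.2
    ⟨(tendsto_nat_ceil_mul_div_atTop hu).comp tendsto_natCast_atTop_atTop, ?_⟩
  filter_upwards [eventually_gt_atTop 0] with n hn
  have hn' : (0 : ℝ) < n := by exact_mod_cast hn
  exact (le_div_iff₀ hn').2 (Nat.le_ceil _)

section Subordination

variable {Ω A B : Type*} [MeasurableSpace Ω] [MeasurableSpace A] [MeasurableSingletonClass A]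
  [MeasurableSpace B] {ν : Measure Ω} {X : ℝ → Ω → A} {Y : Ω → B}

lemma tendsto_measure_eval_eq_and [IsFiniteMeasure ν] (hX : Measurable fun p : ℝ × Ω => X p.1 p.2)
    (hright : ∀ᵐ ω ∂ν, ∀ t, 0 ≤ t → ∀ᶠ u in 𝓝[≥] t, X u ω = X t ω) {T : Ω → ℝ}
    {T' : ℕ → Ω → ℝ} (hT : Measurable T) (hT' : ∀ n, Measurable (T' n)) (hT0 : ∀ ω, 0 ≤ T ω)
    (hlim : ∀ ω, Tendsto (fun n => T' n ω) atTop (𝓝[≥] (T ω))) (a : A) {V : Set Ω}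
    (hV : MeasurableSet V) :
    Tendsto (fun n => ν {ω | X (T' n ω) ω = a ∧ ω ∈ V}) atTop
      (𝓝 (ν {ω | X (T ω) ω = a ∧ ω ∈ V})) := by
  have hmeas {τ : Ω → ℝ} (hτ : Measurable τ) : MeasurableSet {ω | X (τ ω) ω = a ∧ ω ∈ V} :=
    ((hX.comp (hτ.prodMk measurable_id)) (measurableSet_singleton a)).inter hV
  refine tendsto_measure_of_ae_tendsto_indicator_of_isFiniteMeasure atTop (hmeas hT)
    (fun n => hmeas (hT' n)) ?_
  filter_upwards [hright] with ω hω
  filter_upwards [(hlim ω).eventually (hω _ (hT0 ω))] with n hn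
  simp only [hn]

lemma measure_eval_eq_and_mem_of_countable (hind : ∀ s, 0 ≤ s → IndepFun (X s) Y ν)
    (hY : Measurable Y) {K : B → ℕ} (hK : Measurable K) {τ : ℕ → ℝ} (hτ : ∀ k, 0 ≤ τ k) (a : A)
    {U : Set B} (hU : MeasurableSet U) :
    ν {ω | X (τ (K (Y ω))) ω = a ∧ Y ω ∈ U}
      = ∫⁻ ω in Y ⁻¹' U, ν {ω' | X (τ (K (Y ω))) ω' = a} ∂ν := by
  have hKY : Measurable fun ω => K (Y ω) := hK.comp hY
  rw [setLIntegral_comp_eq_tsum hKY fun k => ν {ω' | X (τ k) ω' = a}, ← tsum_measure_eq_and hKY]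
  refine tsum_congr fun k => ?_
  refine Eq.trans ?_ ((hind (τ k) (hτ k)).measure_inter_preimage_eq_mul {a} (K ⁻¹' {k} ∩ U)
    (measurableSet_singleton a) ((hK (measurableSet_singleton k)).inter hU))
  congr 1
  ext ω
  constructor
  · rintro ⟨rfl, hXa, hYU⟩
    exact ⟨hXa, rfl, hYU⟩
  · rintro ⟨hXa, rfl, hYU⟩
    exact ⟨rfl, hXa, hYU⟩

lemma measure_eval_eq_and_mem [IsProbabilityMeasure ν] (hX : Measurable fun p : ℝ × Ω => X p.1 p.2)
    (hright : ∀ᵐ ω ∂ν, ∀ t, 0 ≤ t → ∀ᶠ u in 𝓝[≥] t, X u ω = X t ω)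
    (hind : ∀ s, 0 ≤ s → IndepFun (X s) Y ν) (hY : Measurable Y) {T : B → ℝ} (hT : Measurable T)
    (hT0 : ∀ b, 0 ≤ T b) (a : A) {U : Set B} (hU : MeasurableSet U) :
    ν {ω | X (T (Y ω)) ω = a ∧ Y ω ∈ U} = ∫⁻ ω in Y ⁻¹' U, ν {ω' | X (T (Y ω)) ω' = a} ∂ν := by
  let T' : ℕ → B → ℝ := fun n b => (⌈T b * n⌉₊ : ℝ) / n
  have hT' (n : ℕ) : Measurable (T' n) := by
    have hdiv : Measurable fun k : ℕ => (k : ℝ) / n := measurable_of_countable _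
    exact hdiv.comp (Nat.measurable_ceil.comp (hT.mul_const _))
  have hlim (b : B) : Tendsto (fun n => T' n b) atTop (𝓝[≥] (T b)) :=
    tendsto_natCeil_mul_div_natCast (hT0 b)
  have hlaw_meas : Measurable fun s => ν {ω' | X s ω' = a} :=
    measurable_measure_prodMk_left (hX (measurableSet_singleton a))
  have hlaw_lim (b : B) : Tendsto (fun n => ν {ω' | X (T' n b) ω' = a}) atTop
      (𝓝 (ν {ω' | X (T b) ω' = a})) := by
    simpa using tendsto_measure_eval_eq_and hX hright measurable_const (fun n => measurable_const)
      (fun _ => hT0 b) (fun _ => hlim b) a MeasurableSet.univ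
  have hleft : Tendsto (fun n => ν {ω | X (T' n (Y ω)) ω = a ∧ Y ω ∈ U}) atTop
      (𝓝 (ν {ω | X (T (Y ω)) ω = a ∧ Y ω ∈ U})) :=
    tendsto_measure_eval_eq_and hX hright (hT.comp hY) (fun n => (hT' n).comp hY)
      (fun _ => hT0 _) (fun ω => hlim (Y ω)) a (hY hU)
  have hright : Tendsto (fun n => ∫⁻ ω in Y ⁻¹' U, ν {ω' | X (T' n (Y ω)) ω' = a} ∂ν) atTop
      (𝓝 (∫⁻ ω in Y ⁻¹' U, ν {ω' | X (T (Y ω)) ω' = a} ∂ν)) :=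
    tendsto_lintegral_of_dominated_convergence (fun _ => 1)
      (fun n => hlaw_meas.comp ((hT' n).comp hY)) (fun _ => ae_of_all _ fun _ => prob_le_one)
      (by simp) (ae_of_all _ fun ω => hlaw_lim (Y ω))
  refine tendsto_nhds_unique hleft (hright.congr fun n => ?_)
  exact (measure_eval_eq_and_mem_of_countable hind hY
    (Nat.measurable_ceil.comp (hT.mul_const _)) (τ := fun k => (k : ℝ) / n)
    (fun k => by positivity) a hU).symm

end Subordination

/-- The clock `A²(t) = ∫₀ᵗ w(S²_u) du` of the walk in the deterministic scenery `w`, with values in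
`ℝ≥0∞` so that no integrability is needed. -/
noncomputable def sceneryClock {d : ℕ} {Ω : Type*} (S : ℝ → Ω → Fin (d + 1) → ℤ)
    (w : (Fin d → ℤ) → ℝ) (t : ℝ) (ω : Ω) : ℝ≥0∞ :=
  ∫⁻ u in Ioc 0 t, ENNReal.ofReal (w (Fin.tail (S u ω)))

/-- A measurable functional of paths `f : ℝ≥0 → ℤ^d` which is the clock in the scenery `w` when `f`
is right-continuous. It only evaluates `f` at rational times, whence its measurability. -/
noncomputable def pathClock {d : ℕ} (w : (Fin d → ℤ) → ℝ) (t : ℝ) (f : ℝ≥0 → Fin d → ℤ) : ℝ≥0∞ :=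
  ∫⁻ u in Ioc 0 t, limsup (fun n : ℕ => ENNReal.ofReal (w (f ((⌈u * n⌉₊ : ℝ≥0) / n)))) atTop

@[fun_prop]
lemma measurable_pathClock {d : ℕ} (w : (Fin d → ℤ) → ℝ) (t : ℝ) : Measurable (pathClock w t) := by
  refine Measurable.lintegral_prod_left' (f := fun p : ℝ × (ℝ≥0 → Fin d → ℤ) =>
    limsup (fun n : ℕ => ENNReal.ofReal (w (p.2 ((⌈p.1 * n⌉₊ : ℝ≥0) / n)))) atTop)
    (Measurable.limsup fun n => ?_)
  have heval : Measurable fun p : ℕ × (ℝ≥0 → Fin d → ℤ) => p.2 ((p.1 : ℝ≥0) / n) :=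
    measurable_from_prod_countable_right fun k => measurable_pi_apply ((k : ℝ≥0) / n)
  have hceil : Measurable fun p : ℝ × (ℝ≥0 → Fin d → ℤ) => (⌈p.1 * n⌉₊, p.2) :=
    (Nat.measurable_ceil.comp (measurable_fst.mul_const _)).prodMk measurable_snd
  exact (measurable_of_countable fun y => ENNReal.ofReal (w y)).comp (heval.comp hceil)

namespace IsCTSRW

variable {Ω : Type*} [MeasurableSpace Ω] {d : ℕ} {P : (Fin (d + 1) → ℤ) → Measure Ω}
  {S : ℝ → Ω → Fin (d + 1) → ℤ}

lemma ae_eventually_eq {m : ℕ} {P : (Fin m → ℤ) → Measure Ω} {S : ℝ → Ω → Fin m → ℤ}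
    (hS : IsCTSRW m P S) (x : Fin m → ℤ) :
    ∀ᵐ ω ∂P x, ∀ t, 0 ≤ t → ∀ᶠ u in 𝓝[≥] t, S u ω = S t ω := by
  filter_upwards [hS.rightCont x] with ω hω t ht
  obtain ⟨ε, hε, hconst⟩ := hω t ht
  filter_upwards [Ico_mem_nhdsGE (lt_add_of_pos_right t hε)] with u hu
  exact hconst u hu.1 hu.2

lemma measurable_uncurry_comp_tail (hS : IsCTSRW (d + 1) P S) {B : Type*} [MeasurableSpace B]
    (w : (Fin d → ℤ) → B) : Measurable fun p : ℝ × Ω => w (Fin.tail (S p.1 p.2)) :=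
  (measurable_of_countable w).comp hS.measurable_uncurry_tail

lemma measurable_sceneryClock (hS : IsCTSRW (d + 1) P S) (w : (Fin d → ℤ) → ℝ) (t : ℝ) :
    Measurable (sceneryClock S w t) :=
  Measurable.lintegral_prod_left' (f := fun p : ℝ × Ω => ENNReal.ofReal (w (Fin.tail (S p.1 p.2))))
    (hS.measurable_uncurry_comp_tail fun y => ENNReal.ofReal (w y))

lemma clock_eq_toReal_sceneryClock (hS : IsCTSRW (d + 1) P S) {Ωz : Type*}
    {z : (Fin d → ℤ) → Ωz → ℝ} {ζ : Ωz} (hz : ∀ y, 0 ≤ z y ζ) (t : ℝ) (ω : Ω) :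
    clock d z S t ζ ω = (sceneryClock S (fun y => z y ζ) t ω).toReal :=
  integral_eq_lintegral_of_nonneg_ae (ae_of_all _ fun _ => hz _)
    ((hS.measurable_uncurry_comp_tail fun y => z y ζ).comp
      measurable_prodMk_right).aestronglyMeasurable

lemma ae_sceneryClock_eq_pathClock (hS : IsCTSRW (d + 1) P S) (w : (Fin d → ℤ) → ℝ) (t : ℝ) :
    ∀ᵐ ω ∂P 0, sceneryClock S w t ω = pathClock w t (layerPath S ω) := by
  filter_upwards [hS.ae_eventually_eq 0] with ω hω
  refine setLIntegral_congr_fun measurableSet_Ioc fun u hu => (Tendsto.limsup_eq ?_).symm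
  refine tendsto_const_nhds.congr' ?_
  filter_upwards [(tendsto_natCeil_mul_div_natCast hu.1.le).eventually (hω u hu.1.le)] with n hn
  simp [layerPath, hn]

lemma setLIntegral_sceneryClock (hS : IsCTSRW (d + 1) P S) (w : (Fin d → ℤ) → ℝ) (t : ℝ)
    {V : Set Ω} (hV : MeasurableSet V) :
    ∫⁻ ω in V, sceneryClock S w t ω ∂P 0
      = ∑' y, (∫⁻ u in Ioc 0 t, P 0 {ω | Fin.tail (S u ω) = y ∧ ω ∈ V}) * ENNReal.ofReal (w y) := by
  have := hS.prob 0
  have hmeas (y : Fin d → ℤ) : Measurable fun u => P 0 {ω | Fin.tail (S u ω) = y ∧ ω ∈ V} :=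
    measurable_measure_prodMk_left ((hS.measurable_uncurry_tail (measurableSet_singleton y)).inter
      (measurable_snd hV))
  calc ∫⁻ ω in V, sceneryClock S w t ω ∂P 0
      = ∫⁻ u in Ioc 0 t, ∫⁻ ω in V, ENNReal.ofReal (w (Fin.tail (S u ω))) ∂P 0 :=
        lintegral_lintegral_swap ((hS.measurable_uncurry_comp_tail fun y =>
          ENNReal.ofReal (w y)).comp measurable_swap).aemeasurable
    _ = ∫⁻ u in Ioc 0 t, ∑' y,
          ENNReal.ofReal (w y) * P 0 {ω | Fin.tail (S u ω) = y ∧ ω ∈ V} := by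
        simp_rw [setLIntegral_comp_eq_tsum (hS.measurable_tail _) fun y => ENNReal.ofReal (w y)]
    _ = _ := by
        rw [lintegral_tsum fun y => ((hmeas y).const_mul _).aemeasurable]
        simp_rw [lintegral_const_mul _ (hmeas _), mul_comm]

lemma lintegral_sceneryClock [NeZero d] (hS : IsCTSRW (d + 1) P S) (w : (Fin d → ℤ) → ℝ) (t : ℝ) :
    ∫⁻ ω, sceneryClock S w t ω ∂P 0 = ∑' y, occupation t y * ENNReal.ofReal (w y) := by
  rw [← setLIntegral_univ, hS.setLIntegral_sceneryClock w t MeasurableSet.univ]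
  refine tsum_congr fun y => congrArg (· * _) ?_
  refine setLIntegral_congr_fun measurableSet_Ioc fun u hu => ?_
  simpa using hS.measure_tail_eq hu.1.le y

lemma setLIntegral_sceneryClock_tail_eq [NeZero d] (hS : IsCTSRW (d + 1) P S)
    (w : (Fin d → ℤ) → ℝ) (t : ℝ) (x : Fin d → ℤ) :
    ∫⁻ ω in {ω | Fin.tail (S t ω) = x}, sceneryClock S w t ω ∂P 0
      = ∑' y, bridgeOccupation t x y * ENNReal.ofReal (w y) := by
  have hV : MeasurableSet {ω | Fin.tail (S t ω) = x} :=
    hS.measurable_tail t (measurableSet_singleton x)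
  rw [hS.setLIntegral_sceneryClock w t hV]
  refine tsum_congr fun y => congrArg (· * _) ?_
  exact setLIntegral_congr_fun measurableSet_Ioc fun u hu =>
    hS.measure_tail_eq_and_tail_eq hu.1.le hu.2 y x

lemma ae_sceneryClock_lt_top [NeZero d] (hS : IsCTSRW (d + 1) P S) {w : (Fin d → ℤ) → ℝ} {t : ℝ}
    (hw : ∑' y, occupation t y * ENNReal.ofReal (w y) ≠ ⊤) :
    ∀ᵐ ω ∂P 0, sceneryClock S w t ω < ⊤ :=
  ae_lt_top (hS.measurable_sceneryClock w t) (hS.lintegral_sceneryClock w t ▸ hw)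

theorem measure_layeredWalk_eq [NeZero d] (hS : IsCTSRW (d + 1) P S) {Ωz : Type*}
    {z : (Fin d → ℤ) → Ωz → ℝ} {ζ : Ωz} (hz : ∀ y, 0 ≤ z y ζ) {t : ℝ} (ht : 0 ≤ t)
    (x : ℤ × (Fin d → ℤ)) :
    P 0 {ω | layeredWalk d z S t ζ ω = x} = ∫⁻ ω in {ω | Fin.tail (S t ω) = x.2},
      lineMass (sceneryClock S (fun y => z y ζ) t ω).toReal x.1 ∂P 0 := by
  have := hS.prob 0
  let T : (ℝ≥0 → Fin d → ℤ) → ℝ := fun f => (pathClock (fun y => z y ζ) t f).toReal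
  have hclock : ∀ᵐ ω ∂P 0, (sceneryClock S (fun y => z y ζ) t ω).toReal = T (layerPath S ω) := by
    filter_upwards [hS.ae_sceneryClock_eq_pathClock (fun y => z y ζ) t] with ω hω
    simp only [T, hω]
  calc P 0 {ω | layeredWalk d z S t ζ ω = x}
      = P 0 {ω | S (T (layerPath S ω)) ω 0 = x.1 ∧
          layerPath S ω ∈ (fun f : ℝ≥0 → Fin d → ℤ => f ⟨t, ht⟩) ⁻¹' {x.2}} := by
        refine measure_congr ?_
        filter_upwards [hclock] with ω hω
        refine propext ?_
        change layeredWalk d z S t ζ ω = x ↔ (S (T (layerPath S ω)) ω 0 = x.1 ∧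
          layerPath S ω ∈ (fun f : ℝ≥0 → Fin d → ℤ => f ⟨t, ht⟩) ⁻¹' {x.2})
        rw [← hω, ← hS.clock_eq_toReal_sceneryClock hz, layeredWalk, Prod.ext_iff]
        rfl
    _ = ∫⁻ ω in {ω | Fin.tail (S t ω) = x.2},
          P 0 {ω' | S (T (layerPath S ω)) ω' 0 = x.1} ∂P 0 :=
        measure_eval_eq_and_mem (X := fun s ω => S s ω 0) ((measurable_pi_apply 0).comp hS.meas)
          ((hS.ae_eventually_eq 0).mono fun ω hω s hs => (hω s hs).mono fun u hu => congrFun hu 0)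
          (fun s hs => hS.indepFun_head_layerPath hs) hS.measurable_layerPath
          (measurable_pathClock _ t).ennreal_toReal (fun _ => ENNReal.toReal_nonneg) x.1
          (measurable_pi_apply _ (measurableSet_singleton x.2))
    _ = _ := by
        refine lintegral_congr_ae (ae_restrict_of_ae ?_)
        filter_upwards [hclock] with ω hω
        rw [hS.measure_head_eq ENNReal.toReal_nonneg, hω]

end IsCTSRW

/-! ### Lower deviations of the clock -/

lemma setLIntegral_Ioc_natCast_mul (f : ℝ → ℝ≥0∞) {s : ℝ} (hs : 0 ≤ s) (n : ℕ) :
    ∫⁻ u in Ioc 0 (n * s), f u = ∑ k : Fin n, ∫⁻ v in Ioc 0 s, f (v + k * s) := by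
  induction n with
  | zero => simp
  | succ n ih =>
    have hns : n * s ≤ (n + 1 : ℕ) * s := by push_cast; nlinarith
    have hshift : ∫⁻ v in Ioc 0 s, f (v + n * s) = ∫⁻ u in Ioc (n * s) ((n + 1 : ℕ) * s), f u := by
      rw [← (measurePreserving_add_right volume (n * s)).setLIntegral_comp_preimage_emb
        (MeasurableEquiv.addRight (n * s)).measurableEmbedding f (Ioc (n * s) _),
        preimage_add_const_Ioc, sub_self, Nat.cast_succ, add_one_mul, add_sub_cancel_left]
    rw [← Ioc_union_Ioc_eq_Ioc (by positivity) hns,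
      lintegral_union measurableSet_Ioc (Ioc_disjoint_Ioc_of_le le_rfl), ih,
      Fin.sum_univ_castSucc, ← hshift]
    rfl

lemma prod_le_prod_indicator_add_sum_indicator_compl {ι E : Type*} [Fintype ι] (B : Set E)
    {f : E → ℝ≥0∞} (hf : ∀ x, f x ≤ 1) (y : ι → E) :
    ∏ k, f (y k) ≤ ∏ k, B.indicator f (y k) + ∑ k, Bᶜ.indicator 1 (y k) := by
  by_cases h : ∀ k, y k ∈ B
  · exact le_add_right (Finset.prod_congr rfl fun k _ => (indicator_of_mem (h k) f).symm).le
  · push Not at h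
    obtain ⟨k, hk⟩ := h
    calc ∏ k, f (y k) ≤ 1 := Finset.prod_le_one' fun k _ => hf _
      _ = Bᶜ.indicator (1 : E → ℝ≥0∞) (y k) := by simp [hk]
      _ ≤ ∑ k, Bᶜ.indicator 1 (y k) := Finset.single_le_sum
        (f := fun k => Bᶜ.indicator (1 : E → ℝ≥0∞) (y k)) (fun _ _ => zero_le) (Finset.mem_univ k)
      _ ≤ _ := le_add_self

-- The tangent line of `exp (-x)` at `x = m`, evaluated at `x = θ ∑ₖ w k`.
lemma ofReal_exp_neg_mul_one_add_le {ι : Type*} [Fintype ι] {w : ι → ℝ} (hw : ∀ k, 0 ≤ w k) {θ : ℝ}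
    (hθ : 0 ≤ θ) (m : ℝ) :
    ENNReal.ofReal (Real.exp (-m) * (1 + m)) ≤ ∏ k, ENNReal.ofReal (Real.exp (-(θ * w k)))
      + ENNReal.ofReal (Real.exp (-m) * θ) * ∑ k, ENNReal.ofReal (w k) := by
  have hsum : 0 ≤ ∑ k, w k := Finset.sum_nonneg fun k _ => hw k
  rw [← ENNReal.ofReal_sum_of_nonneg (fun k _ => hw k), ← ENNReal.ofReal_mul (by positivity),
    ← ENNReal.ofReal_prod_of_nonneg (fun k _ => (Real.exp_pos _).le), ← Real.exp_sum,
    ← ENNReal.ofReal_add (Real.exp_pos _).le (by positivity), Finset.sum_neg_distrib,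
    ← Finset.mul_sum]
  refine ENNReal.ofReal_le_ofReal ?_
  have hfactor : Real.exp (-(θ * ∑ k, w k))
      = Real.exp (-m) * Real.exp (m - θ * ∑ k, w k) := by
    rw [← Real.exp_add]
    ring_nf
  have htangent := mul_le_mul_of_nonneg_left (Real.add_one_le_exp (m - θ * ∑ k, w k))
    (Real.exp_pos (-m)).le
  rw [hfactor]
  linarith

/-- The product `∏_{k < n} exp (-θ w(S²_{v + k s}))` along the skeleton of the walk with step `s`
started at time `v`. Averaged over `v ∈ (0, s]`, it bounds from above the probability that the clock
at time `n s` is small. -/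
noncomputable def skeletonLaplace {d : ℕ} {Ω : Type*} (S : ℝ → Ω → Fin (d + 1) → ℤ)
    (w : (Fin d → ℤ) → ℝ) (θ s : ℝ) (n : ℕ) (v : ℝ) (ω : Ω) : ℝ≥0∞ :=
  ∏ k : Fin n, ENNReal.ofReal (Real.exp (-(θ * w (Fin.tail (S (v + k * s) ω)))))

namespace IsCTSRW

variable {Ω : Type*} [MeasurableSpace Ω] {d : ℕ} {P : (Fin (d + 1) → ℤ) → Measure Ω}
  {S : ℝ → Ω → Fin (d + 1) → ℤ} {w : (Fin d → ℤ) → ℝ} {θ : ℝ}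

lemma measure_tail_mem_farSet_le [NeZero d] (hS : IsCTSRW (d + 1) P S) {t u : ℝ} (L : ℝ)
    (ht : 1 ≤ t) (hu : 0 ≤ u) (hut : u ≤ t) :
    P 0 {ω | Fin.tail (S u ω) ∈ farSet d L}
      ≤ ENNReal.ofReal (2 * d * Real.exp 2 * Real.exp (-(L / √t))) := by
  have hfar : MeasurableSet (farSet d L) := .of_discrete
  calc P 0 {ω | Fin.tail (S u ω) ∈ farSet d L}
      = ∫⁻ ω, (farSet d L).indicator 1 (Fin.tail (S u ω)) ∂P 0 :=
        (lintegral_indicator_one (hS.measurable_tail u hfar)).symm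
    _ = ∑' y, (farSet d L).indicator (latticeMass u) y := by
        rw [lintegral_comp_eq_tsum (hS.measurable_tail u)]
        refine tsum_congr fun y => ?_
        rw [hS.measure_tail_eq hu]
        by_cases hy : y ∈ farSet d L <;> simp [hy]
    _ ≤ _ := tsum_indicator_farSet_latticeMass_le L ht hu hut

lemma measurable_uncurry_skeletonLaplace (hS : IsCTSRW (d + 1) P S) (w : (Fin d → ℤ) → ℝ)
    (θ s : ℝ) (n : ℕ) : Measurable (Function.uncurry (skeletonLaplace S w θ s n)) := by
  simp only [Function.uncurry_def, skeletonLaplace]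
  exact Finset.measurable_fun_prod _ fun k _ =>
    (hS.measurable_uncurry_comp_tail fun y => ENNReal.ofReal (Real.exp (-(θ * w y)))).comp
      ((measurable_fst.add_const (k * s)).prodMk measurable_snd)

lemma sceneryClock_natCast_mul (hS : IsCTSRW (d + 1) P S) (w : (Fin d → ℤ) → ℝ) {s : ℝ}
    (hs : 0 ≤ s) (n : ℕ) (ω : Ω) :
    sceneryClock S w (n * s) ω
      = ∫⁻ v in Ioc 0 s, ∑ k : Fin n, ENNReal.ofReal (w (Fin.tail (S (v + k * s) ω))) := by
  rw [sceneryClock, setLIntegral_Ioc_natCast_mul _ hs, lintegral_finsetSum]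
  exact fun k _ => (hS.measurable_uncurry_comp_tail fun y => ENNReal.ofReal (w y)).comp
    ((measurable_id.add_const (k * s)).prodMk (measurable_const (a := ω)))

lemma ofReal_le_setLIntegral_skeletonLaplace (hS : IsCTSRW (d + 1) P S) (hw : ∀ y, 0 ≤ w y)
    (hθ : 0 ≤ θ) {a s : ℝ} (ha : 0 ≤ a) (hs : 0 ≤ s) {n : ℕ} {ω : Ω}
    (hω : sceneryClock S w (n * s) ω ≤ ENNReal.ofReal (a * (n * s))) :
    ENNReal.ofReal (Real.exp (-(θ * a * n)) * s)
      ≤ ∫⁻ v in Ioc 0 s, skeletonLaplace S w θ s n v ω := by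
  set m : ℝ := θ * a * n with hm
  have : 0 ≤ m := by positivity
  have hpath : Measurable fun v => skeletonLaplace S w θ s n v ω :=
    (hS.measurable_uncurry_skeletonLaplace w θ s n).of_uncurry_right
  refine ENNReal.le_of_add_le_add_right
    (ENNReal.ofReal_ne_top (r := Real.exp (-m) * (m * s))) ?_
  calc ENNReal.ofReal (Real.exp (-m) * s) + ENNReal.ofReal (Real.exp (-m) * (m * s))
      = ∫⁻ _ in Ioc 0 s, ENNReal.ofReal (Real.exp (-m) * (1 + m)) := by
        rw [← ENNReal.ofReal_add (by positivity) (by positivity), setLIntegral_const,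
          Real.volume_Ioc, sub_zero, ← ENNReal.ofReal_mul (by positivity)]
        ring_nf
    _ ≤ ∫⁻ v in Ioc 0 s, (skeletonLaplace S w θ s n v ω + ENNReal.ofReal (Real.exp (-m) * θ) *
          ∑ k : Fin n, ENNReal.ofReal (w (Fin.tail (S (v + k * s) ω)))) :=
        lintegral_mono fun v => ofReal_exp_neg_mul_one_add_le (fun _ => hw _) hθ m
    _ = (∫⁻ v in Ioc 0 s, skeletonLaplace S w θ s n v ω)
          + ENNReal.ofReal (Real.exp (-m) * θ) * sceneryClock S w (n * s) ω := by
        rw [lintegral_add_left hpath, lintegral_const_mul' _ _ ENNReal.ofReal_ne_top,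
          hS.sceneryClock_natCast_mul w hs]
    _ ≤ (∫⁻ v in Ioc 0 s, skeletonLaplace S w θ s n v ω)
          + ENNReal.ofReal (Real.exp (-m) * θ) * ENNReal.ofReal (a * (n * s)) := by gcongr
    _ = _ := by
        rw [← ENNReal.ofReal_mul (by positivity), hm]
        ring_nf

lemma measure_sceneryClock_le_le_of_lintegral_le (hS : IsCTSRW (d + 1) P S) (hw : ∀ y, 0 ≤ w y)
    (hθ : 0 ≤ θ) {a s : ℝ} (ha : 0 ≤ a) (hs : 0 < s) {n : ℕ} {M : ℝ≥0∞}
    (hM : ∀ v ∈ Ioc 0 s, ∫⁻ ω, skeletonLaplace S w θ s n v ω ∂P 0 ≤ M) :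
    P 0 {ω | sceneryClock S w (n * s) ω ≤ ENNReal.ofReal (a * (n * s))}
      ≤ ENNReal.ofReal (Real.exp (θ * a * n)) * M := by
  have := hS.prob 0
  set m : ℝ := θ * a * n
  have hmeas := hS.measurable_uncurry_skeletonLaplace w θ s n
  have hthr : 0 < Real.exp (-m) * s := by positivity
  have hmean : ∫⁻ ω, (∫⁻ v in Ioc 0 s, skeletonLaplace S w θ s n v ω) ∂P 0
      ≤ ENNReal.ofReal s * M := by
    rw [lintegral_lintegral_swap (f := fun ω v => skeletonLaplace S w θ s n v ω)
      (hmeas.comp measurable_swap).aemeasurable]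
    refine (setLIntegral_mono' measurableSet_Ioc hM).trans_eq ?_
    rw [setLIntegral_const, Real.volume_Ioc, sub_zero, mul_comm]
  calc P 0 {ω | sceneryClock S w (n * s) ω ≤ ENNReal.ofReal (a * (n * s))}
      ≤ P 0 {ω | ENNReal.ofReal (Real.exp (-m) * s)
          ≤ ∫⁻ v in Ioc 0 s, skeletonLaplace S w θ s n v ω} :=
        measure_mono fun ω hω => hS.ofReal_le_setLIntegral_skeletonLaplace hw hθ ha hs.le hω
    _ ≤ (∫⁻ ω, (∫⁻ v in Ioc 0 s, skeletonLaplace S w θ s n v ω) ∂P 0)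
          / ENNReal.ofReal (Real.exp (-m) * s) :=
        meas_ge_le_lintegral_div hmeas.lintegral_prod_left'.aemeasurable
          (ENNReal.ofReal_pos.2 hthr).ne' ENNReal.ofReal_ne_top
    _ ≤ (ENNReal.ofReal s * M) / ENNReal.ofReal (Real.exp (-m) * s) := by gcongr
    _ = ENNReal.ofReal (Real.exp m) * M := by
        rw [ENNReal.div_eq_inv_mul, ← ENNReal.ofReal_inv_of_pos hthr, ← mul_assoc,
          ← ENNReal.ofReal_mul (by positivity), Real.exp_neg]
        field_simp

lemma lintegral_skeletonLaplace_le [NeZero d] (hS : IsCTSRW (d + 1) P S) (hw : ∀ y, 0 ≤ w y)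
    (hθ : 0 ≤ θ) {s t v : ℝ} {L N : ℕ} {ρ : ℝ≥0∞} (ht : 1 ≤ t) (hst : (N + 1) * s ≤ t)
    (hv : v ∈ Ioc 0 s)
    (hρ : ∀ x ∈ latticeBox d L,
      ∑' y, latticeMass s (y - x) * ENNReal.ofReal (Real.exp (-(θ * w y))) ≤ ρ) :
    ∫⁻ ω, skeletonLaplace S w θ s (N + 1) v ω ∂P 0 ≤
      ρ ^ N + (N + 1) * ENNReal.ofReal (2 * d * Real.exp 2 * Real.exp (-(L / √t))) := by
  have hs : 0 < s := hv.1.trans_le hv.2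
  let f : (Fin d → ℤ) → ℝ≥0∞ := fun y => ENNReal.ofReal (Real.exp (-(θ * w y)))
  have hf (y : Fin d → ℤ) : f y ≤ 1 := ENNReal.ofReal_le_one.2
    (Real.exp_le_one_iff.2 (neg_nonpos.2 (mul_nonneg hθ (hw y))))
  let B : Set (Fin d → ℤ) := latticeBox d L
  have hle (y : Fin d → ℤ) : B.indicator f y ≤ f y := indicator_le_self _ _ _
  have hmeas (g : (Fin d → ℤ) → ℝ≥0∞) (k : Fin (N + 1)) :
      Measurable fun ω => g (Fin.tail (S (v + k * s) ω)) :=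
    (measurable_of_countable g).comp (hS.measurable_tail _)
  have hBc : Bᶜ = farSet d L := ext fun y => by simp [B, ← notMem_latticeBox]
  have hinside : ∫⁻ ω, ∏ k : Fin (N + 1), B.indicator f (Fin.tail (S (v + k * s) ω)) ∂P 0
      ≤ ρ ^ N := by
    refine hS.lintegral_prod_comp_tail_le hv.1.le hs.le N (fun x => (hle x).trans (hf x))
      fun x hx => le_trans (ENNReal.tsum_le_tsum fun y => ?_) (hρ x ?_)
    · exact mul_le_mul_right (hle y) _
    · exact_mod_cast mem_of_indicator_ne_zero hx
  have houtside (k : Fin (N + 1)) :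
      ∫⁻ ω, Bᶜ.indicator 1 (Fin.tail (S (v + k * s) ω)) ∂P 0
        ≤ ENNReal.ofReal (2 * d * Real.exp 2 * Real.exp (-(L / √t))) := by
    have hk : (k : ℝ) ≤ N := by exact_mod_cast Nat.lt_succ_iff.1 k.2
    have htime : v + k * s ≤ t := by nlinarith [hv.2]
    have hv0 : 0 ≤ v := hv.1.le
    have hfar : MeasurableSet (farSet d L) := .of_discrete
    rw [hBc]
    exact (lintegral_indicator_one (hS.measurable_tail (v + k * s) hfar)).trans_le
      (hS.measure_tail_mem_farSet_le L ht (by positivity) htime)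
  calc ∫⁻ ω, skeletonLaplace S w θ s (N + 1) v ω ∂P 0
      ≤ ∫⁻ ω, (∏ k : Fin (N + 1), B.indicator f (Fin.tail (S (v + k * s) ω)) +
          ∑ k : Fin (N + 1), Bᶜ.indicator 1 (Fin.tail (S (v + k * s) ω))) ∂P 0 :=
        lintegral_mono fun ω => prod_le_prod_indicator_add_sum_indicator_compl B hf _
    _ = ∫⁻ ω, ∏ k : Fin (N + 1), B.indicator f (Fin.tail (S (v + k * s) ω)) ∂P 0 +
          ∑ k : Fin (N + 1), ∫⁻ ω, Bᶜ.indicator 1 (Fin.tail (S (v + k * s) ω)) ∂P 0 := by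
        rw [lintegral_add_left (Finset.measurable_fun_prod _ fun k _ => hmeas _ k),
          lintegral_finsetSum _ fun k _ => hmeas _ k]
    _ ≤ _ := add_le_add hinside ((Finset.sum_le_sum fun k _ => houtside k).trans_eq (by simp))

lemma measure_sceneryClock_cube_le_le [NeZero d] (hS : IsCTSRW (d + 1) P S) (hw : ∀ y, 0 ≤ w y)
    (hθ : 0 ≤ θ) {a : ℝ} (ha : 0 ≤ a) {N : ℕ} {ρ : ℝ} (hρ0 : 0 ≤ ρ)
    (hρ : ∀ x ∈ latticeBox d (((N + 1) ^ 2) ^ 2), ∑' y, latticeMass ((N + 1) ^ 2 : ℕ) (y - x) *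
      ENNReal.ofReal (Real.exp (-(θ * w y))) ≤ ENNReal.ofReal ρ) :
    P 0 {ω | sceneryClock S w ((N + 1) ^ 3) ω ≤ ENNReal.ofReal (a * (N + 1) ^ 3)}
      ≤ ENNReal.ofReal (Real.exp (θ * a * (N + 1)) *
        (ρ ^ N + (N + 1) * (2 * d * Real.exp 2 * Real.exp (-((N + 1 : ℝ) ^ 2))))) := by
  have hN : (1 : ℝ) ≤ N + 1 := by simp
  have hroot : ((((N + 1) ^ 2) ^ 2 : ℕ) : ℝ) / √((N + 1 : ℝ) ^ 4) = (N + 1) ^ 2 := by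
    rw [show (N + 1 : ℝ) ^ 4 = ((N + 1) ^ 2) ^ 2 by ring, Real.sqrt_sq (by positivity)]
    push_cast
    field_simp
  have hbound := hS.measure_sceneryClock_le_le_of_lintegral_le hw hθ ha
    (s := ((N + 1) ^ 2 : ℕ)) (n := N + 1) (by positivity)
    fun v hv => hS.lintegral_skeletonLaplace_le hw hθ (t := (N + 1 : ℝ) ^ 4) (one_le_pow₀ hN)
      (by push_cast; rw [← pow_succ']; exact pow_le_pow_right₀ hN (by norm_num)) hv hρ
  rw [hroot] at hbound
  have hcube : ((N + 1 : ℕ) : ℝ) * ((N + 1) ^ 2 : ℕ) = (N + 1) ^ 3 := by push_cast; ring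
  have hcast : (N + 1 : ℝ≥0∞) = ENNReal.ofReal (N + 1) := by
    exact_mod_cast (ENNReal.ofReal_natCast (N + 1)).symm
  rwa [hcube, hcast, ← ENNReal.ofReal_pow hρ0, ← ENNReal.ofReal_mul (by positivity),
    ← ENNReal.ofReal_add (by positivity) (by positivity), ← ENNReal.ofReal_mul (by positivity),
    Nat.cast_add_one] at hbound

end IsCTSRW

lemma exists_exp_mul_integral_exp_neg_add_lt_one {Ω : Type*} [MeasurableSpace Ω] {μ : Measure Ω}
    [IsProbabilityMeasure μ] {X : Ω → ℝ} (hX : Integrable X μ) (h0 : ∀ ω, 0 ≤ X ω) {a : ℝ}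
    (ha : a < ∫ ω, X ω ∂μ) :
    ∃ θ > 0, ∃ ε > 0, Real.exp (θ * a) * (∫ ω, Real.exp (-(θ * X ω)) ∂μ + ε) < 1 := by
  set δ : ℝ := ((∫ ω, X ω ∂μ) - a) / 2 with hδ
  have hδ0 : 0 < δ := by linarith
  obtain ⟨θ, hθ, hφ⟩ := exists_integral_exp_neg_mul_le hX h0 hδ0
  set φ := ∫ ω, Real.exp (-(θ * X ω)) ∂μ
  have hlaplace : φ < Real.exp (-(θ * a)) := by
    nlinarith [Real.add_one_le_exp (-(θ * a)), mul_pos hθ hδ0]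
  refine ⟨θ, hθ, (Real.exp (-(θ * a)) - φ) / 2, by linarith, ?_⟩
  calc Real.exp (θ * a) * (φ + (Real.exp (-(θ * a)) - φ) / 2)
      < Real.exp (θ * a) * Real.exp (-(θ * a)) := by
        gcongr
        linarith
    _ = 1 := by rw [← Real.exp_add, add_neg_cancel, Real.exp_zero]

lemma tendsto_natCast_add_two_pow_mul_pow {r : ℝ} (hr0 : 0 < r) (hr1 : r < 1) (p : ℕ) :
    Tendsto (fun N : ℕ => ((N : ℝ) + 2) ^ p * r ^ N) atTop (𝓝 0) := by
  have hlim := ((tendsto_add_atTop_iff_nat 2).2 (tendsto_pow_const_mul_const_pow_of_abs_lt_one p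
    ((abs_of_pos hr0).trans_lt hr1))).div_const (r ^ 2)
  rw [zero_div] at hlim
  refine hlim.congr fun N => ?_
  push_cast
  rw [pow_add]
  field_simp

lemma tendsto_natCast_add_two_pow_mul_exp_neg_sq (b : ℝ) (p : ℕ) :
    Tendsto (fun N : ℕ => ((N : ℝ) + 2) ^ p *
      (Real.exp (b * (N + 1)) * ((N + 1) * Real.exp (-((N + 1 : ℝ) ^ 2))))) atTop (𝓝 0) := by
  refine squeeze_zero' (Eventually.of_forall fun N => by positivity) ?_
    (tendsto_natCast_add_two_pow_mul_pow (Real.exp_pos (-1)) (by simp) (p + 1))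
  filter_upwards [eventually_ge_atTop ⌈b⌉₊] with N hN
  have hbN : b ≤ N := (Nat.le_ceil _).trans (by exact_mod_cast hN)
  have hexp : Real.exp (b * (N + 1)) * Real.exp (-((N + 1 : ℝ) ^ 2)) ≤ Real.exp (-1) ^ N := by
    rw [← Real.exp_nat_mul, ← Real.exp_add, Real.exp_le_exp]
    nlinarith
  calc ((N : ℝ) + 2) ^ p * (Real.exp (b * (N + 1)) * ((N + 1) * Real.exp (-((N + 1 : ℝ) ^ 2))))
      = ((N : ℝ) + 2) ^ p * (N + 1) *
          (Real.exp (b * (N + 1)) * Real.exp (-((N + 1 : ℝ) ^ 2))) := by ring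
    _ ≤ ((N : ℝ) + 2) ^ p * (N + 2) * Real.exp (-1) ^ N := by gcongr; norm_num
    _ = ((N : ℝ) + 2) ^ (p + 1) * Real.exp (-1) ^ N := by ring

lemma eventually_exp_mul_pow_add_le {b ρ : ℝ} (hρ0 : 0 < ρ) (hρ : Real.exp b * ρ < 1) (C : ℝ)
    (p : ℕ) :
    ∀ᶠ N : ℕ in atTop, Real.exp (b * (N + 1)) *
      (ρ ^ N + (N + 1) * (C * Real.exp (-((N + 1 : ℝ) ^ 2)))) ≤ (((N : ℝ) + 2) ^ p)⁻¹ := by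
  have hlim := ((tendsto_natCast_add_two_pow_mul_pow (by positivity) hρ p).const_mul
    (Real.exp b)).add ((tendsto_natCast_add_two_pow_mul_exp_neg_sq b p).const_mul C)
  rw [mul_zero, mul_zero, add_zero] at hlim
  filter_upwards [hlim.eventually_le_const one_pos] with N hN
  rw [← one_div, le_div_iff₀ (by positivity)]
  refine le_trans (le_of_eq ?_) hN
  rw [mul_pow, ← Real.exp_nat_mul, mul_add_one b, Real.exp_add, mul_comm b]
  ring

lemma eventually_mul_add_two_cube_le {a b : ℝ} (hab : b < a) :
    ∀ᶠ N : ℕ in atTop, b * (N + 2 : ℝ) ^ 3 ≤ a * (N + 1 : ℝ) ^ 3 := by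
  have hlim : Tendsto (fun N : ℕ => b * (1 + 1 / ((N : ℝ) + 1)) ^ 3) atTop
      (𝓝 (b * (1 + 0) ^ 3)) :=
    ((tendsto_const_nhds.add tendsto_one_div_add_atTop_nhds_zero_nat).pow 3).const_mul b
  filter_upwards [hlim.eventually_lt_const (by simpa using hab)] with N hN
  calc b * (N + 2 : ℝ) ^ 3 = b * (1 + 1 / ((N : ℝ) + 1)) ^ 3 * (N + 1 : ℝ) ^ 3 := by
        field_simp
        ring
    _ ≤ a * (N + 1 : ℝ) ^ 3 := by gcongr

lemma eventually_exists_mem_Icc_cube {Q : ℕ → Prop} (hQ : ∀ᶠ N in atTop, Q N) :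
    ∀ᶠ t : ℝ in atTop, ∃ N : ℕ, Q N ∧ t ∈ Icc ((N + 1 : ℝ) ^ 3) ((N + 2 : ℝ) ^ 3) := by
  have hroot : Tendsto (fun t : ℝ => ⌊t ^ (1 / 3 : ℝ)⌋₊) atTop atTop :=
    tendsto_nat_floor_atTop.comp (tendsto_rpow_atTop (by norm_num))
  filter_upwards [((tendsto_sub_atTop_nat 1).comp hroot).eventually hQ,
    hroot.eventually_ge_atTop 1, eventually_gt_atTop 0] with t hQt hfloor ht
  set r : ℝ := t ^ (1 / 3 : ℝ) with hr
  have hr3 : r ^ 3 = t := by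
    rw [hr, ← Real.rpow_natCast, ← Real.rpow_mul ht.le]
    norm_num
  have hcast : ((⌊r⌋₊ - 1 : ℕ) : ℝ) = ⌊r⌋₊ - 1 := by
    push_cast [Nat.cast_sub hfloor]
    rfl
  refine ⟨⌊r⌋₊ - 1, hQt, ?_⟩
  rw [hcast, ← hr3]
  have : (1 : ℝ) ≤ ⌊r⌋₊ := by exact_mod_cast hfloor
  exact ⟨pow_le_pow_left₀ (by linarith) (by linarith [Nat.floor_le (show 0 ≤ r by positivity)]) 3,
    pow_le_pow_left₀ (by positivity) (by linarith [Nat.lt_floor_add_one r]) 3⟩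

lemma sceneryClock_mono {d : ℕ} {Ω : Type*} (S : ℝ → Ω → Fin (d + 1) → ℤ) (w : (Fin d → ℤ) → ℝ)
    (ω : Ω) : Monotone fun t => sceneryClock S w t ω :=
  fun _ _ h => lintegral_mono_set (Ioc_subset_Ioc_right h)

namespace IsScenery

variable {Ωz Ω : Type*} [MeasurableSpace Ωz] [MeasurableSpace Ω] {d : ℕ} [NeZero d] {α : ℝ}
  {μ : Measure Ωz} {z : (Fin d → ℤ) → Ωz → ℝ} {P : (Fin (d + 1) → ℤ) → Measure Ω}
  {S : ℝ → Ω → Fin (d + 1) → ℤ}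

lemma ae_eventually_measure_sceneryClock_cube_le (hz : IsScenery d α μ z) (hα : 1 < α)
    (hS : IsCTSRW (d + 1) P S) {a : ℝ} (ha0 : 0 ≤ a) (ha : a < ∫ ζ, z 0 ζ ∂μ) (p : ℕ) :
    ∀ᵐ ζ ∂μ, ∀ᶠ N : ℕ in atTop,
      P 0 {ω | sceneryClock S (fun y => z y ζ) ((N + 1) ^ 3) ω ≤ ENNReal.ofReal (a * (N + 1) ^ 3)}
        ≤ ENNReal.ofReal (((N : ℝ) + 2) ^ p)⁻¹ := by
  have := hz.prob
  obtain ⟨θ, hθ, ε, hε, hρ⟩ :=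
    exists_exp_mul_integral_exp_neg_add_lt_one (hz.integrable hα) (hz.nonneg 0) ha
  have hρ0 : 0 < ∫ ζ, Real.exp (-(θ * z 0 ζ)) ∂μ + ε :=
    add_pos_of_nonneg_of_pos (integral_nonneg fun _ => (Real.exp_pos _).le) hε
  have hsq : Tendsto (fun N : ℕ => (N + 1) ^ 2) atTop atTop :=
    tendsto_atTop_mono (fun N => show N ≤ (N + 1) ^ 2 by nlinarith) tendsto_id
  filter_upwards [hz.ae_eventually_tsum_latticeMass_mul_comp_le
    (f := fun r => Real.exp (-(θ * r))) (by fun_prop) (fun _ _ => (Real.exp_pos _).le)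
    (fun r hr => Real.exp_le_one_iff.2 (neg_nonpos.2 (mul_nonneg hθ.le hr))) hε] with ζ hζ
  filter_upwards [hsq.eventually hζ,
    eventually_exp_mul_pow_add_le hρ0 hρ (2 * d * Real.exp 2) p] with N hmean hdecay
  exact (hS.measure_sceneryClock_cube_le_le (fun y => hz.nonneg y ζ) hθ.le ha0 hρ0.le hmean).trans
    (ENNReal.ofReal_le_ofReal hdecay)

theorem ae_eventually_measure_sceneryClock_le (hz : IsScenery d α μ z) (hα : 1 < α)
    (hS : IsCTSRW (d + 1) P S) {b : ℝ} (hb0 : 0 ≤ b) (hb : b < ∫ ζ, z 0 ζ ∂μ) (K : ℕ) :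
    ∀ᵐ ζ ∂μ, ∀ᶠ t : ℝ in atTop,
      P 0 {ω | sceneryClock S (fun y => z y ζ) t ω ≤ ENNReal.ofReal (b * t)}
        ≤ ENNReal.ofReal (t ^ K)⁻¹ := by
  obtain ⟨a, hba, ha⟩ := exists_between hb
  filter_upwards [hz.ae_eventually_measure_sceneryClock_cube_le hα hS (hb0.trans hba.le) ha (3 * K)]
    with ζ hζ
  filter_upwards [eventually_exists_mem_Icc_cube (hζ.and (eventually_mul_add_two_cube_le hba)),
    eventually_gt_atTop 0] with t ⟨N, ⟨hcube, hratio⟩, hlower, hupper⟩ ht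
  refine (measure_mono fun ω hω => ?_).trans (hcube.trans (ENNReal.ofReal_le_ofReal ?_))
  · calc sceneryClock S (fun y => z y ζ) ((N + 1) ^ 3) ω
        ≤ sceneryClock S (fun y => z y ζ) t ω := sceneryClock_mono S _ ω hlower
      _ ≤ ENNReal.ofReal (b * t) := hω
      _ ≤ ENNReal.ofReal (a * (N + 1) ^ 3) :=
        ENNReal.ofReal_le_ofReal ((mul_le_mul_of_nonneg_left hupper hb0).trans hratio)
  · rw [pow_mul]
    gcongr

end IsScenery

/-! ### Comparison with the averaged walk -/

lemma abs_lineKernel_sub_le_of_half_le {m s : ℝ} (hm : 0 < m) (hs : m / 2 ≤ s) (k : ℤ) :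
    |lineKernel s k - lineKernel m k| ≤ 12 / (m * Real.sqrt m) * |s - m| := by
  have hlip {r r' : ℝ} (hr : m / 2 ≤ r) (h : r ≤ r') :
      |lineKernel r' k - lineKernel r k| ≤ 12 / (m * Real.sqrt m) * (r' - r) := by
    have hr0 : 0 < r := by linarith
    have hsqrt : 2 / 3 * Real.sqrt m ≤ Real.sqrt r := by
      refine Real.le_sqrt_of_sq_le ?_
      rw [mul_pow, Real.sq_sqrt hm.le]
      linarith
    have hden : m * Real.sqrt m / 3 ≤ r * Real.sqrt r :=
      calc m * Real.sqrt m / 3 = m / 2 * (2 / 3 * Real.sqrt m) := by ring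
        _ ≤ r * Real.sqrt r := by gcongr
    calc |lineKernel r' k - lineKernel r k| ≤ 4 * (r' - r) / (r * Real.sqrt r) :=
          abs_lineKernel_sub_le hr0 h k
      _ ≤ 4 * (r' - r) / (m * Real.sqrt m / 3) := by
          have := sub_nonneg.2 h
          gcongr
      _ = 12 / (m * Real.sqrt m) * (r' - r) := by field_simp; ring
  rcases le_total s m with h | h
  · rw [abs_sub_comm, abs_sub_comm s, abs_of_nonneg (sub_nonneg.2 h)]
    exact hlip hs h
  · rw [abs_of_nonneg (sub_nonneg.2 h)]
    exact hlip (by linarith) h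

-- Off the event `s ≤ m - η`, `|s - m| = (s - m) + 2 (m - s)⁺ ≤ s - m + 2 η`.
lemma abs_lineKernel_sub_le_add_indicator {m η s : ℝ} (hm : 0 < m) (hη0 : 0 ≤ η)
    (hη : η ≤ m / 2) (hs : 0 ≤ s) (k : ℤ) :
    |lineKernel s k - lineKernel m k| ≤ 12 / (m * Real.sqrt m) *
        (s + (2 * η - m) + 2 * m * (Iic (m - η)).indicator 1 s) + (Iic (m - η)).indicator 1 s := by
  have hL : 0 ≤ 12 / (m * Real.sqrt m) := by positivity
  by_cases hlow : s ≤ m - η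
  · rw [indicator_of_mem (mem_Iic.2 hlow), Pi.one_apply]
    have hdiff : |lineKernel s k - lineKernel m k| ≤ 1 :=
      abs_sub_le_of_nonneg_of_le (lineKernel_nonneg hs k) (lineKernel_le_one hs k)
        (lineKernel_nonneg hm.le k) (lineKernel_le_one hm.le k)
    have hnonneg : 0 ≤ s + (2 * η - m) + 2 * m * 1 := by linarith
    linarith [mul_nonneg hL hnonneg]
  · rw [indicator_of_notMem (mt mem_Iic.1 hlow), mul_zero, add_zero, add_zero]
    refine (abs_lineKernel_sub_le_of_half_le hm (by linarith) k).trans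
      (mul_le_mul_of_nonneg_left (abs_le.2 ⟨?_, ?_⟩) hL) <;> linarith

theorem abs_integral_lineKernel_comp_sub_le {Ω : Type*} [MeasurableSpace Ω] {ν : Measure Ω}
    [IsFiniteMeasure ν] {T : Ω → ℝ} (hT : Measurable T) (hTi : Integrable T ν)
    (hT0 : ∀ ω, 0 ≤ T ω) {m η π : ℝ} (hm : 0 < m) (hη0 : 0 ≤ η) (hη : η ≤ m / 2)
    (hmean : ∫ ω, T ω ∂ν ≤ (m + η) * ν.real univ) (hlow : ν.real {ω | T ω ≤ m - η} ≤ π) (k : ℤ) :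
    |∫ ω, lineKernel (T ω) k ∂ν - lineKernel m k * ν.real univ| ≤
      (36 * (η / m) * ν.real univ + (24 + Real.sqrt m) * π) / Real.sqrt m := by
  have hlowm : MeasurableSet {ω | T ω ≤ m - η} := hT measurableSet_Iic
  have hqi : Integrable (fun ω => lineKernel (T ω) k) ν :=
    .of_bound ((measurable_lineKernel k).comp hT).aestronglyMeasurable 1 (.of_forall fun ω => by
      rw [Real.norm_eq_abs, abs_of_nonneg (lineKernel_nonneg (hT0 ω) k)]
      exact lineKernel_le_one (hT0 ω) k)
  have hindi : Integrable (fun ω => (Iic (m - η)).indicator (1 : ℝ → ℝ) (T ω)) ν :=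
    (integrable_const 1).indicator hlowm
  have hind : ∫ ω, (Iic (m - η)).indicator (1 : ℝ → ℝ) (T ω) ∂ν ≤ π :=
    (integral_indicator_one hlowm).trans_le hlow
  have hshifti : Integrable (fun ω => T ω + (2 * η - m)) ν := hTi.add (integrable_const _)
  have hsumi : Integrable (fun ω =>
      T ω + (2 * η - m) + 2 * m * (Iic (m - η)).indicator (1 : ℝ → ℝ) (T ω)) ν :=
    hshifti.add (hindi.const_mul _)
  calc |∫ ω, lineKernel (T ω) k ∂ν - lineKernel m k * ν.real univ|
      = ‖∫ ω, (lineKernel (T ω) k - lineKernel m k) ∂ν‖ := by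
        rw [integral_sub hqi (integrable_const _), integral_const, smul_eq_mul, mul_comm,
          Real.norm_eq_abs]
    _ ≤ ∫ ω, (12 / (m * Real.sqrt m) *
          (T ω + (2 * η - m) + 2 * m * (Iic (m - η)).indicator 1 (T ω))
            + (Iic (m - η)).indicator 1 (T ω)) ∂ν :=
        norm_integral_le_of_norm_le ((hsumi.const_mul _).add hindi)
          (.of_forall fun ω => abs_lineKernel_sub_le_add_indicator hm hη0 hη (hT0 ω) k)
    _ = 12 / (m * Real.sqrt m) * ((∫ ω, T ω ∂ν + (2 * η - m) * ν.real univ)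
          + 2 * m * ∫ ω, (Iic (m - η)).indicator 1 (T ω) ∂ν)
            + ∫ ω, (Iic (m - η)).indicator 1 (T ω) ∂ν := by
        rw [integral_add (hsumi.const_mul _) hindi, integral_const_mul,
          integral_add hshifti (hindi.const_mul _), integral_const_mul,
          integral_add hTi (integrable_const _), integral_const, smul_eq_mul,
          mul_comm (ν.real univ)]
    _ ≤ 12 / (m * Real.sqrt m) * (((m + η) * ν.real univ + (2 * η - m) * ν.real univ)
          + 2 * m * π) + π := by gcongr
    _ = (36 * (η / m) * ν.real univ + (24 + Real.sqrt m) * π) / Real.sqrt m := by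
        field_simp
        ring

lemma abs_coord_le_euclNormProd {d : ℕ} (x : ℤ × (Fin d → ℤ)) (i : Fin d) :
    |(x.2 i : ℝ)| ≤ euclNormProd d x := by
  refine Real.abs_le_sqrt ?_
  have := Finset.single_le_sum (f := fun i => (x.2 i : ℝ) ^ 2) (fun j _ => sq_nonneg _)
    (Finset.mem_univ i)
  linarith [sq_nonneg (x.1 : ℝ)]

lemma abs_fst_le_euclNormProd {d : ℕ} (x : ℤ × (Fin d → ℤ)) : |(x.1 : ℝ)| ≤ euclNormProd d x :=
  Real.abs_le_sqrt (le_add_of_nonneg_right (by positivity))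

lemma eventually_add_sqrt_mul_inv_pow_succ_le (a c : ℝ) (d : ℕ) {ε : ℝ} (hε : 0 < ε) :
    ∀ᶠ t : ℝ in atTop, (a + Real.sqrt (c * t)) * (t ^ (d + 1))⁻¹ ≤ ε * (1 / Real.sqrt t) ^ d := by
  have hlim : Tendsto (fun t : ℝ => a / t + Real.sqrt c / Real.sqrt t) atTop (𝓝 (0 + 0)) :=
    (tendsto_const_nhds.div_atTop tendsto_id).add
      (tendsto_const_nhds.div_atTop Real.tendsto_sqrt_atTop)
  filter_upwards [hlim.eventually_le_const (by simpa using hε), eventually_ge_atTop 1] with t ht ht1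
  have ht0 : 0 < t := one_pos.trans_le ht1
  have hpow : (t ^ d)⁻¹ ≤ (1 / Real.sqrt t) ^ d := by
    rw [one_div, inv_pow]
    gcongr
    exact Real.sqrt_le_iff.2 ⟨ht0.le, by nlinarith⟩
  calc (a + Real.sqrt (c * t)) * (t ^ (d + 1))⁻¹
      = (a / t + Real.sqrt c / Real.sqrt t) * (t ^ d)⁻¹ := by
        rw [Real.sqrt_mul' c ht0.le, pow_succ]
        field_simp
        linear_combination Real.sqrt c * Real.mul_self_sqrt ht0.le
    _ ≤ ε * (1 / Real.sqrt t) ^ d := by gcongr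

namespace IsCTSRW

variable {Ω : Type*} [MeasurableSpace Ω] {d : ℕ} [NeZero d] {P : (Fin (d + 1) → ℤ) → Measure Ω}
  {S : ℝ → Ω → Fin (d + 1) → ℤ}

lemma toReal_measure_head_tail_eq (hS : IsCTSRW (d + 1) P S) {s t : ℝ} (hs : 0 ≤ s) (ht : 0 ≤ t)
    (x : ℤ × (Fin d → ℤ)) :
    (P 0 {ω | (S s ω 0, Fin.tail (S t ω)) = x}).toReal
      = lineKernel s x.1 * latticeKernel t x.2 := by
  simp_rw [Prod.ext_iff]
  rw [hS.measure_head_eq_and_tail_eq hs ht, ENNReal.toReal_mul, lineMass, latticeMass,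
    ENNReal.toReal_ofReal (lineKernel_nonneg hs _),
    ENNReal.toReal_ofReal (latticeKernel_nonneg ht _)]

lemma toReal_measure_layeredWalk_eq (hS : IsCTSRW (d + 1) P S) {Ωz : Type*}
    {z : (Fin d → ℤ) → Ωz → ℝ} {ζ : Ωz} (hz : ∀ y, 0 ≤ z y ζ) {t : ℝ} (ht : 0 ≤ t)
    (x : ℤ × (Fin d → ℤ)) :
    (P 0 {ω | layeredWalk d z S t ζ ω = x}).toReal = ∫ ω in {ω | Fin.tail (S t ω) = x.2},
      lineKernel (sceneryClock S (fun y => z y ζ) t ω).toReal x.1 ∂P 0 := by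
  rw [hS.measure_layeredWalk_eq hz ht, integral_eq_lintegral_of_nonneg_ae
    (.of_forall fun ω => lineKernel_nonneg ENNReal.toReal_nonneg _)
    ((measurable_lineKernel _).comp
      (hS.measurable_sceneryClock _ t).ennreal_toReal).aestronglyMeasurable]
  rfl

theorem abs_toReal_measure_layeredWalk_sub_le (hS : IsCTSRW (d + 1) P S) {Ωz : Type*}
    {z : (Fin d → ℤ) → Ωz → ℝ} {ζ : Ωz} (hz : ∀ y, 0 ≤ z y ζ) {t c δ π : ℝ} (ht : 0 < t)
    (hfin : ∑' y, occupation t y * ENNReal.ofReal (z y ζ) ≠ ⊤) (hc : 0 < c) (hδ0 : 0 ≤ δ)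
    (hδ : δ ≤ c / 2) (hπ : 0 ≤ π) (x : ℤ × (Fin d → ℤ))
    (hmean : ∑' y, bridgeOccupation t x.2 y * ENNReal.ofReal (z y ζ)
      ≤ ENNReal.ofReal ((c + δ) * (t * latticeKernel t x.2)))
    (hlow : P 0 {ω | sceneryClock S (fun y => z y ζ) t ω ≤ ENNReal.ofReal ((c - δ) * t)}
      ≤ ENNReal.ofReal π) :
    |(P 0 {ω | layeredWalk d z S t ζ ω = x}).toReal - lineKernel (c * t) x.1 * latticeKernel t x.2|
      ≤ (36 * (δ / c) * latticeKernel t x.2 + (24 + Real.sqrt (c * t)) * π)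
        / Real.sqrt (c * t) := by
  have := hS.prob 0
  set A := sceneryClock S (fun y => z y ζ) t
  have hA : Measurable A := hS.measurable_sceneryClock _ t
  have hAfin : ∀ᵐ ω ∂P 0, A ω < ⊤ := hS.ae_sceneryClock_lt_top hfin
  set ν := (P 0).restrict {ω | Fin.tail (S t ω) = x.2} with hν
  have hmass : ν.real univ = latticeKernel t x.2 := by
    rw [Measure.real, Measure.restrict_apply_univ, hS.measure_tail_eq ht.le, latticeMass,
      ENNReal.toReal_ofReal (latticeKernel_nonneg ht.le _)]
  rw [← hS.setLIntegral_sceneryClock_tail_eq] at hmean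
  have hint : ∫ ω, (A ω).toReal ∂ν ≤ (c * t + δ * t) * ν.real univ := by
    rw [integral_toReal hA.aemeasurable (ae_restrict_of_ae hAfin), hmass, ← add_mul, mul_assoc]
    exact ENNReal.toReal_le_of_le_ofReal
      (mul_nonneg (by positivity) (mul_nonneg ht.le (latticeKernel_nonneg ht.le _))) hmean
  have hlow' : ν.real {ω | (A ω).toReal ≤ c * t - δ * t} ≤ π := by
    refine ENNReal.toReal_le_of_le_ofReal hπ ((Measure.restrict_apply_le _ _).trans
      ((measure_mono_ae ?_).trans hlow))
    filter_upwards [hAfin] with ω hω hle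
    rw [← sub_mul] at hle
    exact ENNReal.le_ofReal_iff_toReal_le hω.ne (mul_nonneg (by linarith) ht.le) |>.2 hle
  have hbound := abs_integral_lineKernel_comp_sub_le hA.ennreal_toReal
    (integrable_toReal_of_lintegral_ne_top hA.aemeasurable
      (ne_top_of_le_ne_top ENNReal.ofReal_ne_top hmean))
    (fun ω => ENNReal.toReal_nonneg) (mul_pos hc ht) (by positivity)
    (by nlinarith) hint hlow' x.1
  rwa [hmass, mul_div_mul_right _ _ ht.ne', ← hS.toReal_measure_layeredWalk_eq hz ht.le] at hbound

end IsCTSRW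

namespace IsScenery

variable {Ωz Ω : Type*} [MeasurableSpace Ωz] [MeasurableSpace Ω] {d : ℕ} [NeZero d] {α : ℝ}
  {μ : Measure Ωz} {z : (Fin d → ℤ) → Ωz → ℝ} {P : (Fin (d + 1) → ℤ) → Measure Ω}
  {S : ℝ → Ω → Fin (d + 1) → ℤ}

theorem ae_eventually_abs_layeredWalk_sub_le (hz : IsScenery d α μ z)
    (hα : max ((d : ℝ) / 2) 1 < α) (hS : IsCTSRW (d + 1) P S) {R ε : ℝ} (hR : 0 ≤ R)
    (hε : 0 < ε) :
    ∀ᵐ ζ ∂μ, ∀ᶠ t : ℝ in atTop, ∀ x : ℤ × (Fin d → ℤ),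
      (∀ i, |(x.2 i : ℝ)| ≤ R * Real.sqrt t) →
        |(P 0 {ω | layeredWalk d z S t ζ ω = x}).toReal
            - lineKernel ((∫ ζ', z 0 ζ' ∂μ) * t) x.1 * latticeKernel t x.2|
          ≤ ε * latticeKernel t x.2 / Real.sqrt ((∫ ζ', z 0 ζ' ∂μ) * t) := by
  have hα1 : 1 < α := (le_max_right _ _).trans_lt hα
  have hc : 0 < ∫ ζ, z 0 ζ ∂μ := hz.integral_pos hα1
  set c := ∫ ζ, z 0 ζ ∂μ
  obtain ⟨c₀, hc₀, hlattice⟩ := exists_eventually_mul_pow_le_latticeKernel d R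
  obtain ⟨δ, hδ0, hδ⟩ : ∃ δ > 0, δ ≤ min (c / 2) (ε / 72 * c) := ⟨_, by positivity, le_rfl⟩
  obtain ⟨hδc, hδε⟩ := le_min_iff.1 hδ
  filter_upwards [hz.ae_eventually_tsum_bridgeOccupation_mul_le hα hR hδ0,
    hz.ae_eventually_measure_sceneryClock_le hα1 hS (show 0 ≤ c - δ by linarith)
      (show c - δ < c by linarith) (d + 1),
    hz.ae_tsum_occupation_mul_ne_top hα1] with ζ hmean hlow hfin
  filter_upwards [hmean, hlow, hlattice,
    eventually_add_sqrt_mul_inv_pow_succ_le 24 c d (show 0 < ε / 2 * c₀ by positivity),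
    eventually_gt_atTop 0] with t hmean hlow hlattice hsmall ht x hx
  have hp := latticeKernel_nonneg ht.le x.2
  have hδ_term : 36 * (δ / c) * latticeKernel t x.2 ≤ ε / 2 * latticeKernel t x.2 := by
    gcongr
    linarith [(div_le_iff₀ hc).2 hδε]
  have hlow_term : (24 + Real.sqrt (c * t)) * (t ^ (d + 1))⁻¹ ≤ ε / 2 * latticeKernel t x.2 := by
    rw [mul_assoc] at hsmall
    exact hsmall.trans (mul_le_mul_of_nonneg_left (hlattice x.2 hx) (by positivity))
  refine (hS.abs_toReal_measure_layeredWalk_sub_le (fun y => hz.nonneg y ζ) ht (hfin t) hc hδ0.le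
    hδc (by positivity) x (hmean x.2 hx) hlow).trans ?_
  gcongr
  linarith

theorem ae_eventually_abs_layeredWalk_div_sub_one_le (hz : IsScenery d α μ z)
    (hα : max ((d : ℝ) / 2) 1 < α) (hS : IsCTSRW (d + 1) P S) {R ε : ℝ} (hR : 0 ≤ R)
    (hε : 0 < ε) :
    ∀ᵐ ζ ∂μ, ∀ᶠ t : ℝ in atTop, ∀ x : ℤ × (Fin d → ℤ), euclNormProd d x ≤ R * Real.sqrt t →
      |(P 0 {ω | layeredWalk d z S t ζ ω = x}).toReal
        / (P 0 {ω | (S ((∫ ζ', z 0 ζ' ∂μ) * t) ω 0, Fin.tail (S t ω)) = x}).toReal - 1| ≤ ε := by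
  have hc : 0 < ∫ ζ, z 0 ζ ∂μ := hz.integral_pos ((le_max_right _ _).trans_lt hα)
  set c := ∫ ζ, z 0 ζ ∂μ
  obtain ⟨c₁, hc₁, hline⟩ := exists_eventually_div_sqrt_le_lineKernel (R / Real.sqrt c)
  obtain ⟨c₂, hc₂, hlattice⟩ := exists_eventually_mul_pow_le_latticeKernel d R
  filter_upwards [hz.ae_eventually_abs_layeredWalk_sub_le hα hS hR (mul_pos hε hc₁)] with ζ hζ
  filter_upwards [hζ, (tendsto_id.const_mul_atTop hc).eventually hline, hlattice,
    eventually_gt_atTop 0] with t hζ hline hlattice ht x hx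
  have hct : 0 < c * t := mul_pos hc ht
  have hx₁ : |(x.1 : ℝ)| ≤ R / Real.sqrt c * Real.sqrt (c * t) := by
    rw [Real.sqrt_mul hc.le, ← mul_assoc, div_mul_cancel₀ _ (Real.sqrt_pos.2 hc).ne']
    exact (abs_fst_le_euclNormProd x).trans hx
  have hx₂ (i : Fin d) : |(x.2 i : ℝ)| ≤ R * Real.sqrt t :=
    (abs_coord_le_euclNormProd x i).trans hx
  have hq : c₁ / Real.sqrt (c * t) ≤ lineKernel (c * t) x.1 := hline x.1 hx₁
  have hp0 : 0 < latticeKernel t x.2 := lt_of_lt_of_le (by positivity) (hlattice x.2 hx₂)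
  have hq0 : 0 < lineKernel (c * t) x.1 := lt_of_lt_of_le (by positivity) hq
  have hD : 0 < lineKernel (c * t) x.1 * latticeKernel t x.2 := mul_pos hq0 hp0
  rw [hS.toReal_measure_head_tail_eq hct.le ht.le, div_sub_one hD.ne', abs_div, abs_of_pos hD,
    div_le_iff₀ hD]
  calc _ ≤ ε * c₁ * latticeKernel t x.2 / Real.sqrt (c * t) := hζ x hx₂
    _ = ε * (c₁ / Real.sqrt (c * t) * latticeKernel t x.2) := by ring
    _ ≤ ε * (lineKernel (c * t) x.1 * latticeKernel t x.2) := by gcongr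

end IsScenery

/-- Proposition (quenched local CLT, `α > max(d/2,1)`): for every `R > 0`, ℙ-a.s.,
`sup_{|x| ≤ R√t} |P₀^ω(X_t = x)/P̄₀(X_t = x) − 1| → 0` as `t → ∞`, where
`P̄₀(X_t = x) = P₀((S¹_{𝔼[z(0)]t}, S²_t) = x)` is the averaged-conductance kernel. -/
theorem stmt8 (d : ℕ) (hd : 1 ≤ d) (α : ℝ) (hα : max ((d : ℝ) / 2) 1 < α)
    {Ωz Ωw : Type*} [MeasurableSpace Ωz] [MeasurableSpace Ωw]
    (μ : Measure Ωz) (z : (Fin d → ℤ) → Ωz → ℝ) (hz : IsScenery d α μ z)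
    (P : (Fin (d + 1) → ℤ) → Measure Ωw) (S : ℝ → Ωw → (Fin (d + 1) → ℤ))
    (hS : IsCTSRW (d + 1) P S) :
    ∀ R > (0 : ℝ), ∀ᵐ ζ ∂ μ, ∀ ε > (0 : ℝ), ∀ᶠ t in (atTop : Filter ℝ),
      ∀ x : ℤ × (Fin d → ℤ), euclNormProd d x ≤ R * t ^ ((1 : ℝ) / 2) →
        |((P 0) {ω | layeredWalk d z S t ζ ω = x}).toReal
            / ((P 0) {ω | (S ((∫ ζ', z 0 ζ' ∂ μ) * t) ω 0, fun i => S t ω i.succ) = x}).toReal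
          - 1| ≤ ε := by
  intro R hR
  have : NeZero d := ⟨by omega⟩
  have hlim : ∀ᵐ ζ ∂ μ, ∀ n : ℕ, _ := ae_all_iff.2 fun n : ℕ =>
    hz.ae_eventually_abs_layeredWalk_div_sub_one_le hα hS hR.le (Nat.one_div_pos_of_nat (n := n))
  filter_upwards [hlim] with ζ hζ ε hε
  obtain ⟨n, hn⟩ := exists_nat_one_div_lt hε
  filter_upwards [hζ n] with t ht x hx
  exact (ht x (by rwa [Real.sqrt_eq_rpow])).trans hn.le
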